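/- arXiv:2405.05577 — 3 statements merged into one kernel-verified Lean document; each statement's English description precedes it below -/
import Mathlib

section
/- Let n ≥ 2 and 0 < α, s < 1. Suppose u ∈ 𝓛_{2s,α}(ℝⁿ×ℝ) is a distributional solution of ∂_t^α u + (-Δ)^s u = 0 in ℝⁿ×ℝ, i.e. ∫_ℝ ∫_{ℝⁿ} u(x,t)·[D_right^α φ(x,t) + (-Δ)^s φ(x,t)] dx dt = 0 for every real-valued Schwartz function φ on ℝⁿ×ℝ. Then the Fourier transform of u (as a tempered distribution) is supported at the origin; concretely, for every smooth compactly supported function ψ : ℝⁿ×ℝ → ℂ whose support does not contain the point (0,0), one has ∫_ℝ ∫_{ℝⁿ} u(x,t)·conj(𝓕⁻¹ψ(x,t)) dx dt = 0, where 𝓕⁻¹ψ(x,t) = (2π)^{−(n+1)/2} ∫_ℝ ∫_{ℝⁿ} e^{i(ξ·x + ρt)} ψ(ξ,ρ) dξ dρ and conj denotes complex conjugation. -/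
open MeasureTheory Set

/-- The normalization constant `C_α = 1/|Γ(-α)|` for the Marchaud fractional derivative. -/
noncomputable def Calpha (α : ℝ) : ℝ := 1 / |Real.Gamma (-α)|

/-- The normalization constant `C_{n,s} = 4^s Γ(n/2+s)/(π^{n/2}|Γ(-s)|)` for the
fractional Laplacian. -/
noncomputable def Cns (n : ℕ) (s : ℝ) : ℝ :=
  (4 : ℝ) ^ s * Real.Gamma ((n : ℝ) / 2 + s) / (Real.pi ^ ((n : ℝ) / 2) * |Real.Gamma (-s)|)

/-- The right Marchaud fractional derivative of order `α` in the time variable: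
`D_right^α φ(x,t) = C_α ∫_t^∞ (φ(x,t) - φ(x,τ))/(τ-t)^{1+α} dτ`. -/
noncomputable def marchaudRight {n : ℕ} (α : ℝ) (φ : EuclideanSpace ℝ (Fin n) × ℝ → ℝ)
    (x : EuclideanSpace ℝ (Fin n)) (t : ℝ) : ℝ :=
  Calpha α * ∫ τ in Ioi t, (φ (x, t) - φ (x, τ)) / (τ - t) ^ (1 + α)

/-- The fractional Laplacian `(-Δ)^s` acting in the space variable:
`(-Δ)^s φ(x,t) = (C_{n,s}/2) ∫_{ℝⁿ} (2φ(x,t) - φ(x+y,t) - φ(x-y,t))/|y|^{n+2s} dy`. -/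
noncomputable def fracLap {n : ℕ} (s : ℝ) (φ : EuclideanSpace ℝ (Fin n) × ℝ → ℝ)
    (x : EuclideanSpace ℝ (Fin n)) (t : ℝ) : ℝ :=
  Cns n s / 2 * ∫ y : EuclideanSpace ℝ (Fin n),
    (2 * φ (x, t) - φ (x + y, t) - φ (x - y, t)) / ‖y‖ ^ ((n : ℝ) + 2 * s)

open RealInnerProductSpace in
/-- The inverse Fourier transform
`𝓕⁻¹ψ(x,t) = (2π)^{-(n+1)/2} ∫_ℝ ∫_{ℝⁿ} e^{i(ξ·x + ρt)} ψ(ξ,ρ) dξ dρ`. -/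
noncomputable def fourierInv {n : ℕ} (ψ : EuclideanSpace ℝ (Fin n) × ℝ → ℂ)
    (x : EuclideanSpace ℝ (Fin n)) (t : ℝ) : ℂ :=
  (((2 * Real.pi) ^ (-(((n : ℝ) + 1) / 2)) : ℝ) : ℂ) *
    ∫ q : EuclideanSpace ℝ (Fin n) × ℝ,
      Complex.exp (Complex.I * ((⟪q.1, x⟫ : ℝ) + q.2 * t)) * ψ q

/-!
Both operators are instances of an integral of differences `f(z) - f(z ± y)` against a kernel
`‖y‖ ^ (-a)`, and the weight defining the class of `u` is the decay of that kernel. Fix a frequency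
`p₀ ≠ 0`. A function whose Fourier transform lives in the `δ`-ball around `p₀` is reproduced by
convolution with a fixed profile, modulated to `p₀` and dilated to scale `δ`; on such functions the
operator acts as multiplication by its symbol `σ(p₀)` plus convolution with a kernel whose
weighted `L¹` norm tends to `0` with `δ`, while `σ(p₀) ≠ 0`. Correlating with `u`, the function
`z ↦ ∫ u(y) f(y - z) dy` is therefore a contraction of itself in a weighted space, hence vanishes.
A partition of unity on the support of `ψ` reduces the theorem to such `f`.
-/

open scoped NNReal ENNReal Topology SchwartzMap RealInnerProductSpace

local notation "dim" => Module.finrank ℝ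

/-- The polynomial weight `(1 + ‖x‖)^{-a}`, with values in `ℝ≥0` so that it can be used both in
pointwise estimates and in `lintegral`s. -/
noncomputable def decayWeight {E : Type*} [NormedAddCommGroup E] (a : ℝ) (x : E) : ℝ≥0 :=
  (1 + ‖x‖₊) ^ (-a)

section DecayWeight

variable {E : Type*} [NormedAddCommGroup E] {a : ℝ}

lemma decayWeight_pos (a : ℝ) (x : E) : 0 < decayWeight a x :=
  NNReal.rpow_pos (by positivity)

lemma decayWeight_le_one (ha : 0 ≤ a) (x : E) : decayWeight a x ≤ 1 :=
  NNReal.rpow_le_one_of_one_le_of_nonpos (by simp) (by simpa using ha)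

@[fun_prop]
lemma continuous_decayWeight (a : ℝ) : Continuous (decayWeight a : E → ℝ≥0) := by
  refine continuous_iff_continuousAt.2 fun x => ?_
  exact ContinuousAt.comp (f := fun x : E => 1 + ‖x‖₊)
    (NNReal.continuousAt_rpow_const (Or.inl (by positivity))) (by fun_prop)

lemma decayWeight_add (a b : ℝ) (x : E) :
    decayWeight (a + b) x = decayWeight a x * decayWeight b x := by
  rw [decayWeight, neg_add, NNReal.rpow_add (by positivity), decayWeight, decayWeight]

lemma decayWeight_anti {F : Type*} [NormedAddCommGroup F] (ha : 0 ≤ a) {x : E} {y : F}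
    (h : ‖x‖₊ ≤ ‖y‖₊) : decayWeight a y ≤ decayWeight a x :=
  NNReal.rpow_le_rpow_of_nonpos (by positivity) (by gcongr) (neg_nonpos.2 ha)

lemma decayWeight_neg (a : ℝ) (x : E) : decayWeight a (-x) = decayWeight a x := by
  simp [decayWeight]

lemma decayWeight_le_of_nnnorm_le (ha : 0 ≤ a) {c : ℝ≥0} (hc : 0 < c) {x z : E}
    (h : 1 + ‖x‖₊ ≤ c * (1 + ‖z‖₊)) : decayWeight a z ≤ c ^ a * decayWeight a x := by
  have hca : 0 < c ^ a := NNReal.rpow_pos hc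
  have h' : (1 + ‖x‖₊) ^ a ≤ c ^ a * (1 + ‖z‖₊) ^ a := by
    rw [← NNReal.mul_rpow]; gcongr
  rw [decayWeight, decayWeight, NNReal.rpow_neg, NNReal.rpow_neg, ← div_eq_mul_inv,
    inv_le_comm₀ (by positivity) (by positivity), inv_div, div_le_iff₀ hca, mul_comm]
  exact h'

lemma decayWeight_le_of_nnnorm_sub_le_one (ha : 0 ≤ a) {x z : E} (h : ‖z - x‖₊ ≤ 1) :
    decayWeight a z ≤ 2 ^ a * decayWeight a x := by
  refine decayWeight_le_of_nnnorm_le ha two_pos ?_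
  have hx : ‖x‖₊ ≤ ‖z‖₊ + ‖z - x‖₊ := by simpa using nnnorm_sub_le z (z - x)
  calc 1 + ‖x‖₊ ≤ 1 + (‖z‖₊ + 1) := by gcongr; exact hx.trans (by gcongr)
    _ ≤ 2 * (1 + ‖z‖₊) := by
      rw [← NNReal.coe_le_coe]; push_cast; linarith [norm_nonneg z]

lemma decayWeight_mul_le (ha : 0 ≤ a) (p q : E) :
    decayWeight a q * decayWeight a (p - q) ≤
      2 ^ a * decayWeight a p * (decayWeight a q + decayWeight a (p - q)) := by
  have key : ∀ x y : E, ‖x‖₊ ≤ ‖y‖₊ → ‖p‖₊ ≤ ‖x‖₊ + ‖y‖₊ →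
      decayWeight a y ≤ 2 ^ a * decayWeight a p := fun x y hxy hp => by
    refine decayWeight_le_of_nnnorm_le ha two_pos ?_
    calc 1 + ‖p‖₊ ≤ 1 + (‖y‖₊ + ‖y‖₊) := by gcongr; exact hp.trans (by gcongr)
      _ ≤ 2 * (1 + ‖y‖₊) := by rw [← NNReal.coe_le_coe]; push_cast; linarith
  have hp : ‖p‖₊ ≤ ‖q‖₊ + ‖p - q‖₊ := by simpa using nnnorm_add_le q (p - q)
  rw [mul_add]
  rcases le_total ‖q‖₊ ‖p - q‖₊ with h | h
  · refine le_trans ?_ (le_add_of_nonneg_right zero_le)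
    rw [mul_comm]
    gcongr
    exact key q (p - q) h hp
  · refine le_trans ?_ (le_add_of_nonneg_left zero_le)
    gcongr
    exact key (p - q) q h (hp.trans_eq (add_comm _ _))

variable [NormedSpace ℝ E] [FiniteDimensional ℝ E] [MeasurableSpace E] [BorelSpace E]
  {μ : Measure E} [μ.IsAddHaarMeasure]

lemma lintegral_decayWeight_ne_top (ha : (dim E : ℝ) < a) :
    ∫⁻ x, decayWeight a x ∂μ ≠ ∞ := by
  convert (finite_integral_one_add_norm (μ := μ) ha).ne with x
  rw [← ENNReal.ofReal_coe_nnreal]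
  simp [decayWeight]

lemma lintegral_decayWeight_mul_le (ha : 0 ≤ a) (p : E) :
    ∫⁻ q, decayWeight a q * decayWeight a (p - q) ∂μ ≤
      2 ^ (a + 1) * (∫⁻ q, decayWeight a q ∂μ) * decayWeight a p := by
  calc ∫⁻ q, decayWeight a q * decayWeight a (p - q) ∂μ
      ≤ ∫⁻ q, (2 ^ a * decayWeight a p : ℝ≥0) *
          ((decayWeight a q : ℝ≥0∞) + decayWeight a (p - q)) ∂μ := by
        refine lintegral_mono fun q => ?_
        simpa only [← ENNReal.coe_mul, ← ENNReal.coe_add, ENNReal.coe_le_coe] using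
          decayWeight_mul_le ha p q
    _ = (2 ^ a * decayWeight a p : ℝ≥0) * (2 * ∫⁻ q, decayWeight a q ∂μ) := by
        rw [lintegral_const_mul _ (by fun_prop), lintegral_add_left (by fun_prop),
          lintegral_sub_left_eq_self (fun q => (decayWeight a q : ℝ≥0∞)), two_mul]
    _ = _ := by
        rw [ENNReal.rpow_add _ _ two_ne_zero ENNReal.ofNat_ne_top, ENNReal.rpow_one]
        push_cast [ENNReal.coe_rpow_of_nonneg _ ha]
        ring

end DecayWeight

/-- The measure `‖y‖^{-a} dy`, the jump measure of the fractional operators of order `a - dim E`. -/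
noncomputable def powerMeasure (E : Type*) [NormedAddCommGroup E] [MeasureSpace E] (a : ℝ) :
    Measure E :=
  volume.withDensity fun y => (‖y‖₊ ^ (-a) : ℝ≥0)

section PowerMeasure

variable {E : Type*} [NormedAddCommGroup E] {a γ : ℝ}

lemma rpow_neg_nnnorm_le_decayWeight (ha : 0 ≤ a) {y : E} (hy : 1 ≤ ‖y‖₊) :
    ‖y‖₊ ^ (-a) ≤ 2 ^ a * decayWeight a y := by
  have hy0 : 0 < ‖y‖₊ := one_pos.trans_le hy
  have h : (1 + ‖y‖₊) ^ a ≤ 2 ^ a * ‖y‖₊ ^ a := by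
    rw [← NNReal.mul_rpow]
    gcongr
    rw [two_mul]
    gcongr
  rw [decayWeight, NNReal.rpow_neg, NNReal.rpow_neg, ← div_eq_mul_inv, inv_eq_one_div,
    div_le_div_iff₀ (NNReal.rpow_pos hy0) (NNReal.rpow_pos (by positivity)), one_mul]
  exact h

lemma density_mul_le_of_near_of_far (ha : 0 ≤ a) (hγ : 0 ≤ γ) {C : ℝ≥0} {x : E} {φ : E → ℝ≥0∞}
    (hnear : ∀ y, ‖y‖₊ ≤ 1 → φ y ≤ (C * ‖y‖₊ ^ γ * decayWeight a x : ℝ≥0))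
    (hfar : ∀ y, 1 ≤ ‖y‖₊ →
      φ y ≤ (C * (decayWeight a x + decayWeight a (x + y) + decayWeight a (x - y)) : ℝ≥0))
    (y : E) :
    (‖y‖₊ ^ (-a) : ℝ≥0) * φ y ≤
      (‖y‖₊ ^ (-a) : ℝ≥0) * ((C * decayWeight a x : ℝ≥0) * (min 1 (‖y‖₊ ^ γ) : ℝ≥0)) +
        (C * 2 ^ a : ℝ≥0) * (decayWeight a (-y) * decayWeight a (x - -y) +
          decayWeight a y * decayWeight a (x - y)) := by
  rcases le_total ‖y‖₊ 1 with hy | hy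
  · refine (mul_le_mul_right (hnear y hy) _).trans (le_add_right ?_)
    rw [min_eq_right (NNReal.rpow_le_one hy hγ), ← ENNReal.coe_mul (C * _), mul_right_comm]
  · rw [min_eq_left (NNReal.one_le_rpow hy hγ)]
    refine (mul_le_mul_right (hfar y hy) _).trans ?_
    norm_cast
    rw [sub_neg_eq_add, decayWeight_neg]
    calc ‖y‖₊ ^ (-a) * (C * (decayWeight a x + decayWeight a (x + y) + decayWeight a (x - y)))
        = ‖y‖₊ ^ (-a) * (C * decayWeight a x * 1) +
            ‖y‖₊ ^ (-a) * (C * (decayWeight a (x + y) + decayWeight a (x - y))) := by ring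
      _ ≤ ‖y‖₊ ^ (-a) * (C * decayWeight a x * 1) + 2 ^ a * decayWeight a y *
            (C * (decayWeight a (x + y) + decayWeight a (x - y))) := by
          gcongr; exact rpow_neg_nnnorm_le_decayWeight ha hy
      _ = _ := by ring

variable [MeasureSpace E] [BorelSpace E]

lemma lintegral_powerMeasure (φ : E → ℝ≥0∞) :
    ∫⁻ y, φ y ∂powerMeasure E a = ∫⁻ y, (‖y‖₊ ^ (-a) : ℝ≥0) * φ y := by
  rw [powerMeasure, lintegral_withDensity_eq_lintegral_mul_non_measurable _ (by fun_prop)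
    (.of_forall fun _ => ENNReal.coe_lt_top)]
  rfl

variable [NormedSpace ℝ E] [FiniteDimensional ℝ E] [(volume : Measure E).IsAddHaarMeasure]

lemma lintegral_comp_smul_eq {δ : ℝ≥0} (hδ : 0 < δ) (φ : E → ℝ≥0∞) :
    ∫⁻ x, φ (δ • x) = (δ ^ (-(dim E : ℝ)) : ℝ≥0) * ∫⁻ x, φ x := by
  have hδ' : (δ : ℝ) ≠ 0 := by exact_mod_cast hδ.ne'
  have h := (measurableEmbedding_const_smul₀ hδ').lintegral_map (μ := (volume : Measure E)) φ
  rw [Measure.map_addHaar_smul _ hδ', lintegral_smul_measure] at h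
  rw [abs_of_nonneg (by positivity), ENNReal.ofReal_inv_of_pos (by positivity),
    ENNReal.ofReal_pow δ.coe_nonneg, ENNReal.ofReal_coe_nnreal, smul_eq_mul] at h
  rw [NNReal.rpow_neg, NNReal.rpow_natCast, ENNReal.coe_inv (pow_ne_zero _ hδ.ne'),
    ENNReal.coe_pow]
  exact h.symm

lemma lintegral_powerMeasure_comp_smul {δ : ℝ≥0} (hδ : 0 < δ) (φ : E → ℝ≥0∞) :
    ∫⁻ y, φ (δ • y) ∂powerMeasure E a =
      (δ ^ (a - dim E) : ℝ≥0) * ∫⁻ y, φ y ∂powerMeasure E a := by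
  have hpow (y : E) : ‖y‖₊ ^ (-a) = δ ^ a * ‖δ • y‖₊ ^ (-a) := by
    rw [NNReal.smul_def, nnnorm_smul, NNReal.nnnorm_eq, NNReal.mul_rpow, ← mul_assoc,
      ← NNReal.rpow_add hδ.ne', add_neg_cancel, NNReal.rpow_zero, one_mul]
  calc ∫⁻ y, φ (δ • y) ∂powerMeasure E a
      = (δ ^ a : ℝ≥0) * ∫⁻ y, (‖δ • y‖₊ ^ (-a) : ℝ≥0) * φ (δ • y) := by
        rw [lintegral_powerMeasure, ← lintegral_const_mul' _ _ ENNReal.coe_ne_top]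
        exact lintegral_congr fun y => by rw [hpow, ENNReal.coe_mul, mul_assoc]
    _ = (δ ^ (a - dim E) : ℝ≥0) * ∫⁻ y, φ y ∂powerMeasure E a := by
        rw [lintegral_comp_smul_eq hδ fun y => (‖y‖₊ ^ (-a) : ℝ≥0) * φ y,
          ← lintegral_powerMeasure, ← mul_assoc, ← ENNReal.coe_mul, sub_eq_add_neg,
          NNReal.rpow_add hδ.ne']

lemma integrableOn_Ioc_rpow_mul_rpow {d : ℕ} (hd : 0 < d) (hγ : a < d + γ) :
    IntegrableOn (fun r : ℝ => r ^ (d - 1) * (r ^ (-a) * min 1 (r ^ γ))) (Ioc 0 1) := by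
  have h : IntegrableOn (fun r : ℝ => r ^ ((d : ℝ) - 1 + (γ - a))) (Ioc 0 1) := by
    rw [← intervalIntegrable_iff_integrableOn_Ioc_of_le zero_le_one]
    exact intervalIntegral.intervalIntegrable_rpow' (by linarith)
  refine h.mono' (Measurable.aestronglyMeasurable (by fun_prop)) ?_
  filter_upwards [ae_restrict_mem measurableSet_Ioc] with r hr'
  have hr : 0 < r := hr'.1
  rw [Real.norm_of_nonneg (by positivity), Real.rpow_add hr, sub_eq_neg_add γ, Real.rpow_add hr,
    ← Nat.cast_pred hd, Real.rpow_natCast]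
  gcongr
  exact min_le_right _ _

lemma integrableOn_Ioi_rpow_mul_rpow {d : ℕ} (hd : 0 < d) (ha : d < a) :
    IntegrableOn (fun r : ℝ => r ^ (d - 1) * (r ^ (-a) * min 1 (r ^ γ))) (Ioi 1) := by
  have h : IntegrableOn (fun r : ℝ => r ^ ((d : ℝ) - 1 + -a)) (Ioi 1) :=
    integrableOn_Ioi_rpow_of_lt (by linarith) one_pos
  refine h.mono' (Measurable.aestronglyMeasurable (by fun_prop)) ?_
  filter_upwards [ae_restrict_mem measurableSet_Ioi] with r hr
  have hr0 : 0 < r := one_pos.trans hr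
  rw [Real.norm_of_nonneg (by positivity), Real.rpow_add hr0, ← Nat.cast_pred hd,
    Real.rpow_natCast]
  gcongr
  exact mul_le_of_le_one_right (by positivity) (min_le_left _ _)

lemma lintegral_min_one_powerMeasure_ne_top [Nontrivial E] (ha : dim E < a)
    (hγ : a < dim E + γ) : ∫⁻ y, (min 1 (‖y‖₊ ^ γ) : ℝ≥0) ∂powerMeasure E a ≠ ∞ := by
  have hd : 0 < dim E := Module.finrank_pos
  have hint : Integrable fun y : E => ‖y‖ ^ (-a) * min 1 (‖y‖ ^ γ) := by
    rw [integrable_fun_norm_addHaar (μ := volume) (f := fun r : ℝ => r ^ (-a) * min 1 (r ^ γ)),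
      ← Ioc_union_Ioi_eq_Ioi (zero_le_one' ℝ), integrableOn_union]
    exact ⟨integrableOn_Ioc_rpow_mul_rpow hd hγ, integrableOn_Ioi_rpow_mul_rpow hd ha⟩
  rw [lintegral_powerMeasure]
  convert hint.hasFiniteIntegral.ne using 3 with y
  rw [← ENNReal.coe_mul, ← ofReal_norm, Real.norm_of_nonneg (by positivity),
    ← ENNReal.ofReal_coe_nnreal]
  push_cast
  rfl

theorem exists_lintegral_powerMeasure_le [Nontrivial E] (ha : dim E < a)
    (hγ : a < dim E + γ) (C : ℝ≥0) :
    ∃ C' : ℝ≥0, ∀ (x : E) (φ : E → ℝ≥0∞),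
      (∀ y, ‖y‖₊ ≤ 1 → φ y ≤ (C * ‖y‖₊ ^ γ * decayWeight a x : ℝ≥0)) →
      (∀ y, 1 ≤ ‖y‖₊ →
        φ y ≤ (C * (decayWeight a x + decayWeight a (x + y) + decayWeight a (x - y)) : ℝ≥0)) →
      ∫⁻ y, φ y ∂powerMeasure E a ≤ (C' * decayWeight a x : ℝ≥0) := by
  have ha0 : 0 ≤ a := (Nat.cast_nonneg _).trans ha.le
  set M := ∫⁻ y, (min 1 (‖y‖₊ ^ γ) : ℝ≥0) ∂powerMeasure E a
  set K := 2 ^ (a + 1) * ∫⁻ q : E, decayWeight a q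
  have hM : M ≠ ∞ := lintegral_min_one_powerMeasure_ne_top ha hγ
  have hK : K ≠ ∞ := ENNReal.mul_ne_top (by simp) (lintegral_decayWeight_ne_top ha)
  have hC' : C * M + (C * 2 ^ a : ℝ≥0) * (K + K) ≠ ∞ := by finiteness
  refine ⟨(C * M + (C * 2 ^ a : ℝ≥0) * (K + K)).toNNReal, fun x φ hnear hfar => ?_⟩
  calc ∫⁻ y, φ y ∂powerMeasure E a
      ≤ (C * decayWeight a x : ℝ≥0) * M + (C * 2 ^ a : ℝ≥0) *
          ((∫⁻ y : E, decayWeight a (-y) * decayWeight a (x - -y)) +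
            ∫⁻ y, decayWeight a y * decayWeight a (x - y)) := by
        rw [lintegral_powerMeasure]
        refine (lintegral_mono
          (density_mul_le_of_near_of_far ha0 (by linarith) hnear hfar)).trans_eq ?_
        rw [lintegral_add_right _ (by fun_prop), ← lintegral_powerMeasure,
          lintegral_const_mul _ (by fun_prop), lintegral_const_mul _ (by fun_prop),
          lintegral_add_right _ (by fun_prop)]
    _ ≤ (C * decayWeight a x : ℝ≥0) * M + (C * 2 ^ a : ℝ≥0) *
          (K * decayWeight a x + K * decayWeight a x) := by
        rw [lintegral_neg_eq_self fun y => (decayWeight a y * decayWeight a (x - y) : ℝ≥0∞)]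
        gcongr <;> exact lintegral_decayWeight_mul_le ha0 x
    _ = _ := by
        rw [ENNReal.coe_mul C (decayWeight a x), ENNReal.coe_mul _ (decayWeight a x),
          ENNReal.coe_toNNReal hC']
        ring

end PowerMeasure

section SchwartzDecay

variable {E F : Type*} [NormedAddCommGroup E] [NormedSpace ℝ E] [NormedAddCommGroup F]
  [NormedSpace ℝ F]

lemma exists_nnnorm_le_decayWeight (f : 𝓢(E, F)) (a : ℝ) :
    ∃ C : ℝ≥0, ∀ x, ‖f x‖₊ ≤ C * decayWeight a x := by
  obtain ⟨k, hk⟩ := exists_nat_ge a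
  obtain ⟨M, hM⟩ : ∃ M : ℝ, ∀ x, (1 + ‖x‖) ^ k * ‖f x‖ ≤ M := ⟨_, fun x => by
    simpa only [norm_iteratedFDeriv_zero] using
      f.one_add_le_sup_seminorm_apply (𝕜 := ℝ) (m := (k, 0)) (k := k) (n := 0) le_rfl le_rfl x⟩
  lift M to ℝ≥0 using le_trans (by positivity) (hM 0)
  refine ⟨M, fun x => ?_⟩
  rw [decayWeight, NNReal.rpow_neg, ← div_eq_mul_inv, le_div_iff₀ (by positivity), mul_comm]
  calc (1 + ‖x‖₊) ^ a * ‖f x‖₊ ≤ (1 + ‖x‖₊) ^ k * ‖f x‖₊ := by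
        gcongr
        rw [← NNReal.rpow_natCast]
        exact NNReal.rpow_le_rpow_of_exponent_le (by simp) hk
    _ ≤ M := hM x

lemma exists_nnnorm_sub_le (f : 𝓢(E, F)) {a : ℝ} (ha : 0 ≤ a) :
    ∃ C : ℝ≥0, ∀ x y, ‖y‖₊ ≤ 1 → ‖f x - f (x + y)‖₊ ≤ C * ‖y‖₊ * decayWeight a x := by
  obtain ⟨C, hC⟩ := exists_nnnorm_le_decayWeight (SchwartzMap.fderivCLM ℝ E F f) a
  refine ⟨C * 2 ^ a, fun x y hy => ?_⟩
  have hlip : LipschitzOnWith (C * (2 ^ a * decayWeight a x)) f (Metric.closedBall x ‖y‖) := by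
    refine (convex_closedBall x ‖y‖).lipschitzOnWith_of_nnnorm_fderiv_le (𝕜 := ℝ)
      (fun z _ => f.differentiableAt) fun z hz => (hC z).trans ?_
    gcongr
    exact decayWeight_le_of_nnnorm_sub_le_one ha ((mem_closedBall_iff_norm.1 hz).trans hy)
  have h := hlip (Metric.mem_closedBall_self (norm_nonneg y))
    (show x + y ∈ Metric.closedBall x ‖y‖ by simp)
  calc ‖f x - f (x + y)‖₊ ≤ C * (2 ^ a * decayWeight a x) * ‖y‖₊ := by
        simpa [edist_nndist, nndist_eq_nnnorm, ← ENNReal.coe_mul] using h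
    _ = C * 2 ^ a * ‖y‖₊ * decayWeight a x := by ring

lemma exists_nnnorm_second_difference_le (f : 𝓢(E, F)) {a : ℝ} (ha : 0 ≤ a) :
    ∃ C : ℝ≥0, ∀ x y, ‖y‖₊ ≤ 1 →
      ‖(f x - f (x + y)) + (f x - f (x - y))‖₊ ≤ C * ‖y‖₊ ^ 2 * decayWeight a x := by
  obtain ⟨C, hC⟩ := exists_nnnorm_sub_le (SchwartzMap.fderivCLM ℝ E F f) ha
  refine ⟨C * 2 ^ a, fun x y hy => ?_⟩
  have hderiv (z : E) :
      HasFDerivAt (fun z => f z - f (z + y)) (fderiv ℝ f z - fderiv ℝ f (z + y)) z :=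
    f.differentiableAt.hasFDerivAt.sub
      ((hasFDerivAt_comp_add_right y).2 f.differentiableAt.hasFDerivAt)
  have hlip : LipschitzOnWith (C * ‖y‖₊ * (2 ^ a * decayWeight a x)) (fun z => f z - f (z + y))
      (Metric.closedBall x ‖y‖) := by
    refine (convex_closedBall x ‖y‖).lipschitzOnWith_of_nnnorm_hasFDerivWithin_le (𝕜 := ℝ)
      (fun z _ => (hderiv z).hasFDerivWithinAt) fun z hz => (hC z y hy).trans ?_
    gcongr
    exact decayWeight_le_of_nnnorm_sub_le_one ha ((mem_closedBall_iff_norm.1 hz).trans hy)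
  have h := hlip (Metric.mem_closedBall_self (norm_nonneg y))
    (show x - y ∈ Metric.closedBall x ‖y‖ by simp)
  calc ‖(f x - f (x + y)) + (f x - f (x - y))‖₊
      = ‖(f x - f (x + y)) - (f (x - y) - f x)‖₊ := by congr 1; abel
    _ ≤ C * ‖y‖₊ * (2 ^ a * decayWeight a x) * ‖y‖₊ := by
        simpa [edist_nndist, nndist_eq_nnnorm, ← ENNReal.coe_mul] using h
    _ = C * 2 ^ a * ‖y‖₊ ^ 2 * decayWeight a x := by ring

end SchwartzDecay

/-- Data of a translation-invariant jump operator
`f ↦ ∫_region (forward (f x - f (x + y)) + backward (f x - f (x - y))) ‖y‖^{-exponent} dy`.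
The fractional Laplacian has `forward = backward` and `region = univ`, the right Marchaud derivative
has `backward = 0` and `region = Ioi 0`. -/
structure JumpKernel (E : Type*) [TopologicalSpace E] where
  region : Set E
  isOpen_region : IsOpen region
  exponent : ℝ
  forward : ℝ
  backward : ℝ

namespace JumpKernel

open Complex

section Definitions

variable {E : Type*} [NormedAddCommGroup E] [MeasureSpace E] (J : JumpKernel E)

/-- The jump measure `‖y‖^{-exponent} dy` on the region. -/
noncomputable def measure : Measure E := (powerMeasure E J.exponent).restrict J.region

/-- The integrand of the jump operator, for a function on any group in which the jumps `v` live. -/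
def difference {V : Type*} [AddGroup V] (f : V → ℂ) (z v : V) : ℂ :=
  J.forward * (f z - f (z + v)) + J.backward * (f z - f (z - v))

/-- The jump operator acting on functions on `V` by jumps along the map `L`, which is the identity
of `E` or the inclusion of `E` as a factor of a product. -/
noncomputable def operator {V : Type*} [AddGroup V] (L : E → V) (f : V → ℂ) (z : V) : ℂ :=
  ∫ y, J.difference f z (L y) ∂J.measure

/-- The factor by which `difference`, with jump `y`, multiplies `x ↦ e^{-iξ·x}`, where
`θ = ξ·y`. -/
noncomputable def phase (θ : ℝ) : ℂ :=
  J.forward * (1 - cexp (-(I * θ))) + J.backward * (1 - cexp (I * θ))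

/-- What remains of `difference` on `x ↦ e^{-iξ·x} g x`, with `θ = ξ·y`, after removal of the
`phase` term. -/
noncomputable def twistedDifference (g : E → ℂ) (θ : ℝ) (x y : E) : ℂ :=
  J.forward * cexp (-(I * θ)) * (g x - g (x + y)) + J.backward * cexp (I * θ) * (g x - g (x - y))

variable {J} in
lemma lintegral_measure_le (φ : E → ℝ≥0∞) :
    ∫⁻ y, φ y ∂J.measure ≤ ∫⁻ y, φ y ∂powerMeasure E J.exponent :=
  lintegral_mono' Measure.restrict_le_self le_rfl

end Definitions

section Bounds

variable {E : Type*} [NormedAddCommGroup E] (J : JumpKernel E)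

/-- The sum of the absolute values of the two coefficients. -/
def mass : ℝ≥0 := ‖J.forward‖₊ + ‖J.backward‖₊

variable {J} in
lemma nnnorm_forward_add_backward_le {B : ℝ≥0} {z₁ z₂ : ℂ} (h₁ : ‖z₁‖₊ ≤ B) (h₂ : ‖z₂‖₊ ≤ B) :
    ‖J.forward * z₁ + J.backward * z₂‖₊ ≤ J.mass * B := by
  refine (nnnorm_add_le _ _).trans ?_
  rw [nnnorm_mul, nnnorm_mul, nnnorm_real, nnnorm_real, mass, add_mul]
  gcongr

lemma nnnorm_cexp_neg_I_mul (θ : ℝ) : ‖cexp (-(I * θ))‖₊ = 1 := by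
  simpa using nnnorm_exp_I_mul_ofReal (-θ)

lemma nnnorm_phase_le_two (θ : ℝ) : ‖J.phase θ‖₊ ≤ J.mass * 2 := by
  refine nnnorm_forward_add_backward_le ((nnnorm_sub_le _ _).trans ?_)
    ((nnnorm_sub_le _ _).trans ?_)
  · rw [nnnorm_one, nnnorm_cexp_neg_I_mul, one_add_one_eq_two]
  · rw [nnnorm_one, nnnorm_exp_I_mul_ofReal, one_add_one_eq_two]

lemma nnnorm_phase_le_nnnorm (θ : ℝ) : ‖J.phase θ‖₊ ≤ J.mass * ‖θ‖₊ := by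
  refine nnnorm_forward_add_backward_le ?_ ?_
  · rw [← nnnorm_neg, neg_sub, ← nnnorm_neg θ]
    simpa using Real.nnnorm_exp_I_mul_ofReal_sub_one_le (x := -θ)
  · rw [← nnnorm_neg, neg_sub]
    exact Real.nnnorm_exp_I_mul_ofReal_sub_one_le

lemma re_phase (θ : ℝ) :
    (J.phase θ).re = (J.forward + J.backward) * (1 - Real.cos θ) := by
  rw [phase, ← mul_neg, ← ofReal_neg, mul_comm I, mul_comm I]
  simp only [add_re, re_ofReal_mul, sub_re, one_re, exp_ofReal_mul_I_re, Real.cos_neg]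
  ring

variable {J} in
lemma phase_eq_of_forward_eq_backward (h : J.forward = J.backward) (θ : ℝ) :
    J.phase θ = (J.backward * (2 * (1 - Real.cos θ)) : ℝ) := by
  rw [phase, h, mul_comm I, ← neg_mul, exp_mul_I, exp_mul_I, Complex.cos_neg, Complex.sin_neg]
  push_cast
  ring

variable {J} in
lemma nnnorm_phase_le_sq (h : J.forward = J.backward) (θ : ℝ) :
    ‖J.phase θ‖₊ ≤ J.mass * ‖θ‖₊ ^ 2 := by
  have hcos : 2 * (1 - Real.cos θ) ≤ ‖θ‖ ^ 2 := by
    rw [Real.norm_eq_abs, sq_abs]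
    linarith [Real.one_sub_sq_div_two_le_cos (x := θ)]
  rw [phase_eq_of_forward_eq_backward h, nnnorm_real, nnnorm_mul]
  refine mul_le_mul' (le_add_of_nonneg_left zero_le) ?_
  rw [← NNReal.coe_le_coe]
  simpa [abs_of_nonneg (sub_nonneg.2 (Real.cos_le_one θ))] using hcos

lemma nnnorm_twistedDifference_le_of_near {g : E → ℂ} {x y : E} {B : ℝ≥0}
    (hadd : ‖g x - g (x + y)‖₊ ≤ B) (hsub : ‖g x - g (x - y)‖₊ ≤ B) (θ : ℝ) :
    ‖J.twistedDifference g θ x y‖₊ ≤ J.mass * B := by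
  rw [twistedDifference, mul_assoc, mul_assoc]
  refine nnnorm_forward_add_backward_le ?_ ?_
  · rwa [nnnorm_mul, nnnorm_cexp_neg_I_mul, one_mul]
  · rwa [nnnorm_mul, nnnorm_exp_I_mul_ofReal, one_mul]

lemma nnnorm_twistedDifference_le_of_forall_le {g : E → ℂ} {C : ℝ≥0} {a : ℝ}
    (hg : ∀ x, ‖g x‖₊ ≤ C * decayWeight a x) (θ : ℝ) (x y : E) :
    ‖J.twistedDifference g θ x y‖₊ ≤
      J.mass * (C * (decayWeight a x + decayWeight a (x + y) + decayWeight a (x - y))) := by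
  have key (z : E) : ‖g x - g z‖₊ ≤ C * (decayWeight a x + decayWeight a z) := by
    rw [mul_add]
    exact (nnnorm_sub_le _ _).trans (add_le_add (hg x) (hg z))
  refine J.nnnorm_twistedDifference_le_of_near ((key _).trans ?_) ((key _).trans ?_) _
  · exact mul_le_mul_right le_self_add _
  · rw [add_right_comm]
    exact mul_le_mul_right le_self_add _

variable {J} in
lemma nnnorm_twistedDifference_le_of_forward_eq_backward (h : J.forward = J.backward)
    {g : E → ℂ} {x y : E} {B₁ B₂ : ℝ≥0} (hadd : ‖g x - g (x + y)‖₊ ≤ B₁)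
    (hsub : ‖g x - g (x - y)‖₊ ≤ B₁)
    (hsecond : ‖(g x - g (x + y)) + (g x - g (x - y))‖₊ ≤ B₂) (θ : ℝ) :
    ‖J.twistedDifference g θ x y‖₊ ≤ J.mass * (B₂ + ‖Real.sin θ‖₊ * (2 * B₁)) := by
  have heq : J.twistedDifference g θ x y = J.backward *
      ((Real.cos θ : ℂ) * ((g x - g (x + y)) + (g x - g (x - y))) +
        I * (Real.sin θ * ((g x - g (x - y)) - (g x - g (x + y))))) := by
    rw [twistedDifference, h, mul_comm I, ← neg_mul, exp_mul_I, exp_mul_I, Complex.cos_neg,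
      Complex.sin_neg, ofReal_cos, ofReal_sin]
    ring
  have hcos : ‖Real.cos θ‖₊ ≤ 1 := Real.abs_cos_le_one θ
  rw [heq, nnnorm_mul, nnnorm_real]
  refine mul_le_mul' (le_add_of_nonneg_left zero_le) ((nnnorm_add_le _ _).trans ?_)
  rw [nnnorm_mul, nnnorm_mul, nnnorm_mul, nnnorm_I, one_mul, nnnorm_real, nnnorm_real, two_mul]
  gcongr
  · exact (mul_le_of_le_one_left zero_le hcos).trans hsecond
  · exact (nnnorm_sub_le _ _).trans (add_le_add hsub hadd)

end Bounds

end JumpKernel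

open Complex in
/-- The `L¹`-normalized dilation of `g` by `δ`, modulated to the frequency `-ξ`; as `δ → 0` it
concentrates in frequency at `-ξ`. -/
noncomputable def modulatedDilation {E : Type*} [NormedAddCommGroup E] [InnerProductSpace ℝ E]
    (g : E → ℂ) (ξ : E) (δ : ℝ≥0) (x : E) : ℂ :=
  cexp (-(I * (⟪ξ, x⟫ : ℝ))) * ((δ ^ dim E : ℝ≥0) * g (δ • x))

lemma continuous_modulatedDilation {E : Type*} [NormedAddCommGroup E] [InnerProductSpace ℝ E]
    {g : E → ℂ} (hg : Continuous g) (ξ : E) (δ : ℝ≥0) : Continuous (modulatedDilation g ξ δ) := by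
  unfold modulatedDilation
  fun_prop

namespace JumpKernel

open Complex

section AsymptoticSymbol

variable {E : Type*} [NormedAddCommGroup E] [InnerProductSpace ℝ E]

lemma nnnorm_modulatedDilation (g : E → ℂ) (ξ : E) (δ : ℝ≥0) (x : E) :
    ‖modulatedDilation g ξ δ x‖₊ = δ ^ dim E * ‖g (δ • x)‖₊ := by
  rw [modulatedDilation, nnnorm_mul, nnnorm_cexp_neg_I_mul, one_mul, nnnorm_mul, nnnorm_real,
    NNReal.nnnorm_eq]

lemma difference_modulatedDilation (J : JumpKernel E) (g : E → ℂ) (ξ : E) (δ : ℝ≥0) (x y : E) :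
    J.difference (modulatedDilation g ξ δ) x y =
      J.phase ⟪ξ, y⟫ * modulatedDilation g ξ δ x + cexp (-(I * (⟪ξ, x⟫ : ℝ))) *
        ((δ ^ dim E : ℝ≥0) * J.twistedDifference g ⟪ξ, y⟫ (δ • x) (δ • y)) := by
  have hadd : cexp (-(I * (⟪ξ, x + y⟫ : ℝ))) =
      cexp (-(I * (⟪ξ, x⟫ : ℝ))) * cexp (-(I * (⟪ξ, y⟫ : ℝ))) := by
    rw [← Complex.exp_add, inner_add_right]; push_cast; ring_nf
  have hsub : cexp (-(I * (⟪ξ, x - y⟫ : ℝ))) =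
      cexp (-(I * (⟪ξ, x⟫ : ℝ))) * cexp (I * (⟪ξ, y⟫ : ℝ)) := by
    rw [← Complex.exp_add, inner_sub_right]; push_cast; ring_nf
  rw [difference, modulatedDilation, modulatedDilation, modulatedDilation, hadd, hsub, smul_add,
    smul_sub, phase, twistedDifference]
  ring

lemma enorm_difference_modulatedDilation_sub (J : JumpKernel E) (g : E → ℂ) (ξ : E) (δ : ℝ≥0)
    (x y : E) :
    ‖J.difference (modulatedDilation g ξ δ) x y - J.phase ⟪ξ, y⟫ * modulatedDilation g ξ δ x‖ₑ =
      (δ ^ dim E : ℝ≥0) * ‖J.twistedDifference g ⟪ξ, y⟫ (δ • x) (δ • y)‖ₑ := by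
  rw [difference_modulatedDilation, add_sub_cancel_left, enorm_eq_nnnorm, nnnorm_mul,
    nnnorm_cexp_neg_I_mul, one_mul, nnnorm_mul, nnnorm_real, NNReal.nnnorm_eq]
  push_cast
  rfl

lemma nnnorm_sin_le_rpow {s : ℝ} (hs0 : 0 ≤ s) (hs1 : s ≤ 1) (θ : ℝ) :
    ‖Real.sin θ‖₊ ≤ ‖θ‖₊ ^ s := by
  have hle : ‖Real.sin θ‖₊ ≤ ‖θ‖₊ := Real.abs_sin_le_abs
  calc ‖Real.sin θ‖₊ = ‖Real.sin θ‖₊ ^ (1 : ℝ) := (NNReal.rpow_one _).symm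
    _ ≤ ‖Real.sin θ‖₊ ^ s := by
        rcases eq_or_ne ‖Real.sin θ‖₊ 0 with h | h
        · rw [h, NNReal.zero_rpow one_ne_zero]
          exact zero_le
        · exact NNReal.rpow_le_rpow_of_exponent_ge (pos_iff_ne_zero.2 h) (Real.abs_sin_le_one θ) hs1
    _ ≤ ‖θ‖₊ ^ s := NNReal.rpow_le_rpow hle hs0

lemma rpow_mul_nnnorm_sin_inner_le {s : ℝ} (hs0 : 0 ≤ s) (hs1 : s ≤ 1) {δ : ℝ≥0} (hδ : 0 < δ)
    (ξ y : E) : δ ^ s * ‖Real.sin ⟪ξ, δ⁻¹ • y⟫‖₊ ≤ ‖ξ‖₊ ^ s * ‖y‖₊ ^ s := by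
  have hinner : δ * ‖(⟪ξ, δ⁻¹ • y⟫ : ℝ)‖₊ ≤ ‖ξ‖₊ * ‖y‖₊ := by
    refine (mul_le_mul_right (nnnorm_inner_le_nnnorm (𝕜 := ℝ) ξ (δ⁻¹ • y)) δ).trans_eq ?_
    rw [NNReal.smul_def, nnnorm_smul, NNReal.nnnorm_eq, mul_left_comm ‖ξ‖₊,
      mul_inv_cancel_left₀ hδ.ne']
  calc δ ^ s * ‖Real.sin ⟪ξ, δ⁻¹ • y⟫‖₊ ≤ δ ^ s * ‖(⟪ξ, δ⁻¹ • y⟫ : ℝ)‖₊ ^ s := by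
        gcongr
        exact nnnorm_sin_le_rpow hs0 hs1 _
    _ = (δ * ‖(⟪ξ, δ⁻¹ • y⟫ : ℝ)‖₊) ^ s := (NNReal.mul_rpow ..).symm
    _ ≤ (‖ξ‖₊ * ‖y‖₊) ^ s := NNReal.rpow_le_rpow hinner hs0
    _ = ‖ξ‖₊ ^ s * ‖y‖₊ ^ s := NNReal.mul_rpow ..

variable [MeasureSpace E]

/-- The Fourier multiplier of the jump operator at the frequency `-ξ`. -/
noncomputable def symbol (J : JumpKernel E) (ξ : E) : ℂ :=
  ∫ y, J.phase ⟪ξ, y⟫ ∂J.measure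

/-- The jump operator acts on the modulated dilations of `g` at the frequency `-ξ` as
multiplication by `J.symbol ξ`, up to an error that is `O(δ^ε)` relative to their size. -/
structure HasAsymptoticSymbol (J : JumpKernel E) (g : E → ℂ) (ξ : E) : Prop where
  integrable_phase : Integrable (fun y => J.phase ⟪ξ, y⟫) J.measure
  exists_remainder_le : ∃ (C : ℝ≥0) (ε : ℝ), 0 < ε ∧ ∀ δ : ℝ≥0, 0 < δ → δ ≤ 1 → ∀ x,
    ∫⁻ y, ‖J.difference (modulatedDilation g ξ δ) x y -
      J.phase ⟪ξ, y⟫ * modulatedDilation g ξ δ x‖ₑ ∂J.measure ≤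
        (C * δ ^ (dim E + ε) * decayWeight J.exponent (δ • x) : ℝ≥0)

variable {J : JumpKernel E} {γ : ℝ}

variable [FiniteDimensional ℝ E] [BorelSpace E] [(volume : Measure E).IsAddHaarMeasure]

lemma integrable_phase_of_le [Nontrivial E] (ha : dim E < J.exponent)
    (hγ : J.exponent < dim E + γ) (hphase : ∀ θ, ‖J.phase θ‖₊ ≤ J.mass * ‖θ‖₊ ^ γ) (ξ : E) :
    Integrable (fun y => J.phase ⟪ξ, y⟫) J.measure := by
  have hγ0 : 0 ≤ γ := by linarith
  have hcont : Continuous fun y : E => J.phase ⟪ξ, y⟫ := by unfold phase; fun_prop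
  obtain ⟨C, hC⟩ := exists_lintegral_powerMeasure_le ha hγ (J.mass * (‖ξ‖₊ ^ γ + 2))
  refine ⟨hcont.aestronglyMeasurable, ((lintegral_measure_le _).trans
    (hC 0 _ (fun y _ => ?_) fun y _ => ?_)).trans_lt ENNReal.coe_lt_top⟩
  · have hinner : ‖(⟪ξ, y⟫ : ℝ)‖₊ ≤ ‖ξ‖₊ * ‖y‖₊ := norm_inner_le_norm ξ y
    refine ENNReal.coe_le_coe.2 ((hphase _).trans ?_)
    calc J.mass * ‖(⟪ξ, y⟫ : ℝ)‖₊ ^ γ ≤ J.mass * (‖ξ‖₊ ^ γ + 2) * ‖y‖₊ ^ γ := by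
          rw [mul_assoc]
          gcongr
          refine (NNReal.rpow_le_rpow hinner hγ0).trans ?_
          rw [NNReal.mul_rpow]
          gcongr
          exact le_self_add
      _ = _ := by simp [decayWeight]
  · refine ENNReal.coe_le_coe.2 ((J.nnnorm_phase_le_two _).trans ?_)
    refine le_mul_of_le_of_one_le (by gcongr; exact le_add_self) ?_
    rw [add_assoc]
    exact le_add_right (by simp [decayWeight])

lemma lintegral_enorm_difference_sub_le {g : E → ℂ} {ξ : E} {δ : ℝ≥0} (hδ : 0 < δ) (x : E) :
    ∫⁻ y, ‖J.difference (modulatedDilation g ξ δ) x y -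
        J.phase ⟪ξ, y⟫ * modulatedDilation g ξ δ x‖ₑ ∂J.measure ≤
      (δ ^ J.exponent : ℝ≥0) * ∫⁻ y, ‖J.twistedDifference g ⟪ξ, δ⁻¹ • y⟫ (δ • x) y‖ₑ
        ∂powerMeasure E J.exponent := by
  calc _ ≤ ∫⁻ y, (δ ^ dim E : ℝ≥0) *
          ‖J.twistedDifference g ⟪ξ, δ⁻¹ • (δ • y)⟫ (δ • x) (δ • y)‖ₑ
            ∂powerMeasure E J.exponent := by
        simp_rw [inv_smul_smul₀ hδ.ne', ← enorm_difference_modulatedDilation_sub]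
        exact lintegral_measure_le _
    _ = _ := by
        rw [lintegral_const_mul' _ _ ENNReal.coe_ne_top, lintegral_powerMeasure_comp_smul hδ
          (fun y => ‖J.twistedDifference g ⟪ξ, δ⁻¹ • y⟫ (δ • x) y‖ₑ), ← mul_assoc,
          ← ENNReal.coe_mul, ← NNReal.rpow_natCast, ← NNReal.rpow_add hδ.ne', add_sub_cancel]

/-- The loss `δ^{-s}` in the near-diagonal bound is affordable because rescaling the jump measure
gains `δ^{exponent - dim E}`. -/
lemma exists_remainder_le_of_near_le [Nontrivial E] (g : 𝓢(E, ℂ)) (ξ : E) {s : ℝ} {C₁ : ℝ≥0}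
    (hs : 0 ≤ s) (hsa : dim E + s < J.exponent) (hγ : J.exponent < dim E + γ)
    (hnear : ∀ δ : ℝ≥0, 0 < δ → δ ≤ 1 → ∀ x y, ‖y‖₊ ≤ 1 →
      δ ^ s * ‖J.twistedDifference g ⟪ξ, δ⁻¹ • y⟫ x y‖₊ ≤
        C₁ * ‖y‖₊ ^ γ * decayWeight J.exponent x) :
    ∃ (C : ℝ≥0) (ε : ℝ), 0 < ε ∧ ∀ δ : ℝ≥0, 0 < δ → δ ≤ 1 → ∀ x,
      ∫⁻ y, ‖J.difference (modulatedDilation g ξ δ) x y -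
        J.phase ⟪ξ, y⟫ * modulatedDilation g ξ δ x‖ₑ ∂J.measure ≤
          (C * δ ^ (dim E + ε) * decayWeight J.exponent (δ • x) : ℝ≥0) := by
  obtain ⟨C₀, hC₀⟩ := exists_nnnorm_le_decayWeight g J.exponent
  obtain ⟨C, hC⟩ := exists_lintegral_powerMeasure_le (E := E) (by linarith) hγ (C₁ + J.mass * C₀)
  refine ⟨C, J.exponent - dim E - s, by linarith, fun δ hδ hδ1 x => ?_⟩
  have hbound := hC (δ • x)
    (fun y => (δ ^ s : ℝ≥0) * ‖J.twistedDifference g ⟪ξ, δ⁻¹ • y⟫ (δ • x) y‖ₑ)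
    (fun y hy => ENNReal.coe_le_coe.2 <| (hnear δ hδ hδ1 _ y hy).trans
      (by gcongr; exact le_self_add))
    (fun y _ => ENNReal.coe_le_coe.2 <|
      (mul_le_of_le_one_left zero_le (NNReal.rpow_le_one hδ1 hs)).trans <|
        (J.nnnorm_twistedDifference_le_of_forall_le hC₀ _ _ _).trans
          (by rw [← mul_assoc]; gcongr; exact le_add_self))
  rw [lintegral_const_mul' _ _ ENNReal.coe_ne_top] at hbound
  calc _ ≤ (δ ^ J.exponent : ℝ≥0) * ∫⁻ y, ‖J.twistedDifference g ⟪ξ, δ⁻¹ • y⟫ (δ • x) y‖ₑ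
        ∂powerMeasure E J.exponent := lintegral_enorm_difference_sub_le hδ x
    _ = (δ ^ (J.exponent - s) : ℝ≥0) * ((δ ^ s : ℝ≥0) *
          ∫⁻ y, ‖J.twistedDifference g ⟪ξ, δ⁻¹ • y⟫ (δ • x) y‖ₑ ∂powerMeasure E J.exponent) := by
        rw [← mul_assoc, ← ENNReal.coe_mul, ← NNReal.rpow_add hδ.ne', sub_add_cancel]
    _ ≤ (δ ^ (J.exponent - s) : ℝ≥0) * (C * decayWeight J.exponent (δ • x) : ℝ≥0) := by gcongr
    _ = _ := by
        rw [← ENNReal.coe_mul]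
        congr 1
        rw [show dim E + (J.exponent - dim E - s) = J.exponent - s by ring]
        ring

theorem hasAsymptoticSymbol_of_exponent_lt [Nontrivial E] (ha : dim E < J.exponent)
    (ha' : J.exponent < dim E + 1) (g : 𝓢(E, ℂ)) (ξ : E) : J.HasAsymptoticSymbol g ξ := by
  obtain ⟨C, hC⟩ := exists_nnnorm_sub_le g (a := J.exponent) ((Nat.cast_nonneg _).trans ha.le)
  refine ⟨integrable_phase_of_le ha ha' (by simpa using J.nnnorm_phase_le_nnnorm) ξ,
    exists_remainder_le_of_near_le g ξ (s := 0) (C₁ := J.mass * C) le_rfl (by simpa) ha'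
      fun δ _ _ x y hy => ?_⟩
  rw [NNReal.rpow_zero, one_mul, NNReal.rpow_one, mul_assoc, mul_assoc, ← mul_assoc C]
  refine J.nnnorm_twistedDifference_le_of_near (hC x y hy) ?_ _
  simpa [sub_eq_add_neg] using hC x (-y) (by simpa using hy)

theorem hasAsymptoticSymbol_of_forward_eq_backward [Nontrivial E] (h : J.forward = J.backward)
    (ha : dim E < J.exponent) (ha' : J.exponent < dim E + 2) (g : 𝓢(E, ℂ)) (ξ : E) :
    J.HasAsymptoticSymbol g ξ := by
  have ha0 : 0 ≤ J.exponent := (Nat.cast_nonneg _).trans ha.le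
  obtain ⟨C₁, hC₁⟩ := exists_nnnorm_sub_le g ha0
  obtain ⟨C₂, hC₂⟩ := exists_nnnorm_second_difference_le g ha0
  obtain ⟨s, hs⟩ : ∃ s : ℝ, s = (J.exponent - dim E) / 2 := ⟨_, rfl⟩
  have hs0 : 0 ≤ s := by linarith
  have hs1 : s ≤ 1 := by linarith
  refine ⟨integrable_phase_of_le ha ha' (mod_cast nnnorm_phase_le_sq h) ξ,
    exists_remainder_le_of_near_le g ξ (s := s) (γ := 1 + s)
      (C₁ := J.mass * (C₂ + 2 * C₁ * ‖ξ‖₊ ^ s)) hs0 (by linarith) (by linarith)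
      fun δ hδ hδ1 x y hy => ?_⟩
  have hneg := hC₁ x (-y) (by simpa using hy)
  rw [← sub_eq_add_neg, nnnorm_neg] at hneg
  have hpow : ‖y‖₊ ^ 2 ≤ ‖y‖₊ ^ (1 + s) := by
    rcases eq_or_ne ‖y‖₊ 0 with h0 | h0
    · simp [h0]
    · rw [← NNReal.rpow_natCast]
      exact NNReal.rpow_le_rpow_of_exponent_ge (pos_iff_ne_zero.2 h0) hy
        (by push_cast; linarith)
  calc δ ^ s * ‖J.twistedDifference g ⟪ξ, δ⁻¹ • y⟫ x y‖₊
      ≤ δ ^ s * (J.mass * (C₂ * ‖y‖₊ ^ 2 * decayWeight J.exponent x +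
          ‖Real.sin ⟪ξ, δ⁻¹ • y⟫‖₊ * (2 * (C₁ * ‖y‖₊ * decayWeight J.exponent x)))) := by
        gcongr
        exact nnnorm_twistedDifference_le_of_forward_eq_backward h (hC₁ x y hy) hneg
          (hC₂ x y hy) _
    _ = J.mass * decayWeight J.exponent x * (C₂ * (δ ^ s * ‖y‖₊ ^ 2) +
          2 * C₁ * ‖y‖₊ * (δ ^ s * ‖Real.sin ⟪ξ, δ⁻¹ • y⟫‖₊)) := by ring
    _ ≤ J.mass * decayWeight J.exponent x * (C₂ * (1 * ‖y‖₊ ^ (1 + s)) +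
          2 * C₁ * ‖y‖₊ * (‖ξ‖₊ ^ s * ‖y‖₊ ^ s)) := by
        gcongr _ * (_ * (?_ * ?_) + _ * ?_)
        · exact NNReal.rpow_le_one hδ1 hs0
        · exact rpow_mul_nnnorm_sin_inner_le hs0 hs1 hδ ξ y
    _ = _ := by
        rw [NNReal.rpow_add_of_nonneg _ zero_le_one hs0, NNReal.rpow_one]
        ring

end AsymptoticSymbol

section Topology

variable {E : Type*} [NormedAddCommGroup E] (J : JumpKernel E)

lemma continuous_uncurry_difference {V : Type*} [AddGroup V] [TopologicalSpace V]
    [IsTopologicalAddGroup V] {f : V → ℂ} (hf : Continuous f) {L : E → V} (hL : Continuous L) :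
    Continuous fun p : V × E => J.difference f p.1 (L p.2) := by
  unfold difference
  fun_prop

variable {J} in
lemma measure_pos_of_isOpen [MeasureSpace E] [BorelSpace E]
    [(volume : Measure E).IsOpenPosMeasure] {U : Set E} (hU : IsOpen U)
    (hne : (J.region ∩ U).Nonempty) (h0 : (0 : E) ∉ U) : 0 < J.measure U := by
  rw [measure, Measure.restrict_apply hU.measurableSet, inter_comm, pos_iff_ne_zero, powerMeasure,
    Ne, withDensity_apply_eq_zero (by fun_prop)]
  refine fun hzero => ((J.isOpen_region.inter hU).measure_pos volume hne).ne'
    (measure_mono_null ?_ hzero)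
  refine fun y hy => ⟨?_, hy⟩
  have hy0 : y ≠ 0 := fun h => h0 (h ▸ hy.2)
  exact ENNReal.coe_ne_zero.2 (NNReal.rpow_pos (nnnorm_pos.2 hy0)).ne'

end Topology

section Symbol

variable {E : Type*} [NormedAddCommGroup E] [InnerProductSpace ℝ E] [MeasureSpace E]
  {J : JumpKernel E} {ξ : E}

lemma re_symbol (hint : Integrable (fun y => J.phase ⟪ξ, y⟫) J.measure) :
    (J.symbol ξ).re =
      ∫ y, (J.forward + J.backward) * (1 - Real.cos ⟪ξ, y⟫) ∂J.measure := by
  simp_rw [← re_phase]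
  exact (reCLM.integral_comp_comm hint).symm

lemma re_symbol_nonneg (hint : Integrable (fun y => J.phase ⟪ξ, y⟫) J.measure)
    (h : 0 ≤ J.forward + J.backward) : 0 ≤ (J.symbol ξ).re := by
  rw [re_symbol hint]
  exact integral_nonneg fun y => mul_nonneg h (sub_nonneg.2 (Real.cos_le_one _))

variable [BorelSpace E] [(volume : Measure E).IsOpenPosMeasure]

lemma re_symbol_pos (hint : Integrable (fun y => J.phase ⟪ξ, y⟫) J.measure)
    (h : 0 < J.forward + J.backward) (hcos : ∃ y ∈ J.region, Real.cos ⟪ξ, y⟫ ≠ 1) :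
    0 < (J.symbol ξ).re := by
  have hint_re := hint.re
  simp only [RCLike.re_eq_complex_re, re_phase] at hint_re
  rw [re_symbol hint, integral_pos_iff_support_of_nonneg
    (fun y => mul_nonneg h.le (sub_nonneg.2 (Real.cos_le_one _))) hint_re]
  obtain ⟨y, hy, hy1⟩ := hcos
  have hopen : IsOpen {y : E | Real.cos ⟪ξ, y⟫ ≠ 1} := isOpen_ne_fun (by fun_prop) (by fun_prop)
  refine (measure_pos_of_isOpen hopen ⟨y, hy, hy1⟩ (by simp)).trans_le (measure_mono fun z hz => ?_)
  exact mul_ne_zero h.ne' (sub_ne_zero.2 (Ne.symm hz))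

end Symbol

namespace HasAsymptoticSymbol

variable {E : Type*} [NormedAddCommGroup E] [InnerProductSpace ℝ E] [MeasureSpace E]
  {J : JumpKernel E} {g : E → ℂ} {ξ : E}

lemma exists_lintegral_difference_le (h : J.HasAsymptoticSymbol g ξ) (ha : 0 ≤ J.exponent)
    {δ : ℝ≥0} (hδ : 0 < δ) (hδ1 : δ ≤ 1) {B : ℝ≥0} (hB : ∀ x, ‖g x‖₊ ≤ B) :
    ∃ M : ℝ≥0, ∀ x, ∫⁻ y, ‖J.difference (modulatedDilation g ξ δ) x y‖ₑ ∂J.measure ≤ M := by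
  obtain ⟨C, ε, -, hC⟩ := h.exists_remainder_le
  let S : ℝ≥0∞ := (C * δ ^ (dim E + ε) : ℝ≥0) +
    (∫⁻ y, ‖J.phase ⟪ξ, y⟫‖ₑ ∂J.measure) * (δ ^ dim E * B : ℝ≥0)
  have hS : S ≠ ∞ :=
    ENNReal.add_ne_top.2 ⟨ENNReal.coe_ne_top, ENNReal.mul_ne_top h.integrable_phase.2.ne
      ENNReal.coe_ne_top⟩
  refine ⟨S.toNNReal, fun x => ?_⟩
  rw [ENNReal.coe_toNNReal hS]
  have hphase : AEMeasurable (fun y => ‖J.phase ⟪ξ, y⟫ * modulatedDilation g ξ δ x‖ₑ) J.measure :=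
    (h.integrable_phase.1.mul_const _).enorm
  calc ∫⁻ y, ‖J.difference (modulatedDilation g ξ δ) x y‖ₑ ∂J.measure
      ≤ ∫⁻ y, (‖J.difference (modulatedDilation g ξ δ) x y -
          J.phase ⟪ξ, y⟫ * modulatedDilation g ξ δ x‖ₑ +
            ‖J.phase ⟪ξ, y⟫ * modulatedDilation g ξ δ x‖ₑ) ∂J.measure :=
        lintegral_mono fun y => (enorm_add_le _ _).trans_eq' (by rw [sub_add_cancel])
    _ ≤ S := by
        rw [lintegral_add_right' _ hphase]
        simp_rw [enorm_mul]
        rw [lintegral_mul_const' _ _ enorm_ne_top]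
        refine add_le_add ((hC δ hδ hδ1 x).trans (ENNReal.coe_le_coe.2 ?_))
          (mul_le_mul_right (ENNReal.coe_le_coe.2 ?_) _)
        · exact mul_le_of_le_one_right zero_le (decayWeight_le_one ha _)
        · rw [nnnorm_modulatedDilation]
          exact mul_le_mul_right (hB _) _

lemma exists_nnnorm_symbol_mul_sub_operator_le [OpensMeasurableSpace E]
    [SecondCountableTopology E] (h : J.HasAsymptoticSymbol g ξ)
    (ha : 0 ≤ J.exponent) (hg : Continuous g) {B : ℝ≥0} (hB : ∀ x, ‖g x‖₊ ≤ B) :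
    ∃ (C : ℝ≥0) (ε : ℝ), 0 < ε ∧ ∀ δ : ℝ≥0, 0 < δ → δ ≤ 1 → ∀ x,
      ‖J.symbol ξ * modulatedDilation g ξ δ x -
        J.operator id (modulatedDilation g ξ δ) x‖₊ ≤
          C * δ ^ (dim E + ε) * decayWeight J.exponent (δ • x) := by
  obtain ⟨C, ε, hε, hC⟩ := h.exists_remainder_le
  refine ⟨C, ε, hε, fun δ hδ hδ1 x => ENNReal.coe_le_coe.1 ((hC δ hδ hδ1 x).trans' ?_)⟩
  obtain ⟨M, hM⟩ := h.exists_lintegral_difference_le ha hδ hδ1 hB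
  have hdiff : Integrable (J.difference (modulatedDilation g ξ δ) x) J.measure :=
    ⟨((J.continuous_uncurry_difference (continuous_modulatedDilation hg ξ δ)
      continuous_id).comp (by fun_prop : Continuous fun y => (x, y))).aestronglyMeasurable,
      (hM x).trans_lt ENNReal.coe_lt_top⟩
  rw [← nnnorm_neg, neg_sub, ← enorm_eq_nnnorm, operator, symbol, ← integral_mul_const]
  simp_rw [id_eq]
  rw [← integral_sub hdiff (h.integrable_phase.mul_const _)]
  exact enorm_integral_le_lintegral_enorm _

end HasAsymptoticSymbol

end JumpKernel

section Contraction

variable {V : Type*} [AddCommGroup V] [MeasurableSpace V] {ν : Measure V}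
  {u f k : V → ℂ} {w : V → ℝ≥0} {m : ℂ} {κ K C : ℝ≥0}

/-- The correlation `z ↦ ∫ u(y) f(y - z) dy` of `u` with the translates of `f`. -/
noncomputable def correlation (ν : Measure V) (u f : V → ℂ) (z : V) : ℂ :=
  ∫ y, u y * f (y - z) ∂ν

lemma lintegral_enorm_mul_comp_sub_le (hww : ∀ p, ∫⁻ q, w q * w (p - q) ∂ν ≤ K * w p)
    (hkw : ∀ z, ‖k z‖₊ ≤ κ * w z) (hfw : ∀ z, ‖f z‖₊ ≤ C * w z) (p : V) :
    ∫⁻ q, ‖k q * f (p - q)‖ₑ ∂ν ≤ κ * C * K * w p := by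
  calc ∫⁻ q, ‖k q * f (p - q)‖ₑ ∂ν ≤ ∫⁻ q, (κ * C : ℝ≥0) * (w q * w (p - q)) ∂ν := by
        refine lintegral_mono fun q => ?_
        rw [← ENNReal.coe_mul, ← ENNReal.coe_mul, mul_mul_mul_comm, enorm_eq_nnnorm, nnnorm_mul]
        exact ENNReal.coe_le_coe.2 (mul_le_mul' (hkw q) (hfw _))
    _ ≤ κ * C * (K * w p) := by
        rw [lintegral_const_mul' _ _ ENNReal.coe_ne_top, ENNReal.coe_mul]
        gcongr
        exact hww p
    _ = κ * C * K * w p := by ring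

variable [MeasurableAdd₂ V] [MeasurableNeg V]

lemma integrable_mul_comp_sub (hu : AEStronglyMeasurable u ν) (hf : Measurable f)
    (hfw : ∀ z, ‖f z‖₊ ≤ C * w z) (huw : ∀ z, ∫⁻ y, ‖u y‖ₑ * w (y - z) ∂ν ≠ ∞) (z : V) :
    Integrable (fun y => u y * f (y - z)) ν := by
  refine ⟨hu.mul (hf.comp (measurable_id.sub_const z)).aestronglyMeasurable, ?_⟩
  calc ∫⁻ y, ‖u y * f (y - z)‖ₑ ∂ν ≤ ∫⁻ y, C * (‖u y‖ₑ * w (y - z)) ∂ν := by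
        refine lintegral_mono fun y => ?_
        rw [enorm_mul, mul_left_comm]
        exact mul_le_mul_right (ENNReal.coe_le_coe.2 (hfw _)) _
    _ = C * ∫⁻ y, ‖u y‖ₑ * w (y - z) ∂ν := lintegral_const_mul' _ _ ENNReal.coe_ne_top
    _ < ∞ := ENNReal.mul_lt_top ENNReal.coe_lt_top (huw z).lt_top

variable [SFinite ν]

lemma aestronglyMeasurable_correlation (hu : AEStronglyMeasurable u ν) (hf : Measurable f) :
    AEStronglyMeasurable (correlation ν u f) ν :=
  AEStronglyMeasurable.integral_prod_right' (f := fun p : V × V => u p.2 * f (p.2 - p.1)) <|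
    hu.comp_snd.mul (hf.comp (measurable_snd.sub measurable_fst)).aestronglyMeasurable

lemma integrable_prod_mul_convolution (hu : AEStronglyMeasurable u ν) (hf : Measurable f)
    (hk : Measurable k) (hww : ∀ p, ∫⁻ q, w q * w (p - q) ∂ν ≤ K * w p)
    (hkw : ∀ z, ‖k z‖₊ ≤ κ * w z) (hfw : ∀ z, ‖f z‖₊ ≤ C * w z)
    (huw : ∀ z, ∫⁻ y, ‖u y‖ₑ * w (y - z) ∂ν ≠ ∞) (z : V) :
    Integrable (fun p : V × V => u p.1 * (k p.2 * f (p.1 - z - p.2))) (ν.prod ν) := by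
  have hmeas : AEStronglyMeasurable (fun p : V × V => u p.1 * (k p.2 * f (p.1 - z - p.2)))
      (ν.prod ν) := hu.comp_fst.mul (Measurable.aestronglyMeasurable (by fun_prop))
  refine ⟨hmeas, ?_⟩
  calc ∫⁻ p, ‖u p.1 * (k p.2 * f (p.1 - z - p.2))‖ₑ ∂ν.prod ν
      = ∫⁻ y, ‖u y‖ₑ * ∫⁻ q, ‖k q * f (y - z - q)‖ₑ ∂ν ∂ν := by
        simp_rw [lintegral_prod _ hmeas.enorm, enorm_mul (u _),
          lintegral_const_mul' _ _ (enorm_ne_top (x := u _))]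
    _ ≤ ∫⁻ y, (κ * C * K : ℝ≥0) * (‖u y‖ₑ * w (y - z)) ∂ν := by
        refine lintegral_mono fun y => ?_
        rw [mul_left_comm]
        push_cast
        exact mul_le_mul_right (lintegral_enorm_mul_comp_sub_le hww hkw hfw _) _
    _ = (κ * C * K : ℝ≥0) * ∫⁻ y, ‖u y‖ₑ * w (y - z) ∂ν :=
        lintegral_const_mul' _ _ ENNReal.coe_ne_top
    _ < ∞ := ENNReal.mul_lt_top ENNReal.coe_lt_top (huw z).lt_top

lemma integrable_mul_convolution (hu : AEStronglyMeasurable u ν) (hf : Measurable f)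
    (hk : Measurable k) (hww : ∀ p, ∫⁻ q, w q * w (p - q) ∂ν ≤ K * w p)
    (hkw : ∀ z, ‖k z‖₊ ≤ κ * w z) (hfw : ∀ z, ‖f z‖₊ ≤ C * w z)
    (huw : ∀ z, ∫⁻ y, ‖u y‖ₑ * w (y - z) ∂ν ≠ ∞) (z : V) :
    Integrable (fun y => u y * ∫ q, k q * f (y - z - q) ∂ν) ν := by
  simpa only [integral_const_mul] using
    (integrable_prod_mul_convolution hu hf hk hww hkw hfw huw z).integral_prod_left

lemma mul_correlation_eq_integral (hu : AEStronglyMeasurable u ν) (hf : Measurable f)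
    (hk : Measurable k) (hww : ∀ p, ∫⁻ q, w q * w (p - q) ∂ν ≤ K * w p)
    (hkw : ∀ z, ‖k z‖₊ ≤ κ * w z) (hfw : ∀ z, ‖f z‖₊ ≤ C * w z)
    (huw : ∀ z, ∫⁻ y, ‖u y‖ₑ * w (y - z) ∂ν ≠ ∞) {z : V}
    (h : ∫ y, u y * (m * f (y - z) - ∫ q, k q * f (y - z - q) ∂ν) ∂ν = 0) :
    m * correlation ν u f z = ∫ q, k q * correlation ν u f (z + q) ∂ν := by
  have hprod := integrable_prod_mul_convolution hu hf hk hww hkw hfw huw z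
  have hswap : ∫ y, u y * ∫ q, k q * f (y - z - q) ∂ν ∂ν =
      ∫ q, k q * correlation ν u f (z + q) ∂ν := by
    simp_rw [← integral_const_mul]
    rw [integral_integral_swap hprod]
    simp_rw [mul_left_comm (u _), integral_const_mul, correlation, sub_sub]
  simp_rw [mul_sub, mul_left_comm (u _) m] at h
  rw [integral_sub ((integrable_mul_comp_sub hu hf hfw huw z).const_mul m)
    (integrable_mul_convolution hu hf hk hww hkw hfw huw z), integral_const_mul, sub_eq_zero,
    hswap] at h
  exact h

lemma lintegral_mul_enorm_correlation_ne_top (hu : AEStronglyMeasurable u ν) (hw : Measurable w)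
    (hww : ∀ p, ∫⁻ q, w q * w (p - q) ∂ν ≤ K * w p) (hfw : ∀ z, ‖f z‖₊ ≤ C * w z)
    (huw : ∫⁻ y, ‖u y‖ₑ * w y ∂ν ≠ ∞) :
    ∫⁻ z, w z * ‖correlation ν u f z‖ₑ ∂ν ≠ ∞ := by
  refine ((?_ : _ ≤ _).trans_lt
    (ENNReal.mul_lt_top (ENNReal.coe_lt_top (r := C * K)) huw.lt_top)).ne
  calc ∫⁻ z, w z * ‖correlation ν u f z‖ₑ ∂ν
      ≤ ∫⁻ z, ∫⁻ y, C * ‖u y‖ₑ * (w z * w (y - z)) ∂ν ∂ν := by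
        refine lintegral_mono fun z => ?_
        refine (mul_le_mul_right (enorm_integral_le_lintegral_enorm _) _).trans ?_
        rw [← lintegral_const_mul' _ _ ENNReal.coe_ne_top]
        refine lintegral_mono fun y => ?_
        rw [mul_comm (C : ℝ≥0∞), mul_assoc, mul_left_comm (C : ℝ≥0∞), mul_left_comm _ (w z : ℝ≥0∞),
          enorm_mul]
        gcongr
        exact ENNReal.coe_le_coe.2 (hfw _)
    _ = ∫⁻ y, C * ‖u y‖ₑ * ∫⁻ z, w z * w (y - z) ∂ν ∂ν := by
        rw [lintegral_lintegral_swap]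
        · simp_rw [lintegral_const_mul' _ _ (ENNReal.mul_ne_top ENNReal.coe_ne_top
            (enorm_ne_top (x := u _)))]
        · exact (hu.comp_snd.enorm.const_mul _).mul (by fun_prop)
    _ ≤ ∫⁻ y, (C * K : ℝ≥0) * (‖u y‖ₑ * w y) ∂ν := by
        refine lintegral_mono fun y => (mul_le_mul_right (hww y) _).trans_eq ?_
        push_cast
        ring
    _ = (C * K : ℝ≥0) * ∫⁻ y, ‖u y‖ₑ * w y ∂ν := lintegral_const_mul' _ _ ENNReal.coe_ne_top

lemma lintegral_mul_enorm_convolution_le [ν.IsAddLeftInvariant] {g : V → ℂ}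
    (hg : AEStronglyMeasurable g ν) (hw : Measurable w)
    (hww : ∀ p, ∫⁻ q, w q * w (p - q) ∂ν ≤ K * w p) (hkw : ∀ z, ‖k z‖₊ ≤ κ * w z) :
    ∫⁻ z, w z * ‖∫ q, k q * g (z + q) ∂ν‖ₑ ∂ν ≤ (κ * K : ℝ≥0) * ∫⁻ z, w z * ‖g z‖ₑ ∂ν := by
  calc ∫⁻ z, w z * ‖∫ q, k q * g (z + q) ∂ν‖ₑ ∂ν
      ≤ ∫⁻ z, ∫⁻ q, κ * ‖g q‖ₑ * (w z * w (q - z)) ∂ν ∂ν := by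
        refine lintegral_mono fun z => ?_
        refine (mul_le_mul_right (enorm_integral_le_lintegral_enorm _) _).trans ?_
        rw [← lintegral_add_left_eq_self (fun q => κ * ‖g q‖ₑ * (w z * w (q - z))) z,
          ← lintegral_const_mul' _ _ ENNReal.coe_ne_top]
        refine lintegral_mono fun q => ?_
        rw [add_sub_cancel_left, mul_left_comm _ (w z : ℝ≥0∞), mul_right_comm (κ : ℝ≥0∞), enorm_mul]
        gcongr
        exact ENNReal.coe_le_coe.2 (hkw _)
    _ = ∫⁻ q, κ * ‖g q‖ₑ * ∫⁻ z, w z * w (q - z) ∂ν ∂ν := by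
        rw [lintegral_lintegral_swap]
        · simp_rw [lintegral_const_mul' _ _ (ENNReal.mul_ne_top ENNReal.coe_ne_top
            (enorm_ne_top (x := g _)))]
        · exact (hg.comp_snd.enorm.const_mul _).mul (by fun_prop)
    _ ≤ ∫⁻ q, (κ * K : ℝ≥0) * (w q * ‖g q‖ₑ) ∂ν := by
        refine lintegral_mono fun q => (mul_le_mul_right (hww q) _).trans_eq ?_
        push_cast
        ring
    _ = (κ * K : ℝ≥0) * ∫⁻ q, w q * ‖g q‖ₑ ∂ν := lintegral_const_mul' _ _ ENNReal.coe_ne_top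

lemma ae_eq_zero_of_mul_eq_integral [ν.IsAddLeftInvariant] {g : V → ℂ}
    (hg : AEStronglyMeasurable g ν) (hw : Measurable w) (hw0 : ∀ z, 0 < w z)
    (hww : ∀ p, ∫⁻ q, w q * w (p - q) ∂ν ≤ K * w p) (hkw : ∀ z, ‖k z‖₊ ≤ κ * w z)
    (hgw : ∫⁻ z, w z * ‖g z‖ₑ ∂ν ≠ ∞) (hm : κ * K < ‖m‖₊)
    (h : ∀ z, m * g z = ∫ q, k q * g (z + q) ∂ν) : g =ᵐ[ν] 0 := by
  have hshrink : ‖m‖ₑ * ∫⁻ z, w z * ‖g z‖ₑ ∂ν ≤ (κ * K : ℝ≥0) * ∫⁻ z, w z * ‖g z‖ₑ ∂ν := by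
    rw [← lintegral_const_mul' _ _ enorm_ne_top]
    simp_rw [mul_left_comm ‖m‖ₑ, ← enorm_mul, h]
    exact lintegral_mul_enorm_convolution_le hg hw hww hkw
  have hzero : ∫⁻ z, w z * ‖g z‖ₑ ∂ν = 0 := by
    by_contra hne
    exact hm.not_ge (ENNReal.coe_le_coe.1 ((ENNReal.mul_le_mul_iff_left hne hgw).1 hshrink))
  filter_upwards [(lintegral_eq_zero_iff' ((by fun_prop : AEMeasurable (fun z => (w z : ℝ≥0∞))
    ν).mul hg.enorm)).1 hzero] with z hz
  simpa [(hw0 z).ne'] using hz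

/-- A contraction argument in the `L¹` space with weight `w`, in which convolution with `k` has norm
at most `κ * K < ‖m‖`. -/
theorem integral_mul_eq_zero_of_small_convolution [ν.IsAddLeftInvariant]
    (hu : AEStronglyMeasurable u ν) (hf : Measurable f) (hk : Measurable k) (hw : Measurable w)
    (hw0 : ∀ z, 0 < w z) (hww : ∀ p, ∫⁻ q, w q * w (p - q) ∂ν ≤ K * w p)
    (hkw : ∀ z, ‖k z‖₊ ≤ κ * w z) (hfw : ∀ z, ‖f z‖₊ ≤ C * w z)
    (huw : ∀ z, ∫⁻ y, ‖u y‖ₑ * w (y - z) ∂ν ≠ ∞) (hm : κ * K < ‖m‖₊)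
    (h : ∀ z, ∫ y, u y * (m * f (y - z) - ∫ q, k q * f (y - z - q) ∂ν) ∂ν = 0) :
    ∫ y, u y * f y ∂ν = 0 := by
  have hcorr (z : V) : m * correlation ν u f z = ∫ q, k q * correlation ν u f (z + q) ∂ν :=
    mul_correlation_eq_integral hu hf hk hww hkw hfw huw (h z)
  have hae : correlation ν u f =ᵐ[ν] 0 :=
    ae_eq_zero_of_mul_eq_integral (aestronglyMeasurable_correlation hu hf) hw hw0 hww hkw
      (lintegral_mul_enorm_correlation_ne_top hu hw hww hfw (by simpa using huw 0)) hm hcorr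
  have hzero : m * correlation ν u f 0 = 0 := by
    rw [hcorr 0]
    refine integral_eq_zero_of_ae ?_
    filter_upwards [hae] with q hq
    simp [hq]
  have hm0 : m ≠ 0 := nnnorm_pos.1 (zero_le.trans_lt hm)
  simpa [correlation] using (mul_eq_zero.1 hzero).resolve_left hm0

end Contraction

/-- Convolution with `G` fixes `f`, as happens when the Fourier transform of `G` is `1` on that of
`f`. -/
structure IsReproducedBy {V : Type*} [AddGroup V] [MeasurableSpace V] (ν : Measure V)
    (f G : V → ℂ) : Prop where
  integrable : ∀ z, Integrable (fun q => G (z - q) * f q) ν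
  eq_integral : ∀ z, f z = ∫ q, G (z - q) * f q ∂ν

namespace JumpKernel

section Reproducing

variable {E : Type*} [NormedAddCommGroup E] {J : JumpKernel E} {V : Type*} [AddCommGroup V]
  [MeasurableSpace V] {ν : Measure V} {f G : V → ℂ}

lemma difference_eq_integral (h : IsReproducedBy ν f G) (z v : V) :
    J.difference f z v = ∫ q, J.difference G (z - q) v * f q ∂ν := by
  have hsub (w : V) : Integrable (fun q => G (z - q) * f q - G (w - q) * f q) ν :=
    (h.integrable z).sub (h.integrable w)
  rw [difference, h.eq_integral z, h.eq_integral (z + v), h.eq_integral (z - v),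
    ← integral_sub (h.integrable _) (h.integrable _),
    ← integral_sub (h.integrable _) (h.integrable _), ← integral_const_mul, ← integral_const_mul,
    ← integral_add ((hsub _).const_mul _) ((hsub _).const_mul _)]
  refine integral_congr_ae (.of_forall fun q => ?_)
  simp only [difference]
  rw [sub_add_eq_add_sub, sub_right_comm z q v]
  ring

variable [MeasureSpace E] [SFinite (volume : Measure E)]

instance : SFinite J.measure := by
  unfold measure powerMeasure
  infer_instance

variable [TopologicalSpace V] [IsTopologicalAddGroup V] [BorelSpace V]
  [OpensMeasurableSpace E] [SecondCountableTopology E] {L : E → V} {M : ℝ≥0}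

lemma integrable_prod_difference_mul (hG : Continuous G) (hL : Continuous L) (hf : Integrable f ν)
    (hM : ∀ z, ∫⁻ y, ‖J.difference G z (L y)‖ₑ ∂J.measure ≤ M) (z : V) :
    Integrable (fun p : V × E => J.difference G (z - p.1) (L p.2) * f p.1)
      (ν.prod J.measure) := by
  have hmeas : AEStronglyMeasurable
      (fun p : V × E => J.difference G (z - p.1) (L p.2) * f p.1) (ν.prod J.measure) :=
    ((J.continuous_uncurry_difference hG hL).comp
      (by fun_prop : Continuous fun p : V × E => (z - p.1, p.2))).aestronglyMeasurable.mul
        hf.1.comp_fst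
  refine ⟨hmeas, ?_⟩
  calc ∫⁻ p, ‖J.difference G (z - p.1) (L p.2) * f p.1‖ₑ ∂ν.prod J.measure
      = ∫⁻ q, (∫⁻ y, ‖J.difference G (z - q) (L y)‖ₑ ∂J.measure) * ‖f q‖ₑ ∂ν := by
        simp_rw [lintegral_prod _ hmeas.enorm, enorm_mul,
          lintegral_mul_const' _ _ (enorm_ne_top (x := f _))]
    _ ≤ ∫⁻ q, M * ‖f q‖ₑ ∂ν := lintegral_mono fun q => by gcongr; exact hM _
    _ = M * ∫⁻ q, ‖f q‖ₑ ∂ν := lintegral_const_mul' _ _ ENNReal.coe_ne_top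
    _ < ∞ := ENNReal.mul_lt_top ENNReal.coe_lt_top hf.2

lemma integrable_operator_mul (hG : Continuous G) (hL : Continuous L) (hf : Integrable f ν)
    (hM : ∀ z, ∫⁻ y, ‖J.difference G z (L y)‖ₑ ∂J.measure ≤ M) (z : V) :
    Integrable (fun q => J.operator L G (z - q) * f q) ν := by
  simpa only [operator, integral_mul_const] using
    (integrable_prod_difference_mul hG hL hf hM z).integral_prod_left

variable [SFinite ν]

lemma integrable_difference (h : IsReproducedBy ν f G) (hG : Continuous G) (hL : Continuous L)
    (hf : Integrable f ν) (hM : ∀ z, ∫⁻ y, ‖J.difference G z (L y)‖ₑ ∂J.measure ≤ M) (z : V) :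
    Integrable (fun y => J.difference f z (L y)) J.measure := by
  simp_rw [difference_eq_integral h]
  exact (integrable_prod_difference_mul hG hL hf hM z).integral_prod_right

lemma operator_eq_integral (h : IsReproducedBy ν f G) (hG : Continuous G) (hL : Continuous L)
    (hf : Integrable f ν) (hM : ∀ z, ∫⁻ y, ‖J.difference G z (L y)‖ₑ ∂J.measure ≤ M) (z : V) :
    J.operator L f z = ∫ q, J.operator L G (z - q) * f q ∂ν := by
  rw [operator]
  simp_rw [difference_eq_integral h, operator, ← integral_mul_const]
  exact (integral_integral_swap (integrable_prod_difference_mul hG hL hf hM z)).symm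

end Reproducing

end JumpKernel

lemma exists_mul_rpow_lt {ε : ℝ} (hε : 0 < ε) {m : ℝ≥0} (hm : 0 < m) (C : ℝ≥0) :
    ∃ δ : ℝ≥0, 0 < δ ∧ δ ≤ 1 ∧ C * δ ^ ε < m := by
  have hlim : Filter.Tendsto (fun δ : ℝ≥0 => C * δ ^ ε) (𝓝[>] 0) (𝓝 (C * 0 ^ ε)) :=
    ((NNReal.continuousAt_rpow_const (.inr hε.le)).tendsto.const_mul _).mono_left nhdsWithin_le_nhds
  rw [NNReal.zero_rpow hε.ne', mul_zero] at hlim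
  obtain ⟨δ, hlt, hδ⟩ :=
    ((hlim.eventually_lt_const hm).and (Ioc_mem_nhdsGT one_pos)).exists
  exact ⟨δ, hδ.1, hδ.2, hlt⟩

section Product

variable {E F : Type*} [NormedAddCommGroup E] [NormedAddCommGroup F]

/-- The tensor product `(x, t) ↦ A x * B t`. -/
def tensor (A : E → ℂ) (B : F → ℂ) (p : E × F) : ℂ :=
  A p.1 * B p.2

lemma continuous_tensor {A : E → ℂ} {B : F → ℂ} (hA : Continuous A) (hB : Continuous B) :
    Continuous (tensor A B) := by
  unfold tensor
  fun_prop

section Weight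

variable [NormedSpace ℝ E] {a b : ℝ} {δ : ℝ≥0}

variable [NormedSpace ℝ F]

/-- The product of the weights of exponents `a` and `b` on the two factors, dilated by `δ`. -/
noncomputable def productWeight (a b : ℝ) (δ : ℝ≥0) (p : E × F) : ℝ≥0 :=
  decayWeight a (δ • p.1) * decayWeight b (δ • p.2)

lemma productWeight_pos (a b : ℝ) (δ : ℝ≥0) (p : E × F) : 0 < productWeight a b δ p :=
  mul_pos (decayWeight_pos _ _) (decayWeight_pos _ _)

lemma continuous_productWeight (a b : ℝ) (δ : ℝ≥0) :
    Continuous (productWeight a b δ : E × F → ℝ≥0) := by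
  unfold productWeight
  fun_prop

lemma nnnorm_smul_le_of_le_one (hδ1 : δ ≤ 1) (x : E) : ‖δ • x‖₊ ≤ ‖x‖₊ := by
  rw [NNReal.smul_def, nnnorm_smul, NNReal.nnnorm_eq]
  exact mul_le_of_le_one_left zero_le hδ1

lemma exists_nnnorm_le_productWeight (f : 𝓢(E × F, ℂ)) (ha : 0 ≤ a) (hb : 0 ≤ b) (hδ1 : δ ≤ 1) :
    ∃ C : ℝ≥0, ∀ p, ‖f p‖₊ ≤ C * productWeight a b δ p := by
  obtain ⟨C, hC⟩ := exists_nnnorm_le_decayWeight f (a + b)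
  refine ⟨C, fun p => (hC p).trans (mul_le_mul_right ?_ C)⟩
  rw [decayWeight_add]
  exact mul_le_mul' (decayWeight_anti ha ((nnnorm_smul_le_of_le_one hδ1 _).trans (norm_fst_le p)))
    (decayWeight_anti hb ((nnnorm_smul_le_of_le_one hδ1 _).trans (norm_snd_le p)))

lemma exists_decayWeight_smul_sub_le (ha : 0 ≤ a) (hδ : 0 < δ) (hδ1 : δ ≤ 1) (z : E) :
    ∃ C : ℝ≥0, ∀ x, decayWeight a (δ • (x - z)) ≤ C * (1 + ‖x‖₊ ^ a)⁻¹ := by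
  refine ⟨((1 + ‖z‖₊) / δ) ^ a * 2, fun x => ?_⟩
  have hnorm : 1 + ‖x‖₊ ≤ (1 + ‖z‖₊) / δ * (1 + ‖δ • (x - z)‖₊) := by
    have htri : ‖x‖₊ ≤ ‖x - z‖₊ + ‖z‖₊ := by simpa using nnnorm_add_le (x - z) z
    rw [NNReal.smul_def, nnnorm_smul, NNReal.nnnorm_eq, div_mul_eq_mul_div, le_div_iff₀ hδ]
    calc (1 + ‖x‖₊) * δ ≤ (1 + (‖x - z‖₊ + ‖z‖₊)) * δ := by gcongr
      _ = (1 + ‖z‖₊) * δ + 1 * (δ * ‖x - z‖₊) := by ring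
      _ ≤ (1 + ‖z‖₊) * 1 + (1 + ‖z‖₊) * (δ * ‖x - z‖₊) := by gcongr; exact le_self_add
      _ = _ := by ring
  have hpow : decayWeight a x ≤ 2 * (1 + ‖x‖₊ ^ a)⁻¹ := by
    have hx : ‖x‖₊ ^ a ≤ (1 + ‖x‖₊) ^ a := NNReal.rpow_le_rpow le_add_self ha
    rw [decayWeight, NNReal.rpow_neg, ← div_eq_mul_inv, le_div_iff₀ (by positivity),
      inv_mul_le_iff₀ (by positivity), mul_two]
    exact add_le_add (NNReal.one_le_rpow le_self_add ha) hx
  calc decayWeight a (δ • (x - z)) ≤ ((1 + ‖z‖₊) / δ) ^ a * decayWeight a x :=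
        decayWeight_le_of_nnnorm_le ha (by positivity) hnorm
    _ ≤ ((1 + ‖z‖₊) / δ) ^ a * (2 * (1 + ‖x‖₊ ^ a)⁻¹) := by gcongr
    _ = _ := by ring

lemma lintegral_enorm_mul_productWeight_ne_top [MeasureSpace (E × F)] {u : E × F → ℂ} (ha : 0 ≤ a)
    (hb : 0 ≤ b) (hδ : 0 < δ) (hδ1 : δ ≤ 1)
    (hu : ∫⁻ p, ‖u p‖ₑ * ((1 + ‖p.1‖₊ ^ a)⁻¹ * (1 + ‖p.2‖₊ ^ b)⁻¹ : ℝ≥0) ≠ ∞) (z : E × F) :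
    ∫⁻ y, ‖u y‖ₑ * productWeight a b δ (y - z) ≠ ∞ := by
  obtain ⟨C₁, hC₁⟩ := exists_decayWeight_smul_sub_le ha hδ hδ1 z.1
  obtain ⟨C₂, hC₂⟩ := exists_decayWeight_smul_sub_le hb hδ hδ1 z.2
  refine ((?_ : _ ≤ _).trans_lt
    (ENNReal.mul_lt_top (ENNReal.coe_lt_top (r := C₁ * C₂)) hu.lt_top)).ne
  rw [← lintegral_const_mul' _ _ ENNReal.coe_ne_top]
  refine lintegral_mono fun y => ?_
  rw [mul_left_comm, ← ENNReal.coe_mul, mul_mul_mul_comm]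
  exact mul_le_mul_right (ENNReal.coe_le_coe.2 (mul_le_mul' (hC₁ _) (hC₂ _))) _

section Convolution

variable [FiniteDimensional ℝ E] [MeasureSpace E] [BorelSpace E]
  [(volume : Measure E).IsAddHaarMeasure]

lemma exists_lintegral_decayWeight_smul_mul_le (ha : dim E < a) :
    ∃ K : ℝ≥0, ∀ δ : ℝ≥0, 0 < δ → ∀ p : E,
      ∫⁻ q, decayWeight a (δ • q) * decayWeight a (δ • (p - q)) ≤
        (K * δ ^ (-(dim E : ℝ)) * decayWeight a (δ • p) : ℝ≥0) := by
  have hw := lintegral_decayWeight_ne_top (μ := (volume : Measure E)) ha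
  refine ⟨2 ^ (a + 1) * (∫⁻ q : E, decayWeight a q).toNNReal, fun δ hδ p => ?_⟩
  simp_rw [smul_sub]
  rw [lintegral_comp_smul_eq hδ (fun q => decayWeight a q * decayWeight a (δ • p - q))]
  refine (mul_le_mul_right
    (lintegral_decayWeight_mul_le ((Nat.cast_nonneg _).trans ha.le) _) _).trans_eq ?_
  simp only [ENNReal.coe_mul]
  rw [ENNReal.coe_toNNReal hw, ← ENNReal.coe_ofNat, ENNReal.coe_rpow_of_ne_zero two_ne_zero]
  ring

variable [FiniteDimensional ℝ F] [MeasureSpace F] [BorelSpace F]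
  [(volume : Measure F).IsAddHaarMeasure]

lemma exists_lintegral_productWeight_mul_le (ha : dim E < a) (hb : dim F < b) :
    ∃ K : ℝ≥0, ∀ δ : ℝ≥0, 0 < δ → ∀ p : E × F,
      ∫⁻ q, productWeight a b δ q * productWeight a b δ (p - q) ≤
        (K * δ ^ (-(dim E + dim F : ℝ)) : ℝ≥0) * productWeight a b δ p := by
  obtain ⟨K₁, hK₁⟩ := exists_lintegral_decayWeight_smul_mul_le (E := E) ha
  obtain ⟨K₂, hK₂⟩ := exists_lintegral_decayWeight_smul_mul_le (E := F) hb
  refine ⟨K₁ * K₂, fun δ hδ p => ?_⟩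
  calc ∫⁻ q, productWeight a b δ q * productWeight a b δ (p - q)
      = (∫⁻ x, decayWeight a (δ • x) * decayWeight a (δ • (p.1 - x))) *
          ∫⁻ t, decayWeight b (δ • t) * decayWeight b (δ • (p.2 - t)) := by
        rw [← lintegral_prod_mul (by fun_prop) (by fun_prop), Measure.volume_eq_prod]
        refine lintegral_congr fun q => ?_
        simp only [productWeight, Prod.fst_sub, Prod.snd_sub]
        push_cast
        ring
    _ ≤ (K₁ * δ ^ (-(dim E : ℝ)) * decayWeight a (δ • p.1) : ℝ≥0) *
          (K₂ * δ ^ (-(dim F : ℝ)) * decayWeight b (δ • p.2) : ℝ≥0) :=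
        mul_le_mul' (hK₁ δ hδ _) (hK₂ δ hδ _)
    _ = _ := by
        rw [neg_add, NNReal.rpow_add hδ.ne', productWeight]
        push_cast
        ring

end Convolution

end Weight

namespace JumpKernel

open Complex

section TensorOperator

variable {J₁ : JumpKernel E} {J₂ : JumpKernel F} {A : E → ℂ} {B : F → ℂ}
  {M N : ℝ≥0}

lemma difference_tensor_left (z : E × F) (y : E) :
    J₁.difference (tensor A B) z (y, 0) = J₁.difference A z.1 y * B z.2 := by
  simp only [difference, tensor, Prod.fst_add, Prod.snd_add, Prod.fst_sub, Prod.snd_sub, add_zero,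
    sub_zero]
  ring

lemma difference_tensor_right (z : E × F) (y : F) :
    J₂.difference (tensor A B) z (0, y) = J₂.difference B z.2 y * A z.1 := by
  simp only [difference, tensor, Prod.fst_add, Prod.snd_add, Prod.fst_sub, Prod.snd_sub, add_zero,
    sub_zero]
  ring

variable [MeasureSpace F] in
lemma lintegral_difference_tensor_right_le
    (hM : ∀ t, ∫⁻ y, ‖J₂.difference B t y‖ₑ ∂J₂.measure ≤ M) (hN : ∀ x, ‖A x‖₊ ≤ N) (z : E × F) :
    ∫⁻ y, ‖J₂.difference (tensor A B) z (0, y)‖ₑ ∂J₂.measure ≤ (M * N : ℝ≥0) := by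
  simp_rw [difference_tensor_right, enorm_mul, lintegral_mul_const' _ _ (enorm_ne_top (x := A _)),
    ENNReal.coe_mul]
  exact mul_le_mul' (hM _) (ENNReal.coe_le_coe.2 (hN _))

variable [MeasureSpace E]

lemma lintegral_difference_tensor_left_le
    (hM : ∀ x, ∫⁻ y, ‖J₁.difference A x y‖ₑ ∂J₁.measure ≤ M) (hN : ∀ t, ‖B t‖₊ ≤ N) (z : E × F) :
    ∫⁻ y, ‖J₁.difference (tensor A B) z (y, 0)‖ₑ ∂J₁.measure ≤ (M * N : ℝ≥0) := by
  simp_rw [difference_tensor_left, enorm_mul, lintegral_mul_const' _ _ (enorm_ne_top (x := B _)),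
    ENNReal.coe_mul]
  exact mul_le_mul' (hM _) (ENNReal.coe_le_coe.2 (hN _))

lemma measurable_operator_id [BorelSpace E] [SecondCountableTopology E]
    [SFinite (volume : Measure E)] (hA : Continuous A) : Measurable (J₁.operator id A) :=
  (J₁.continuous_uncurry_difference hA continuous_id).stronglyMeasurable
    |>.integral_prod_right.measurable

variable [MeasureSpace F]

variable (J₁ J₂) in
/-- The sum of the jump operators `J₁` in the first variable and `J₂` in the second. -/
noncomputable def productOperator (f : E × F → ℂ) (z : E × F) : ℂ :=
  J₁.operator (fun y => (y, 0)) f z + J₂.operator (fun y => (0, y)) f z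

lemma productOperator_tensor (z : E × F) :
    productOperator J₁ J₂ (tensor A B) z =
      J₁.operator id A z.1 * B z.2 + J₂.operator id B z.2 * A z.1 := by
  simp only [productOperator, operator, difference_tensor_left, difference_tensor_right,
    integral_mul_const, id]

end TensorOperator

section Localization

variable [InnerProductSpace ℝ E] [InnerProductSpace ℝ F]

/-- The kernel on `E × F` whose Fourier transform is concentrated, at scale `δ`, about
`(-ξ, -η)`. -/
noncomputable def localizer (g : E → ℂ) (h : F → ℂ) (ξ : E) (η : F) (δ : ℝ≥0) : E × F → ℂ :=
  tensor (modulatedDilation g ξ δ) (modulatedDilation h η δ)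

lemma continuous_localizer {g : E → ℂ} {h : F → ℂ} (hg : Continuous g) (hh : Continuous h) (ξ : E)
    (η : F) (δ : ℝ≥0) : Continuous (localizer g h ξ η δ) :=
  continuous_tensor (continuous_modulatedDilation hg ξ δ) (continuous_modulatedDilation hh η δ)

lemma exists_nnnorm_modulatedDilation_le (g : 𝓢(E, ℂ)) (ξ : E) (a : ℝ) :
    ∃ C : ℝ≥0, ∀ (δ : ℝ≥0) (x : E),
      ‖modulatedDilation g ξ δ x‖₊ ≤ C * δ ^ (dim E : ℝ) * decayWeight a (δ • x) := by
  obtain ⟨C, hC⟩ := exists_nnnorm_le_decayWeight g a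
  refine ⟨C, fun δ x => ?_⟩
  rw [nnnorm_modulatedDilation, NNReal.rpow_natCast, mul_comm C, mul_assoc]
  exact mul_le_mul_right (hC _) _

variable {J₁ : JumpKernel E} {J₂ : JumpKernel F}
  {g : 𝓢(E, ℂ)} {h : 𝓢(F, ℂ)} {ξ : E} {η : F} {δ : ℝ≥0}

variable [MeasureSpace F] in
lemma exists_lintegral_difference_localizer_right_le (h₂ : J₂.HasAsymptoticSymbol h η)
    (hb : 0 ≤ J₂.exponent) (hδ : 0 < δ) (hδ1 : δ ≤ 1) :
    ∃ M : ℝ≥0, ∀ z : E × F,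
      ∫⁻ y, ‖J₂.difference (localizer g h ξ η δ) z (0, y)‖ₑ ∂J₂.measure ≤ M := by
  obtain ⟨M, hM⟩ := h₂.exists_lintegral_difference_le hb hδ hδ1
    h.toBoundedContinuousFunction.nnnorm_coe_le_nnnorm
  exact ⟨_, lintegral_difference_tensor_right_le hM
    fun x => (nnnorm_modulatedDilation g ξ δ x).trans_le
      (mul_le_mul_right (g.toBoundedContinuousFunction.nnnorm_coe_le_nnnorm _) _)⟩

variable [MeasureSpace E]

lemma exists_lintegral_difference_localizer_left_le (h₁ : J₁.HasAsymptoticSymbol g ξ)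
    (ha : 0 ≤ J₁.exponent) (hδ : 0 < δ) (hδ1 : δ ≤ 1) :
    ∃ M : ℝ≥0, ∀ z : E × F,
      ∫⁻ y, ‖J₁.difference (localizer g h ξ η δ) z (y, 0)‖ₑ ∂J₁.measure ≤ M := by
  obtain ⟨M, hM⟩ := h₁.exists_lintegral_difference_le ha hδ hδ1
    g.toBoundedContinuousFunction.nnnorm_coe_le_nnnorm
  exact ⟨_, lintegral_difference_tensor_left_le hM
    fun t => (nnnorm_modulatedDilation h η δ t).trans_le
      (mul_le_mul_right (h.toBoundedContinuousFunction.nnnorm_coe_le_nnnorm _) _)⟩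

variable [MeasureSpace F]

variable (J₁ J₂ g h ξ η) in
/-- The kernel by which `productOperator J₁ J₂` differs from multiplication by its symbol at
`(-ξ, -η)` on the functions reproduced by the localizer. -/
noncomputable def errorKernel (δ : ℝ≥0) (z : E × F) : ℂ :=
  (J₁.symbol ξ + J₂.symbol η) * localizer g h ξ η δ z -
    productOperator J₁ J₂ (localizer g h ξ η δ) z

lemma errorKernel_eq (δ : ℝ≥0) (z : E × F) :
    errorKernel J₁ J₂ g h ξ η δ z =
      (J₁.symbol ξ * modulatedDilation g ξ δ z.1 - J₁.operator id (modulatedDilation g ξ δ) z.1) *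
          modulatedDilation h η δ z.2 +
        modulatedDilation g ξ δ z.1 *
          (J₂.symbol η * modulatedDilation h η δ z.2 -
            J₂.operator id (modulatedDilation h η δ) z.2) := by
  rw [errorKernel, localizer, productOperator_tensor, tensor]
  ring

variable [FiniteDimensional ℝ E] [FiniteDimensional ℝ F] [BorelSpace E] [BorelSpace F]

lemma exists_nnnorm_errorKernel_le (h₁ : J₁.HasAsymptoticSymbol g ξ)
    (h₂ : J₂.HasAsymptoticSymbol h η) (ha : 0 ≤ J₁.exponent) (hb : 0 ≤ J₂.exponent) :
    ∃ (C : ℝ≥0) (ε : ℝ), 0 < ε ∧ ∀ δ : ℝ≥0, 0 < δ → δ ≤ 1 → ∀ z,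
      ‖errorKernel J₁ J₂ g h ξ η δ z‖₊ ≤
        C * δ ^ (dim E + dim F + ε) * productWeight J₁.exponent J₂.exponent δ z := by
  obtain ⟨C₁, ε₁, hε₁, hC₁⟩ := h₁.exists_nnnorm_symbol_mul_sub_operator_le ha g.continuous
    (g.toBoundedContinuousFunction.nnnorm_coe_le_nnnorm)
  obtain ⟨C₂, ε₂, hε₂, hC₂⟩ := h₂.exists_nnnorm_symbol_mul_sub_operator_le hb h.continuous
    (h.toBoundedContinuousFunction.nnnorm_coe_le_nnnorm)
  obtain ⟨A, hA⟩ := exists_nnnorm_modulatedDilation_le g ξ J₁.exponent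
  obtain ⟨B, hB⟩ := exists_nnnorm_modulatedDilation_le h η J₂.exponent
  refine ⟨C₁ * B + A * C₂, min ε₁ ε₂, lt_min hε₁ hε₂, fun δ hδ hδ1 z => ?_⟩
  have hpow₁ : δ ^ (dim E + ε₁) * δ ^ (dim F : ℝ) ≤ δ ^ (dim E + dim F + min ε₁ ε₂) := by
    rw [← NNReal.rpow_add hδ.ne', add_right_comm]
    exact NNReal.rpow_le_rpow_of_exponent_ge hδ hδ1 (by gcongr; exact min_le_left _ _)
  have hpow₂ : δ ^ (dim E : ℝ) * δ ^ (dim F + ε₂) ≤ δ ^ (dim E + dim F + min ε₁ ε₂) := by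
    rw [← NNReal.rpow_add hδ.ne', ← add_assoc]
    exact NNReal.rpow_le_rpow_of_exponent_ge hδ hδ1 (by gcongr; exact min_le_right _ _)
  set w₁ := decayWeight J₁.exponent (δ • z.1)
  set w₂ := decayWeight J₂.exponent (δ • z.2)
  calc ‖errorKernel J₁ J₂ g h ξ η δ z‖₊
      ≤ (C₁ * δ ^ (dim E + ε₁) * w₁) * (B * δ ^ (dim F : ℝ) * w₂) +
          (A * δ ^ (dim E : ℝ) * w₁) * (C₂ * δ ^ (dim F + ε₂) * w₂) := by
        rw [errorKernel_eq]
        refine (nnnorm_add_le _ _).trans ?_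
        rw [nnnorm_mul, nnnorm_mul]
        exact add_le_add (mul_le_mul' (hC₁ δ hδ hδ1 _) (hB δ _))
          (mul_le_mul' (hA δ _) (hC₂ δ hδ hδ1 _))
    _ = (C₁ * B * (δ ^ (dim E + ε₁) * δ ^ (dim F : ℝ)) +
          A * C₂ * (δ ^ (dim E : ℝ) * δ ^ (dim F + ε₂))) * (w₁ * w₂) := by ring
    _ ≤ (C₁ * B * δ ^ (dim E + dim F + min ε₁ ε₂) +
          A * C₂ * δ ^ (dim E + dim F + min ε₁ ε₂)) * (w₁ * w₂) := by gcongr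
    _ = _ := by rw [productWeight]; ring

variable [(volume : Measure E).IsAddHaarMeasure] [(volume : Measure F).IsAddHaarMeasure]
  {f : E × F → ℂ}

instance isAddHaarMeasure_volume_prod : (volume : Measure (E × F)).IsAddHaarMeasure :=
  inferInstanceAs ((volume : Measure E).prod volume).IsAddHaarMeasure

lemma measurable_errorKernel : Measurable (errorKernel J₁ J₂ g h ξ η δ) := by
  have hA := continuous_modulatedDilation g.continuous ξ δ
  have hB := continuous_modulatedDilation h.continuous η δ
  have hTA : Measurable (J₁.operator id (modulatedDilation g ξ δ)) := measurable_operator_id hA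
  have hTB : Measurable (J₂.operator id (modulatedDilation h η δ)) := measurable_operator_id hB
  simp_rw [funext (errorKernel_eq (J₁ := J₁) (J₂ := J₂) (g := g) (h := h) (ξ := ξ) (η := η) δ)]
  fun_prop

lemma integrable_difference_left (h₁ : J₁.HasAsymptoticSymbol g ξ) (ha : 0 ≤ J₁.exponent)
    (hδ : 0 < δ) (hδ1 : δ ≤ 1) (hf : Integrable f)
    (hfG : IsReproducedBy volume f (localizer g h ξ η δ)) (z : E × F) :
    Integrable (fun y => J₁.difference f z (y, 0)) J₁.measure := by
  obtain ⟨M, hM⟩ := exists_lintegral_difference_localizer_left_le (h := h) (η := η) h₁ ha hδ hδ1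
  exact integrable_difference hfG (continuous_localizer g.continuous h.continuous ξ η δ)
    (by fun_prop) hf hM z

lemma integrable_difference_right (h₂ : J₂.HasAsymptoticSymbol h η) (hb : 0 ≤ J₂.exponent)
    (hδ : 0 < δ) (hδ1 : δ ≤ 1) (hf : Integrable f)
    (hfG : IsReproducedBy volume f (localizer g h ξ η δ)) (z : E × F) :
    Integrable (fun y => J₂.difference f z (0, y)) J₂.measure := by
  obtain ⟨M, hM⟩ := exists_lintegral_difference_localizer_right_le (g := g) (ξ := ξ) h₂ hb hδ hδ1
  exact integrable_difference hfG (continuous_localizer g.continuous h.continuous ξ η δ)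
    (by fun_prop) hf hM z

lemma productOperator_eq_mul_sub_integral (h₁ : J₁.HasAsymptoticSymbol g ξ)
    (h₂ : J₂.HasAsymptoticSymbol h η) (ha : 0 ≤ J₁.exponent) (hb : 0 ≤ J₂.exponent)
    (hδ : 0 < δ) (hδ1 : δ ≤ 1) (hf : Integrable f)
    (hfG : IsReproducedBy volume f (localizer g h ξ η δ)) (z : E × F) :
    productOperator J₁ J₂ f z =
      (J₁.symbol ξ + J₂.symbol η) * f z - ∫ q, errorKernel J₁ J₂ g h ξ η δ q * f (z - q) := by
  obtain ⟨M₁, hM₁⟩ := exists_lintegral_difference_localizer_left_le (h := h) (η := η) h₁ ha hδ hδ1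
  obtain ⟨M₂, hM₂⟩ := exists_lintegral_difference_localizer_right_le (g := g) (ξ := ξ) h₂ hb hδ hδ1
  have hG := continuous_localizer g.continuous h.continuous ξ η δ
  have hL₁ : Continuous fun y : E => (y, (0 : F)) := by fun_prop
  have hL₂ : Continuous fun y : F => ((0 : E), y) := by fun_prop
  have hint₁ := integrable_operator_mul hG hL₁ hf hM₁ z
  have hint₂ := integrable_operator_mul hG hL₂ hf hM₂ z
  calc productOperator J₁ J₂ f z
      = ∫ q, productOperator J₁ J₂ (localizer g h ξ η δ) (z - q) * f q := by
        rw [productOperator, operator_eq_integral hfG hG hL₁ hf hM₁,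
          operator_eq_integral hfG hG hL₂ hf hM₂, ← integral_add hint₁ hint₂]
        simp_rw [← add_mul, productOperator]
    _ = (J₁.symbol ξ + J₂.symbol η) * (∫ q, localizer g h ξ η δ (z - q) * f q) -
          ∫ q, errorKernel J₁ J₂ g h ξ η δ (z - q) * f q := by
        rw [← integral_const_mul, ← integral_sub ((hfG.integrable z).const_mul _)]
        · exact integral_congr_ae (.of_forall fun q => by simp only [errorKernel]; ring)
        · refine (((hfG.integrable z).const_mul (J₁.symbol ξ + J₂.symbol η)).sub
            (hint₁.add hint₂)).congr (.of_forall fun q => ?_)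
          simp only [errorKernel, productOperator, Pi.sub_apply, Pi.add_apply]
          ring
    _ = _ := by
        rw [← hfG.eq_integral z,
          ← integral_sub_left_eq_self (fun q => errorKernel J₁ J₂ g h ξ η δ q * f (z - q)) _ z]
        simp_rw [sub_sub_cancel]

theorem exists_scale_integral_mul_eq_zero (h₁ : J₁.HasAsymptoticSymbol g ξ)
    (h₂ : J₂.HasAsymptoticSymbol h η) (ha : dim E < J₁.exponent) (hb : dim F < J₂.exponent)
    (hσ : J₁.symbol ξ + J₂.symbol η ≠ 0) {u : E × F → ℂ} (hu : AEStronglyMeasurable u)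
    (huw : ∫⁻ p, ‖u p‖ₑ * ((1 + ‖p.1‖₊ ^ J₁.exponent)⁻¹ * (1 + ‖p.2‖₊ ^ J₂.exponent)⁻¹ : ℝ≥0) ≠ ∞) :
    ∃ δ : ℝ≥0, 0 < δ ∧ δ ≤ 1 ∧ ∀ f : 𝓢(E × F, ℂ),
      IsReproducedBy volume f (localizer g h ξ η δ) →
        (∀ z, Integrable fun y => u y * productOperator J₁ J₂ f (y - z)) ∧
          ((∀ z, ∫ y, u y * productOperator J₁ J₂ f (y - z) = 0) → ∫ y, u y * f y = 0) := by
  have ha0 : 0 ≤ J₁.exponent := (Nat.cast_nonneg _).trans ha.le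
  have hb0 : 0 ≤ J₂.exponent := (Nat.cast_nonneg _).trans hb.le
  obtain ⟨C, ε, hε, hC⟩ := exists_nnnorm_errorKernel_le h₁ h₂ ha0 hb0
  obtain ⟨K, hK⟩ := exists_lintegral_productWeight_mul_le (E := E) (F := F) ha hb
  obtain ⟨δ, hδ, hδ1, hsmall⟩ := exists_mul_rpow_lt hε (nnnorm_pos.2 hσ) (C * K)
  refine ⟨δ, hδ, hδ1, fun f hfG => ?_⟩
  obtain ⟨D, hD⟩ := exists_nnnorm_le_productWeight f ha0 hb0 hδ1
  have hu_int := lintegral_enorm_mul_productWeight_ne_top ha0 hb0 hδ hδ1 huw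
  have hf := f.continuous.measurable
  have hk : Measurable (errorKernel J₁ J₂ g h ξ η δ) := measurable_errorKernel
  have hw := (continuous_productWeight (E := E) (F := F) J₁.exponent J₂.exponent δ).measurable
  have hT := productOperator_eq_mul_sub_integral h₁ h₂ ha0 hb0 hδ hδ1 f.integrable hfG
  have hm : C * δ ^ (dim E + dim F + ε) * (K * δ ^ (-(dim E + dim F : ℝ))) <
      ‖J₁.symbol ξ + J₂.symbol η‖₊ := by
    rwa [mul_mul_mul_comm, ← NNReal.rpow_add hδ.ne', add_neg_cancel_comm]
  simp_rw [hT]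
  refine ⟨fun z => ?_, integral_mul_eq_zero_of_small_convolution hu hf hk hw
    (productWeight_pos _ _ _) (hK δ hδ) (hC δ hδ hδ1) hD hu_int hm⟩
  simp_rw [mul_sub, mul_left_comm (u _)]
  exact ((integrable_mul_comp_sub hu hf hD hu_int z).const_mul _).sub
    (integrable_mul_convolution hu hf hk (hK δ hδ) (hC δ hδ hδ1) hD hu_int z)

end Localization

end JumpKernel

end Product

section Reproduction

namespace IsReproducedBy

open Complex

lemma tensor {E F : Type*} [NormedAddCommGroup E] [NormedAddCommGroup F] [MeasurableSpace E]
    [MeasurableSpace F] {μ : Measure E} {ν : Measure F} [SFinite μ] [SFinite ν] {f A : E → ℂ}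
    {g B : F → ℂ} (hf : IsReproducedBy μ f A) (hg : IsReproducedBy ν g B) :
    IsReproducedBy (μ.prod ν) (tensor f g) (tensor A B) where
  integrable z := by
    simpa only [_root_.tensor, Prod.fst_sub, Prod.snd_sub, mul_mul_mul_comm] using
      (hf.integrable z.1).mul_prod (hg.integrable z.2)
  eq_integral z := by
    simp only [_root_.tensor, Prod.fst_sub, Prod.snd_sub, mul_mul_mul_comm]
    rw [hf.eq_integral, hg.eq_integral, ← integral_prod_mul]

lemma integral {V P : Type*} [AddGroup V] [MeasurableSpace V] [MeasurableSpace P] {ν : Measure V}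
    {μ : Measure P} [SFinite ν] [SFinite μ] {G : V → ℂ} {c : P → V → ℂ} {ψ : P → ℂ}
    (hG : ∀ z, Integrable (fun q => G (z - q)) ν) (hψ : Integrable ψ μ)
    (hc : StronglyMeasurable fun r : V × P => c r.2 r.1) (hc1 : ∀ p q, ‖c p q‖ ≤ 1)
    (h : ∀ p, ψ p ≠ 0 → IsReproducedBy ν (c p) G) :
    IsReproducedBy ν (fun z => ∫ p, c p z * ψ p ∂μ) G := by
  have hint (z : V) :
      Integrable (fun r : V × P => G (z - r.1) * (c r.2 r.1 * ψ r.2)) (ν.prod μ) := by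
    refine ((hG z).mul_prod hψ).mono
      ((hG z).1.comp_fst.mul (hc.aestronglyMeasurable.mul hψ.1.comp_snd)) (.of_forall fun r => ?_)
    rw [norm_mul, norm_mul, norm_mul]
    gcongr
    exact mul_le_of_le_one_left (norm_nonneg _) (hc1 _ _)
  refine ⟨fun z => ?_, fun z => ?_⟩
  · simpa only [integral_const_mul] using (hint z).integral_prod_left
  calc ∫ p, c p z * ψ p ∂μ = ∫ p, ∫ q, G (z - q) * (c p q * ψ p) ∂ν ∂μ := by
        refine integral_congr_ae (.of_forall fun p => ?_)
        by_cases hp : ψ p = 0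
        · simp only [hp, mul_zero, integral_zero]
        · simp only [← mul_assoc, integral_mul_const, ← (h p hp).eq_integral z]
    _ = ∫ q, ∫ p, G (z - q) * (c p q * ψ p) ∂μ ∂ν := (integral_integral_swap (hint z)).symm
    _ = ∫ q, G (z - q) * ∫ p, c p q * ψ p ∂μ ∂ν := by simp only [integral_const_mul]

end IsReproducedBy

end Reproduction

section FrequencyCutoff

open Complex
open scoped FourierTransform

variable {E : Type*} [NormedAddCommGroup E] [InnerProductSpace ℝ E]

/-- The plane wave `x ↦ e^{-iξ·x}`. -/
noncomputable def planeWave (ξ x : E) : ℂ :=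
  cexp (-(I * (⟪ξ, x⟫ : ℝ)))

lemma norm_planeWave (ξ x : E) : ‖planeWave ξ x‖ = 1 := by
  simpa [planeWave] using norm_exp_I_mul_ofReal (-⟪ξ, x⟫)

lemma planeWave_sub (ξ x y : E) :
    planeWave ξ (x - y) = planeWave ξ x * cexp (I * (⟪ξ, y⟫ : ℝ)) := by
  rw [planeWave, planeWave, ← Complex.exp_add, inner_sub_right]
  push_cast
  ring_nf

lemma modulatedDilation_mul_cexp {δ : ℝ≥0} (hδ : 0 < δ) (g : E → ℂ) (ξ₀ ξ x : E) :
    modulatedDilation g ξ₀ δ x * cexp (I * (⟪ξ, x⟫ : ℝ)) =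
      (δ ^ dim E : ℝ≥0) * (cexp (I * (⟪δ⁻¹ • (ξ - ξ₀), δ • x⟫ : ℝ)) * g (δ • x)) := by
  have hδ' : (δ : ℝ) ≠ 0 := by exact_mod_cast hδ.ne'
  have hinner : (⟪δ⁻¹ • (ξ - ξ₀), δ • x⟫ : ℝ) = ⟪ξ, x⟫ - ⟪ξ₀, x⟫ := by
    rw [NNReal.smul_def, NNReal.smul_def, real_inner_smul_left, real_inner_smul_right,
      NNReal.coe_inv, inv_mul_cancel_left₀ hδ', inner_sub_left]
  rw [hinner, modulatedDilation, ofReal_sub, mul_sub, sub_eq_add_neg, Complex.exp_add]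
  ring

variable [FiniteDimensional ℝ E] [MeasureSpace E] [BorelSpace E]
  [(volume : Measure E).IsAddHaarMeasure]

lemma integral_modulatedDilation_mul_cexp {g : E → ℂ}
    (hg : ∀ η : E, ‖η‖ ≤ 1 → ∫ x, cexp (I * (⟪η, x⟫ : ℝ)) * g x = 1) {δ : ℝ≥0} (hδ : 0 < δ)
    {ξ₀ ξ : E} (hξ : ‖ξ - ξ₀‖ ≤ δ) :
    ∫ x, modulatedDilation g ξ₀ δ x * cexp (I * (⟪ξ, x⟫ : ℝ)) = 1 := by
  have hδ' : (0 : ℝ) < δ := by exact_mod_cast hδ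
  have hη : ‖δ⁻¹ • (ξ - ξ₀)‖ ≤ 1 := by
    rw [NNReal.smul_def, norm_smul, NNReal.coe_inv, norm_inv, Real.norm_of_nonneg hδ'.le,
      inv_mul_le_iff₀ hδ', mul_one]
    exact hξ
  simp_rw [modulatedDilation_mul_cexp hδ, integral_const_mul, NNReal.smul_def δ]
  rw [Measure.integral_comp_smul volume
    (fun x => cexp (I * (⟪δ⁻¹ • (ξ - ξ₀), x⟫ : ℝ)) * g x) δ, hg _ hη,
    abs_of_pos (by positivity), Complex.real_smul, mul_one, ← ofReal_mul, NNReal.coe_pow,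
    mul_inv_cancel₀ (by positivity), ofReal_one]

lemma integrable_modulatedDilation {g : E → ℂ} (hg : Integrable g) (ξ : E) {δ : ℝ≥0} (hδ : 0 < δ) :
    Integrable (modulatedDilation g ξ δ) := by
  have hδ' : (δ : ℝ) ≠ 0 := by exact_mod_cast hδ.ne'
  have hmeas : AEStronglyMeasurable (fun x => cexp (-(I * (⟪ξ, x⟫ : ℝ)))) (volume : Measure E) :=
    Continuous.aestronglyMeasurable (by fun_prop)
  exact ((hg.comp_smul hδ').const_mul _).bdd_mul (c := 1) hmeas
    (.of_forall fun x => (norm_planeWave ξ x).le)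

lemma isReproducedBy_planeWave {g : E → ℂ} (hg : Integrable g)
    (hg1 : ∀ η : E, ‖η‖ ≤ 1 → ∫ x, cexp (I * (⟪η, x⟫ : ℝ)) * g x = 1) {δ : ℝ≥0} (hδ : 0 < δ)
    {ξ₀ ξ : E} (hξ : ‖ξ - ξ₀‖ ≤ δ) :
    IsReproducedBy volume (planeWave ξ) (modulatedDilation g ξ₀ δ) where
  integrable z := by
    refine ((integrable_modulatedDilation hg ξ₀ hδ).comp_sub_left z).mul_bdd (c := 1) ?_
      (.of_forall fun x => (norm_planeWave ξ x).le)
    unfold planeWave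
    exact Continuous.aestronglyMeasurable (by fun_prop)
  eq_integral z := by
    rw [← integral_sub_left_eq_self _ _ z]
    simp_rw [sub_sub_cancel, planeWave_sub, mul_left_comm _ (planeWave ξ z)]
    rw [integral_const_mul, integral_modulatedDilation_mul_cexp hg1 hδ hξ, mul_one]

end FrequencyCutoff

section ProductFourier

open Complex
open scoped FourierTransform

lemma exists_schwartz_integral_cexp_mul_eq_one (E : Type*) [NormedAddCommGroup E]
    [InnerProductSpace ℝ E] [FiniteDimensional ℝ E] [MeasurableSpace E] [BorelSpace E] :
    ∃ g : 𝓢(E, ℂ), ∀ η : E, ‖η‖ ≤ 1 → ∫ x, cexp (I * (⟪η, x⟫ : ℝ)) * g x = 1 := by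
  let β : ContDiffBump (0 : E) := ⟨1, 2, one_pos, one_lt_two⟩
  let φ : 𝓢(E, ℂ) := (β.hasCompactSupport.comp_left (g := ((↑) : ℝ → ℂ)) rfl).toSchwartzMap
    (ofRealCLM.contDiff.comp β.contDiff)
  refine ⟨𝓕 φ, fun η hη => ?_⟩
  let w : E := (2 * Real.pi)⁻¹ • η
  have hpi : (1 : ℝ) ≤ 2 * Real.pi := by linarith [Real.pi_gt_three]
  have hw : β w = 1 := β.one_of_mem_closedBall (by
    rw [mem_closedBall_zero_iff, norm_smul, norm_inv, Real.norm_of_nonneg (by positivity)]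
    exact mul_le_one₀ (inv_le_one_of_one_le₀ hpi) (norm_nonneg _) hη)
  have hinv : 𝓕⁻ (𝓕 φ) w = 1 := by
    rw [FourierTransform.fourierInv_fourier_eq]
    exact congrArg ((↑) : ℝ → ℂ) hw
  rw [SchwartzMap.fourierInv_coe, Real.fourierInv_eq'] at hinv
  rw [← hinv]
  refine integral_congr_ae (.of_forall fun x => ?_)
  simp only [w, inner_smul_right, smul_eq_mul]
  rw [mul_inv_cancel_left₀ (by positivity), real_inner_comm, mul_comm I]

variable {E F : Type*} [NormedAddCommGroup E] [InnerProductSpace ℝ E] [NormedAddCommGroup F]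
  [InnerProductSpace ℝ F] [FiniteDimensional ℝ F]

/-- The Fourier transform `∫ e^{-i(ξ·x + η·t)} ψ(ξ, η) dξ dη` on `E × F`, without normalising
constant. -/
noncomputable def productFourier [MeasureSpace E] [MeasureSpace F] (ψ : E × F → ℂ)
    (z : E × F) : ℂ :=
  ∫ p : E × F, tensor (planeWave p.1) (planeWave p.2) z * ψ p

lemma isReproducedBy_productFourier [FiniteDimensional ℝ E] [MeasureSpace E] [BorelSpace E]
    [(volume : Measure E).IsAddHaarMeasure] [MeasureSpace F] [BorelSpace F]
    [(volume : Measure F).IsAddHaarMeasure] {g : E → ℂ} {h : F → ℂ} (hg : Integrable g)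
    (hg1 : ∀ ξ : E, ‖ξ‖ ≤ 1 → ∫ x, cexp (I * (⟪ξ, x⟫ : ℝ)) * g x = 1) (hh : Integrable h)
    (hh1 : ∀ η : F, ‖η‖ ≤ 1 → ∫ t, cexp (I * (⟪η, t⟫ : ℝ)) * h t = 1) {δ : ℝ≥0} (hδ : 0 < δ)
    {p₀ : E × F} {ψ : E × F → ℂ} (hψ : Integrable ψ)
    (hsupp : ∀ p, ψ p ≠ 0 → ‖p.1 - p₀.1‖ ≤ δ ∧ ‖p.2 - p₀.2‖ ≤ δ) :
    IsReproducedBy volume (productFourier ψ)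
      (tensor (modulatedDilation g p₀.1 δ) (modulatedDilation h p₀.2 δ)) := by
  have hG (z : E × F) : Integrable fun q : E × F =>
      tensor (modulatedDilation g p₀.1 δ) (modulatedDilation h p₀.2 δ) (z - q) :=
    ((integrable_modulatedDilation hg p₀.1 hδ).comp_sub_left z.1).mul_prod
      ((integrable_modulatedDilation hh p₀.2 hδ).comp_sub_left z.2)
  have hc : StronglyMeasurable fun r : (E × F) × E × F =>
      tensor (planeWave r.2.1) (planeWave r.2.2) r.1 := by
    simp only [tensor, planeWave]
    exact Continuous.stronglyMeasurable (by fun_prop)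
  refine .integral (V := E × F) (P := E × F)
    (G := tensor (modulatedDilation g p₀.1 δ) (modulatedDilation h p₀.2 δ))
    (c := fun p => tensor (planeWave p.1) (planeWave p.2)) hG hψ hc
    (fun p q => ?_) fun p hp => ?_
  · rw [tensor, norm_mul, norm_planeWave, norm_planeWave, one_mul]
  · exact (isReproducedBy_planeWave hg hg1 hδ (hsupp p hp).1).tensor
      (isReproducedBy_planeWave hh hh1 hδ (hsupp p hp).2)

lemma productFourier_sum [MeasureSpace E] [BorelSpace E] [MeasureSpace F] [BorelSpace F]
    {ι : Type*} {T : Finset ι} {χ : ι → E × F → ℂ} (hχ : ∀ i ∈ T, Integrable (χ i))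
    (z : E × F) : productFourier (∑ i ∈ T, χ i) z = ∑ i ∈ T, productFourier (χ i) z := by
  simp only [productFourier, Finset.sum_apply, Finset.mul_sum]
  refine integral_finsetSum _ fun i hi => (hχ i hi).bdd_mul (c := 1) ?_ (.of_forall fun p => ?_)
  · simp only [tensor, planeWave]
    exact Continuous.aestronglyMeasurable (by fun_prop)
  · rw [tensor, norm_mul, norm_planeWave, norm_planeWave, one_mul]

lemma exists_schwartz_eq_productFourier [FiniteDimensional ℝ E] [MeasurableSpace E]
    [BorelSpace E] [MeasurableSpace F] [BorelSpace F] {ψ : E × F → ℂ} (hψ : ContDiff ℝ (⊤ : ℕ∞) ψ)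
    (hc : HasCompactSupport ψ) : ∃ f : 𝓢(E × F, ℂ), ⇑f = productFourier ψ := by
  let e : WithLp 2 (E × F) ≃L[ℝ] E × F := WithLp.prodContinuousLinearEquiv 2 ℝ E F
  let φ : 𝓢(WithLp 2 (E × F), ℂ) :=
    SchwartzMap.compCLMOfContinuousLinearEquiv ℝ e (hc.toSchwartzMap hψ)
  have hpi : (2 * Real.pi)⁻¹ ≠ 0 := by positivity
  let d : (E × F) ≃L[ℝ] WithLp 2 (E × F) :=
    (ContinuousLinearEquiv.smulLeft (Units.mk0 _ hpi)).trans e.symm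
  refine ⟨SchwartzMap.compCLMOfContinuousLinearEquiv ℝ d (𝓕 φ), funext fun z => ?_⟩
  rw [SchwartzMap.compCLMOfContinuousLinearEquiv_apply, Function.comp_apply,
    SchwartzMap.fourier_coe, Real.fourier_eq', productFourier,
    ← (WithLp.volume_preserving_ofLp E F).integral_comp
      (MeasurableEquiv.toLp 2 (E × F)).symm.measurableEmbedding]
  refine integral_congr_ae (.of_forall fun w => ?_)
  have hd : d z = WithLp.toLp 2 ((2 * Real.pi)⁻¹ • z) := rfl
  have hφ : φ w = ψ w.ofLp := rfl
  have hscale (r : ℝ) : -2 * Real.pi * ((2 * Real.pi)⁻¹ * r) = -r := by field_simp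
  simp only [hd, hφ, tensor, planeWave, WithLp.prod_inner_apply, Prod.smul_fst, Prod.smul_snd,
    inner_smul_right, smul_eq_mul, ← mul_add, hscale, ← Complex.exp_add]
  push_cast
  ring_nf

end ProductFourier

namespace JumpKernel

section WeakSolution

variable {E F : Type*} [NormedAddCommGroup E] [NormedAddCommGroup F]

lemma difference_comp_sub {V : Type*} [AddCommGroup V] (J : JumpKernel E) (f : V → ℂ) (a z v : V) :
    J.difference (fun w => f (w - a)) z v = J.difference f (z - a) v := by
  simp only [difference, add_sub_right_comm, sub_right_comm _ v a]

variable [MeasureSpace E] [MeasureSpace F]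

lemma productOperator_comp_sub (J₁ : JumpKernel E) (J₂ : JumpKernel F) (f : E × F → ℂ)
    (a z : E × F) :
    productOperator J₁ J₂ (fun w => f (w - a)) z = productOperator J₁ J₂ f (z - a) := by
  simp only [productOperator, operator, difference_comp_sub]

/-- `u` solves `T' u = 0` in the sense of distributions, where `T'` is the transpose of
`T = productOperator J₁ J₂`. Only those test functions `f` are used for which the integrals defining
`T f` and `∫ u * T f` converge absolutely. -/
def IsWeakSolution [NormedSpace ℝ E] [NormedSpace ℝ F] (J₁ : JumpKernel E)
    (J₂ : JumpKernel F) (u : E × F → ℂ) : Prop :=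
  ∀ f : 𝓢(E × F, ℂ), (∀ z, Integrable (fun y => J₁.difference f z (y, 0)) J₁.measure) →
    (∀ z, Integrable (fun y => J₂.difference f z (0, y)) J₂.measure) →
    Integrable (fun y => u y * productOperator J₁ J₂ f y) →
    ∫ y, u y * productOperator J₁ J₂ f y = 0

end WeakSolution

section Admissible

variable {E F : Type*} [NormedAddCommGroup E] [InnerProductSpace ℝ E] [NormedAddCommGroup F]
  [InnerProductSpace ℝ F]

lemma exists_mem_cos_inner_ne_one {s : Set E} (hs : ∀ y, y ≠ 0 → y ∈ s ∨ -y ∈ s) {ξ : E}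
    (hξ : ξ ≠ 0) : ∃ y ∈ s, Real.cos ⟪ξ, y⟫ ≠ 1 := by
  have hξ2 : ‖ξ‖ ^ 2 ≠ 0 := pow_ne_zero 2 (norm_ne_zero_iff.2 hξ)
  have hinner : (⟪ξ, (Real.pi / ‖ξ‖ ^ 2) • ξ⟫ : ℝ) = Real.pi := by
    rw [real_inner_smul_right, real_inner_self_eq_norm_sq, div_mul_cancel₀ _ hξ2]
  have hcos : Real.cos Real.pi ≠ 1 := by norm_num
  rcases hs ((Real.pi / ‖ξ‖ ^ 2) • ξ) (smul_ne_zero (div_ne_zero Real.pi_ne_zero hξ2) hξ)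
    with h | h
  · exact ⟨_, h, by rwa [hinner]⟩
  · exact ⟨_, h, by rwa [inner_neg_right, hinner, Real.cos_neg]⟩

/-- The jump kernels to which the localisation argument applies: their operator is well approximated
by its symbol near each frequency, and the real part of the symbol is positive away from `0`. -/
structure IsAdmissible [MeasureSpace E] (J : JumpKernel E) : Prop where
  dim_lt_exponent : dim E < J.exponent
  hasAsymptoticSymbol : ∀ (g : 𝓢(E, ℂ)) (ξ : E), J.HasAsymptoticSymbol g ξ
  forward_add_backward_pos : 0 < J.forward + J.backward
  mem_or_neg_mem : ∀ y, y ≠ 0 → y ∈ J.region ∨ -y ∈ J.region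

namespace IsAdmissible

variable [MeasureSpace E] {J₁ : JumpKernel E} {J₂ : JumpKernel F}

lemma exponent_nonneg (h : J₁.IsAdmissible) : 0 ≤ J₁.exponent :=
  (Nat.cast_nonneg _).trans h.dim_lt_exponent.le

lemma re_symbol_nonneg (h : J₁.IsAdmissible) (ξ : E) : 0 ≤ (J₁.symbol ξ).re :=
  JumpKernel.re_symbol_nonneg (h.hasAsymptoticSymbol 0 ξ).integrable_phase
    h.forward_add_backward_pos.le

variable [BorelSpace E] [(volume : Measure E).IsAddHaarMeasure]

lemma re_symbol_pos (h : J₁.IsAdmissible) {ξ : E} (hξ : ξ ≠ 0) : 0 < (J₁.symbol ξ).re :=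
  JumpKernel.re_symbol_pos (h.hasAsymptoticSymbol 0 ξ).integrable_phase
    h.forward_add_backward_pos (exists_mem_cos_inner_ne_one h.mem_or_neg_mem hξ)

variable [MeasureSpace F] [BorelSpace F] [(volume : Measure F).IsAddHaarMeasure]

lemma symbol_add_symbol_ne_zero (h₁ : J₁.IsAdmissible) (h₂ : J₂.IsAdmissible) {p : E × F}
    (hp : p ≠ 0) : J₁.symbol p.1 + J₂.symbol p.2 ≠ 0 := by
  suffices 0 < (J₁.symbol p.1 + J₂.symbol p.2).re from
    fun h => this.ne' (by rw [h, Complex.zero_re])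
  rw [Complex.add_re]
  by_cases hξ : p.1 = 0
  · have hη : p.2 ≠ 0 := fun hη => hp (Prod.ext hξ hη)
    exact add_pos_of_nonneg_of_pos (h₁.re_symbol_nonneg _) (h₂.re_symbol_pos hη)
  · exact add_pos_of_pos_of_nonneg (h₁.re_symbol_pos hξ) (h₂.re_symbol_nonneg _)

variable [FiniteDimensional ℝ E] [FiniteDimensional ℝ F]

theorem exists_scale_integral_mul_eq_zero (h₁ : J₁.IsAdmissible) (h₂ : J₂.IsAdmissible)
    {u : E × F → ℂ} (hu : AEStronglyMeasurable u)
    (huw : ∫⁻ p, ‖u p‖ₑ *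
      ((1 + ‖p.1‖₊ ^ J₁.exponent)⁻¹ * (1 + ‖p.2‖₊ ^ J₂.exponent)⁻¹ : ℝ≥0) ≠ ∞)
    (hsol : IsWeakSolution J₁ J₂ u) (g : 𝓢(E, ℂ)) (h : 𝓢(F, ℂ)) {p : E × F} (hp : p ≠ 0) :
    ∃ δ : ℝ≥0, 0 < δ ∧ ∀ f : 𝓢(E × F, ℂ),
      IsReproducedBy volume f (localizer g h p.1 p.2 δ) → ∫ y, u y * f y = 0 := by
  have hg := h₁.hasAsymptoticSymbol g p.1
  have hh := h₂.hasAsymptoticSymbol h p.2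
  obtain ⟨δ, hδ, hδ1, H⟩ := JumpKernel.exists_scale_integral_mul_eq_zero hg hh h₁.dim_lt_exponent
    h₂.dim_lt_exponent (h₁.symbol_add_symbol_ne_zero h₂ hp) hu huw
  refine ⟨δ, hδ, fun f hf => ?_⟩
  obtain ⟨hint, hzero⟩ := H f hf
  have htranslate (z y : E × F) : productOperator J₁ J₂ f (y - z) =
      productOperator J₁ J₂ (f.compSubConstCLM ℂ z) y :=
    (productOperator_comp_sub J₁ J₂ f z y).symm
  have hleft := integrable_difference_left hg h₁.exponent_nonneg hδ hδ1 f.integrable hf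
  have hright := integrable_difference_right hh h₂.exponent_nonneg hδ hδ1 f.integrable hf
  simp_rw [htranslate] at hint hzero
  refine hzero fun z => hsol (f.compSubConstCLM ℂ z) (fun w => ?_) (fun w => ?_) (hint z)
  · exact (hleft (w - z)).congr (.of_forall fun y => (J₁.difference_comp_sub f z w _).symm)
  · exact (hright (w - z)).congr (.of_forall fun y => (J₂.difference_comp_sub f z w _).symm)

end IsAdmissible

end Admissible

end JumpKernel

section FourierSupport

open scoped Manifold

lemma exists_sum_eq_of_tsupport_subset {V ι : Type*} [NormedAddCommGroup V] [NormedSpace ℝ V]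
    [FiniteDimensional ℝ V] {ψ : V → ℂ} (hψ : ContDiff ℝ (⊤ : ℕ∞) ψ) (hc : HasCompactSupport ψ)
    {U : ι → Set V} (hU : ∀ i, IsOpen (U i)) (hcover : tsupport ψ ⊆ ⋃ i, U i) :
    ∃ (T : Finset ι) (χ : T → V → ℂ), ψ = ∑ i, χ i ∧ ∀ i, ContDiff ℝ (⊤ : ℕ∞) (χ i) ∧
      HasCompactSupport (χ i) ∧ Function.support (χ i) ⊆ U i := by
  obtain ⟨T, hT⟩ := hc.isCompact.elim_finite_subcover U hU hcover
  obtain ⟨ρ, hρ⟩ := SmoothPartitionOfUnity.exists_isSubordinate 𝓘(ℝ, V) (isClosed_tsupport ψ)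
    (fun i : T => U i) (fun i => hU i) (by simpa only [iUnion_subtype] using hT)
  refine ⟨T, fun i x => (ρ i x : ℂ) * ψ x, funext fun x => ?_, fun i => ⟨?_, hc.mul_left, ?_⟩⟩
  · rw [Finset.sum_apply, ← Finset.sum_mul, ← Complex.ofReal_sum]
    by_cases hx : ψ x = 0
    · rw [hx, mul_zero]
    · have hone := ρ.sum_eq_one (subset_tsupport ψ hx)
      rw [finsum_eq_sum_of_fintype] at hone
      rw [hone, Complex.ofReal_one, one_mul]
  · exact (Complex.ofRealCLM.contDiff.comp (ρ i).contMDiff.contDiff).mul hψ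
  · refine fun x hx => hρ i (subset_tsupport _ fun h => hx ?_)
    simp only [h, Complex.ofReal_zero, zero_mul]

variable {E F : Type*} [NormedAddCommGroup E] [InnerProductSpace ℝ E] [FiniteDimensional ℝ E]
  [MeasurableSpace E] [BorelSpace E] [NormedAddCommGroup F] [InnerProductSpace ℝ F]
  [FiniteDimensional ℝ F] [MeasurableSpace F] [BorelSpace F] {u : E × F → ℂ}

lemma integral_mul_productFourier_eq_zero_of_locally
    (hu : ∀ f : 𝓢(E × F, ℂ), Integrable fun y => u y * f y) {ψ : E × F → ℂ}
    (hψ : ContDiff ℝ (⊤ : ℕ∞) ψ) (hc : HasCompactSupport ψ)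
    (hlocal : ∀ p ∈ tsupport ψ, ∃ δ > 0, ∀ χ : E × F → ℂ, ContDiff ℝ (⊤ : ℕ∞) χ →
      HasCompactSupport χ → Function.support χ ⊆ Metric.ball p δ →
        ∫ y, u y * productFourier χ y = 0) :
    ∫ y, u y * productFourier ψ y = 0 := by
  choose! δ hδ hzero using hlocal
  obtain ⟨T, χ, hsum, hχ⟩ := exists_sum_eq_of_tsupport_subset hψ hc
    (U := fun p : tsupport ψ => Metric.ball p.1 (δ p)) (fun _ => Metric.isOpen_ball)
    fun p hp => mem_iUnion.2 ⟨⟨p, hp⟩, Metric.mem_ball_self (hδ p hp)⟩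
  have hint (i) : Integrable fun y => u y * productFourier (χ i) y := by
    obtain ⟨f, hf⟩ := exists_schwartz_eq_productFourier (hχ i).1 (hχ i).2.1
    exact hf ▸ hu f
  have hχi (i) : Integrable (χ i) := (hχ i).1.continuous.integrable_of_hasCompactSupport (hχ i).2.1
  simp_rw [hsum, productFourier_sum fun i _ => hχi i, Finset.mul_sum]
  rw [integral_finsetSum _ fun i _ => hint i]
  exact Finset.sum_eq_zero fun i _ =>
    hzero i.1 i.1.2 (χ i) (hχ i).1 (hχ i).2.1 (hχ i).2.2

lemma integrable_mul_schwartz (hu : AEStronglyMeasurable u) {a b : ℝ} (ha : 0 ≤ a) (hb : 0 ≤ b)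
    (huw : ∫⁻ p, ‖u p‖ₑ * ((1 + ‖p.1‖₊ ^ a)⁻¹ * (1 + ‖p.2‖₊ ^ b)⁻¹ : ℝ≥0) ≠ ∞) (f : 𝓢(E × F, ℂ)) :
    Integrable fun y => u y * f y := by
  obtain ⟨C, hC⟩ := exists_nnnorm_le_productWeight f ha hb le_rfl
  simpa only [sub_zero] using integrable_mul_comp_sub hu f.continuous.measurable hC
    (lintegral_enorm_mul_productWeight_ne_top ha hb one_pos le_rfl huw) 0

namespace JumpKernel

theorem integral_mul_productFourier_eq_zero {J₁ : JumpKernel E} {J₂ : JumpKernel F}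
    (h₁ : J₁.IsAdmissible) (h₂ : J₂.IsAdmissible) (hu : AEStronglyMeasurable u)
    (huw : ∫⁻ p, ‖u p‖ₑ *
      ((1 + ‖p.1‖₊ ^ J₁.exponent)⁻¹ * (1 + ‖p.2‖₊ ^ J₂.exponent)⁻¹ : ℝ≥0) ≠ ∞)
    (hsol : IsWeakSolution J₁ J₂ u) {ψ : E × F → ℂ} (hψ : ContDiff ℝ (⊤ : ℕ∞) ψ)
    (hc : HasCompactSupport ψ) (h0 : 0 ∉ tsupport ψ) :
    ∫ y, u y * productFourier ψ y = 0 := by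
  obtain ⟨g, hg⟩ := exists_schwartz_integral_cexp_mul_eq_one E
  obtain ⟨h, hh⟩ := exists_schwartz_integral_cexp_mul_eq_one F
  refine integral_mul_productFourier_eq_zero_of_locally
    (integrable_mul_schwartz hu h₁.exponent_nonneg h₂.exponent_nonneg huw) hψ hc fun p hp => ?_
  obtain ⟨δ, hδ, hzero⟩ := h₁.exists_scale_integral_mul_eq_zero h₂ hu huw hsol g h
    (ne_of_mem_of_not_mem hp h0)
  refine ⟨δ, NNReal.coe_pos.2 hδ, fun χ hχ hχc hsupp => ?_⟩
  obtain ⟨f, hf⟩ := exists_schwartz_eq_productFourier hχ hχc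
  rw [← hf]
  refine hzero f (hf ▸ isReproducedBy_productFourier g.integrable hg h.integrable hh hδ
    (hχ.continuous.integrable_of_hasCompactSupport hχc) fun q hq => ?_)
  have hq : ‖q - p‖ < δ := mem_ball_iff_norm.1 (hsupp hq)
  exact ⟨(norm_fst_le (q - p)).trans hq.le, (norm_snd_le (q - p)).trans hq.le⟩

end JumpKernel

end FourierSupport

section FractionalOperators

lemma setIntegral_Ioi_comp_add {F : Type*} [NormedAddCommGroup F] [NormedSpace ℝ F]
    (φ : ℝ → F) (t : ℝ) : ∫ τ in Ioi t, φ τ = ∫ τ in Ioi (0 : ℝ), φ (t + τ) := by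
  rw [← (measurePreserving_add_left (volume : Measure ℝ) t).setIntegral_preimage_emb
    (measurableEmbedding_addLeft t) φ (Ioi t), preimage_const_add_Ioi, sub_self]

lemma Calpha_pos {α : ℝ} (hα0 : 0 < α) (hα1 : α < 1) : 0 < Calpha α := by
  refine one_div_pos.2 (abs_pos.2 (Real.Gamma_ne_zero fun m hm => ?_))
  have hm0 : 0 < m := by exact_mod_cast (by linarith : (0 : ℝ) < m)
  have hm1 : m < 1 := by exact_mod_cast (by linarith : (m : ℝ) < 1)
  omega

lemma Cns_pos (n : ℕ) {s : ℝ} (hs0 : 0 < s) (hs1 : s < 1) : 0 < Cns n s := by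
  have hΓ : 0 < |Real.Gamma (-s)| := one_div_pos.1 (Calpha_pos hs0 hs1)
  have hΓ' : 0 < Real.Gamma (n / 2 + s) := Real.Gamma_pos_of_pos (by positivity)
  exact div_pos (mul_pos (by positivity) hΓ') (mul_pos (by positivity) hΓ)

namespace JumpKernel

lemma clm_operator {E V : Type*} [NormedAddCommGroup E] [MeasureSpace E] [BorelSpace E]
    [AddGroup V] {J : JumpKernel E} {L : E → V} {f : V → ℂ} {z : V}
    (hint : Integrable (fun y => J.difference f z (L y)) J.measure) (Λ : ℂ →L[ℝ] ℝ) :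
    Λ (J.operator L f z) = ∫ y in J.region, ‖y‖ ^ (-J.exponent) *
      (J.forward * (Λ (f z) - Λ (f (z + L y))) + J.backward * (Λ (f z) - Λ (f (z - L y)))) := by
  have hdensity : Measurable fun y : E => ‖y‖₊ ^ (-J.exponent) := by fun_prop
  have hdiff (v : V) : Λ (J.difference f z v) =
      J.forward * (Λ (f z) - Λ (f (z + v))) + J.backward * (Λ (f z) - Λ (f (z - v))) := by
    simp only [difference, ← Complex.real_smul, map_add, map_smul, map_sub, smul_eq_mul]
  rw [operator, ← Λ.integral_comp_comm hint, measure, powerMeasure,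
    setIntegral_withDensity_eq_setIntegral_smul hdensity _ J.isOpen_region.measurableSet]
  simp only [hdiff, NNReal.smul_def, smul_eq_mul, NNReal.coe_rpow, coe_nnnorm]

/-- The jump kernel of the right Marchaud derivative of order `α`. -/
noncomputable def marchaud (α : ℝ) : JumpKernel ℝ where
  region := Ioi 0
  isOpen_region := isOpen_Ioi
  exponent := 1 + α
  forward := Calpha α
  backward := 0

/-- The jump kernel of the fractional Laplacian of order `2 * s` on `ℝⁿ`. -/
noncomputable def fracLaplacian (n : ℕ) (s : ℝ) : JumpKernel (EuclideanSpace ℝ (Fin n)) where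
  region := univ
  isOpen_region := isOpen_univ
  exponent := n + 2 * s
  forward := Cns n s / 2
  backward := Cns n s / 2

lemma isAdmissible_marchaud {α : ℝ} (hα0 : 0 < α) (hα1 : α < 1) : (marchaud α).IsAdmissible where
  dim_lt_exponent := by
    rw [Module.finrank_self]
    simpa [marchaud]
  hasAsymptoticSymbol := hasAsymptoticSymbol_of_exponent_lt
    (by rw [Module.finrank_self]; simpa [marchaud])
    (by rw [Module.finrank_self]; simpa [marchaud])
  forward_add_backward_pos := by simpa [marchaud] using Calpha_pos hα0 hα1
  mem_or_neg_mem y hy := by simpa [marchaud, or_comm] using lt_or_gt_of_ne hy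

lemma isAdmissible_fracLaplacian {n : ℕ} (hn : 0 < n) {s : ℝ} (hs0 : 0 < s) (hs1 : s < 1) :
    (fracLaplacian n s).IsAdmissible := by
  have : Nonempty (Fin n) := Fin.pos_iff_nonempty.1 hn
  have hdim : dim (EuclideanSpace ℝ (Fin n)) < (fracLaplacian n s).exponent := by
    simpa [fracLaplacian]
  have hdim' : (fracLaplacian n s).exponent < dim (EuclideanSpace ℝ (Fin n)) + 2 := by
    simpa [fracLaplacian]
  exact ⟨hdim, hasAsymptoticSymbol_of_forward_eq_backward rfl hdim hdim',
    by simpa [fracLaplacian] using Cns_pos n hs0 hs1, fun _ _ => .inl (mem_univ _)⟩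

variable {n : ℕ} {f : EuclideanSpace ℝ (Fin n) × ℝ → ℂ} {x : EuclideanSpace ℝ (Fin n)} {t : ℝ}
  {u : EuclideanSpace ℝ (Fin n) × ℝ → ℝ}

lemma marchaudRight_clm_comp {α : ℝ}
    (hint : Integrable (fun τ => (marchaud α).difference f (x, t) (0, τ)) (marchaud α).measure)
    (Λ : ℂ →L[ℝ] ℝ) : marchaudRight α (fun p => Λ (f p)) x t =
      Λ ((marchaud α).operator (fun τ => (0, τ)) f (x, t)) := by
  rw [clm_operator hint, marchaudRight, setIntegral_Ioi_comp_add, ← integral_const_mul]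
  refine setIntegral_congr_fun measurableSet_Ioi fun τ hτ => ?_
  simp only [marchaud, add_sub_cancel_left, Prod.mk_add_mk, add_zero, zero_mul,
    Real.norm_of_nonneg (le_of_lt hτ), Real.rpow_neg (le_of_lt hτ)]
  ring

lemma fracLap_clm_comp {s : ℝ}
    (hint : Integrable (fun y => (fracLaplacian n s).difference f (x, t) (y, 0))
      (fracLaplacian n s).measure)
    (Λ : ℂ →L[ℝ] ℝ) : fracLap s (fun p => Λ (f p)) x t =
      Λ ((fracLaplacian n s).operator (fun y => (y, 0)) f (x, t)) := by
  rw [clm_operator hint, fracLap, ← integral_const_mul, ← setIntegral_univ]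
  refine setIntegral_congr_fun MeasurableSet.univ fun y _ => ?_
  simp only [fracLaplacian, Prod.mk_add_mk, Prod.mk_sub_mk, add_zero, sub_zero,
    Real.rpow_neg (norm_nonneg y)]
  ring

lemma isWeakSolution_ofReal {α s : ℝ}
    (hu_sol : ∀ φ : 𝓢(EuclideanSpace ℝ (Fin n) × ℝ, ℝ),
      ∫ t : ℝ, ∫ x : EuclideanSpace ℝ (Fin n),
        u (x, t) * (marchaudRight α (⇑φ) x t + fracLap s (⇑φ) x t) = 0) :
    IsWeakSolution (fracLaplacian n s) (marchaud α) fun p => (u p : ℂ) := by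
  intro f hleft hright hint
  have hclm (Λ : ℂ →L[ℝ] ℝ) :
      Λ (∫ y, u y * productOperator (fracLaplacian n s) (marchaud α) f y) = 0 := by
    rw [← Λ.integral_comp_comm hint, Measure.volume_eq_prod,
      integral_prod_symm _ (Λ.integrable_comp hint), ← hu_sol (f.postcompCLM Λ)]
    refine integral_congr_ae (.of_forall fun t => integral_congr_ae (.of_forall fun x => ?_))
    change Λ _ = u (x, t) *
      (marchaudRight α (fun p => Λ (f p)) x t + fracLap s (fun p => Λ (f p)) x t)
    rw [marchaudRight_clm_comp (hright _), fracLap_clm_comp (hleft _), productOperator,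
      ← Complex.real_smul, map_smul, map_add, smul_eq_mul, add_comm]
  exact Complex.ext (hclm Complex.reCLM) (hclm Complex.imCLM)

end JumpKernel

end FractionalOperators

section SpaceTime

lemma lintegral_enorm_mul_inv_ne_top {E F : Type*} [NormedAddCommGroup E] [NormedAddCommGroup F]
    [MeasurableSpace E] [MeasurableSpace F] {μ : Measure (E × F)} {u : E × F → ℝ} {a b : ℝ}
    (hu : Integrable (fun p => |u p| / ((1 + ‖p.1‖ ^ a) * (1 + ‖p.2‖ ^ b))) μ) :
    ∫⁻ p, ‖(u p : ℂ)‖ₑ * ((1 + ‖p.1‖₊ ^ a)⁻¹ * (1 + ‖p.2‖₊ ^ b)⁻¹ : ℝ≥0) ∂μ ≠ ∞ := by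
  have hnnnorm (p : E × F) : ‖|u p| / ((1 + ‖p.1‖ ^ a) * (1 + ‖p.2‖ ^ b))‖₊ =
      ‖(u p : ℂ)‖₊ * ((1 + ‖p.1‖₊ ^ a)⁻¹ * (1 + ‖p.2‖₊ ^ b)⁻¹) := by
    ext
    rw [coe_nnnorm, Real.norm_of_nonneg (by positivity)]
    simp [div_eq_mul_inv, mul_comm]
  simp_rw [enorm_eq_nnnorm, ← ENNReal.coe_mul, ← hnnnorm]
  exact hu.hasFiniteIntegral.ne

variable {n : ℕ}

lemma conj_fourierInv (ψ : EuclideanSpace ℝ (Fin n) × ℝ → ℂ) (x : EuclideanSpace ℝ (Fin n))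
    (t : ℝ) : starRingEnd ℂ (fourierInv ψ x t) =
      (((2 * Real.pi) ^ (-(((n : ℝ) + 1) / 2)) : ℝ) : ℂ) *
        productFourier (fun p => starRingEnd ℂ (ψ p)) (x, t) := by
  rw [fourierInv, map_mul, Complex.conj_ofReal, ← integral_conj, productFourier]
  congr 1
  refine integral_congr_ae (.of_forall fun p => ?_)
  simp only [map_mul, ← Complex.exp_conj, map_add, Complex.conj_I, Complex.conj_ofReal, tensor,
    planeWave, ← Complex.exp_add, RCLike.inner_apply, conj_trivial]
  push_cast
  ring_nf

theorem fourier_support_at_origin_general (hn : 0 < n) {α s : ℝ} (hα0 : 0 < α) (hα1 : α < 1)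
    (hs0 : 0 < s) (hs1 : s < 1) {u : EuclideanSpace ℝ (Fin n) × ℝ → ℝ}
    (hu : AEStronglyMeasurable u)
    (hu_space : Integrable (fun p : EuclideanSpace ℝ (Fin n) × ℝ =>
      |u p| / ((1 + ‖p.1‖ ^ ((n : ℝ) + 2 * s)) * (1 + |p.2| ^ (1 + α)))))
    (hu_sol : ∀ φ : 𝓢(EuclideanSpace ℝ (Fin n) × ℝ, ℝ),
      ∫ t : ℝ, ∫ x : EuclideanSpace ℝ (Fin n),
        u (x, t) * (marchaudRight α (⇑φ) x t + fracLap s (⇑φ) x t) = 0)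
    {ψ : EuclideanSpace ℝ (Fin n) × ℝ → ℂ} (hψ : ContDiff ℝ (⊤ : ℕ∞) ψ)
    (hc : HasCompactSupport ψ) (h0 : 0 ∉ tsupport ψ) :
    ∫ t : ℝ, ∫ x : EuclideanSpace ℝ (Fin n),
      (u (x, t) : ℂ) * starRingEnd ℂ (fourierInv ψ x t) = 0 := by
  have h₁ := JumpKernel.isAdmissible_fracLaplacian hn hs0 hs1
  have h₂ := JumpKernel.isAdmissible_marchaud hα0 hα1
  have hu' : AEStronglyMeasurable fun p => (u p : ℂ) :=
    Complex.continuous_ofReal.comp_aestronglyMeasurable hu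
  have huw := lintegral_enorm_mul_inv_ne_top hu_space
  have hψ' : ContDiff ℝ (⊤ : ℕ∞) fun p => starRingEnd ℂ (ψ p) := Complex.conjCLE.contDiff.comp hψ
  have hc' : HasCompactSupport fun p => starRingEnd ℂ (ψ p) := hc.comp_left (map_zero _)
  have hzero := JumpKernel.integral_mul_productFourier_eq_zero h₁ h₂ hu' huw
    (JumpKernel.isWeakSolution_ofReal hu_sol) hψ' hc'
    fun h => h0 (closure_mono (Function.support_comp_subset (map_zero (starRingEnd ℂ)) ψ) h)
  obtain ⟨f, hf⟩ := exists_schwartz_eq_productFourier hψ' hc'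
  have hint := integrable_mul_schwartz hu' h₁.exponent_nonneg h₂.exponent_nonneg huw f
  rw [← hf, Measure.volume_eq_prod, integral_prod_symm _ hint] at hzero
  simp_rw [conj_fourierInv, mul_left_comm (u _ : ℂ), integral_const_mul, ← hf, hzero, mul_zero]

end SpaceTime

/-- the Fourier transform of a distributional solution
`u ∈ 𝓛_{2s,α}(ℝⁿ×ℝ)` of `∂_t^α u + (-Δ)^s u = 0` is supported at the origin: for every
smooth compactly supported `ψ` whose support avoids `(0,0)`,
`∫_ℝ ∫_{ℝⁿ} u(x,t)·conj(𝓕⁻¹ψ(x,t)) dx dt = 0`. -/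
theorem fourier_support_at_origin
    (n : ℕ) (hn : 2 ≤ n) (α s : ℝ) (hα0 : 0 < α) (hα1 : α < 1)
    (hs0 : 0 < s) (hs1 : s < 1)
    (u : EuclideanSpace ℝ (Fin n) × ℝ → ℝ)
    (hu_loc : LocallyIntegrable u)
    (hu_space : Integrable (fun p : EuclideanSpace ℝ (Fin n) × ℝ =>
      |u p| / ((1 + ‖p.1‖ ^ ((n : ℝ) + 2 * s)) * (1 + |p.2| ^ (1 + α)))))
    (hu_sol : ∀ φ : SchwartzMap (EuclideanSpace ℝ (Fin n) × ℝ) ℝ,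
      ∫ t : ℝ, ∫ x : EuclideanSpace ℝ (Fin n),
        u (x, t) * (marchaudRight α (⇑φ) x t + fracLap s (⇑φ) x t) = 0) :
    ∀ ψ : EuclideanSpace ℝ (Fin n) × ℝ → ℂ,
      ContDiff ℝ (⊤ : ℕ∞) ψ → HasCompactSupport ψ →
      (0 : EuclideanSpace ℝ (Fin n) × ℝ) ∉ tsupport ψ →
      ∫ t : ℝ, ∫ x : EuclideanSpace ℝ (Fin n),
        (u (x, t) : ℂ) * starRingEnd ℂ (fourierInv ψ x t) = 0 := by
  intro ψ hψ hc h0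
  exact fourier_support_at_origin_general (by omega) hα0 hα1 hs0 hs1 hu_loc.aestronglyMeasurable
    hu_space hu_sol hψ hc h0
end

section
/- Let 0 < α < 1, let R > 0 and T > −R be real numbers, and let w : ℝ → ℝ be measurable, continuous on [−R, T], with w(τ) ≥ 0 for all τ ≤ −R. Assume that for every s ∈ (−R, T] the integral ∫_{−∞}^s (w(s) − w(τ))/(s−τ)^{1+α} dτ converges absolutely and equals 0. Then w(s) ≥ 0 for all s ∈ (−R, T]. -/
open MeasureTheory Set

/-!
If `w` takes a negative value on `(-R, T]`, its minimum over `(-∞, T]` is attained at some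
`m ∈ (-R, T]`. There the integrand `(w m - w τ) / (m - τ) ^ (1 + α)` is nonpositive, so a
nonnegative integral forces `w = w m < 0` almost everywhere on `(-∞, m)`, contradicting `0 ≤ w`
on `(-∞, -R]`.
-/

theorem ae_eq_const_of_integral_sub_mul_nonneg {X : Type*} [MeasurableSpace X] {μ : Measure X}
    {w k : X → ℝ} {c : ℝ} (hw : ∀ᵐ x ∂μ, c ≤ w x) (hk : ∀ᵐ x ∂μ, 0 < k x)
    (hint : Integrable (fun x => (c - w x) * k x) μ) (h : 0 ≤ ∫ x, (c - w x) * k x ∂μ) :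
    ∀ᵐ x ∂μ, w x = c := by
  have hnonpos : (fun x => (c - w x) * k x) ≤ᵐ[μ] 0 := by
    filter_upwards [hw, hk] with x hwx hkx
    exact mul_nonpos_of_nonpos_of_nonneg (sub_nonpos.mpr hwx) hkx.le
  have hzero : (fun x => (c - w x) * k x) =ᵐ[μ] 0 :=
    (integral_eq_iff_of_ae_le hint (integrable_zero X ℝ μ) hnonpos).mp <|
      (integral_mono_ae hint (integrable_zero X ℝ μ) hnonpos).antisymm (by simpa using h)
  filter_upwards [hzero, hk] with x hx hkx
  exact (sub_eq_zero.mp ((mul_eq_zero_iff_right hkx.ne').mp hx)).symm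

section LinearlyOrderedTime

variable {X : Type*} [LinearOrder X] [TopologicalSpace X] [CompactIccSpace X] {a T : X}

theorem exists_mem_Ioc_isMinOn_Iic_of_neg {β : Type*} [LinearOrder β] [Zero β] {w : X → β}
    (hw : LowerSemicontinuousOn w (Icc a T)) (hnonneg : ∀ x ≤ a, 0 ≤ w x)
    {s : X} (hs : s ≤ T) (hws : w s < 0) :
    ∃ m ∈ Ioc a T, w m < 0 ∧ IsMinOn w (Iic T) m := by
  have lt_of_neg {x : X} (hx : w x < 0) : a < x :=
    lt_of_not_ge fun hxa => (hnonneg x hxa).not_gt hx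
  have hsIcc : s ∈ Icc a T := ⟨(lt_of_neg hws).le, hs⟩
  obtain ⟨m, hm, hmin⟩ := hw.exists_isMinOn ⟨s, hsIcc⟩ isCompact_Icc
  have hwm : w m < 0 := (hmin hsIcc).trans_lt hws
  refine ⟨m, ⟨lt_of_neg hwm, hm.2⟩, hwm, fun x hx => ?_⟩
  rcases le_total x a with hxa | hax
  · exact hwm.le.trans (hnonneg x hxa)
  · exact hmin ⟨hax, hx⟩

theorem marchaud_maximum_principle_general [OrderClosedTopology X] [MeasurableSpace X]
    [OpensMeasurableSpace X] {μ : Measure X} (hμ : μ (Iic a) ≠ 0) {K : X → X → ℝ}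
    (hK : ∀ s τ, τ < s → 0 < K s τ) {w : X → ℝ} (hw : LowerSemicontinuousOn w (Icc a T))
    (hnonneg : ∀ τ ≤ a, 0 ≤ w τ)
    (hsuper : ∀ s ∈ Ioc a T, IntegrableOn (fun τ => (w s - w τ) * K s τ) (Iio s) μ ∧
      0 ≤ ∫ τ in Iio s, (w s - w τ) * K s τ ∂μ) :
    ∀ s ∈ Ioc a T, 0 ≤ w s := by
  by_contra! ⟨s, hs, hws⟩
  obtain ⟨m, hm, hwm, hmin⟩ := exists_mem_Ioc_isMinOn_Iic_of_neg hw hnonneg hs.2 hws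
  obtain ⟨hint, hintegral⟩ := hsuper m hm
  have hconst : ∀ᵐ τ ∂μ.restrict (Iio m), w τ = w m :=
    ae_eq_const_of_integral_sub_mul_nonneg
      (ae_restrict_of_forall_mem measurableSet_Iio fun τ hτ => hmin (hτ.le.trans hm.2))
      (ae_restrict_of_forall_mem measurableSet_Iio (hK m)) hint hintegral
  obtain ⟨τ, hτa, hτ⟩ : ∃ τ ∈ Iic a, w τ = w m :=
    Measure.exists_mem_of_measure_ne_zero_of_ae hμ
      (ae_restrict_of_ae_restrict_of_subset (Iic_subset_Iio.mpr hm.1) hconst)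
  exact (hnonneg τ hτa).not_gt (hτ ▸ hwm)

end LinearlyOrderedTime

/-- maximum principle for the left Marchaud derivative. If `w` is
measurable, continuous on `[-R,T]`, nonnegative on `(-∞,-R]`, and
`∫_{-∞}^s (w(s)-w(τ))/(s-τ)^{1+α} dτ` converges absolutely and vanishes for every
`s ∈ (-R,T]`, then `w ≥ 0` on `(-R,T]`. -/
theorem marchaud_maximum_principle
    (α : ℝ) (hα0 : 0 < α) (hα1 : α < 1)
    (R T : ℝ) (hR : 0 < R) (hT : -R < T)
    (w : ℝ → ℝ) (hw_meas : Measurable w)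
    (hw_cont : ContinuousOn w (Icc (-R) T))
    (hw_nonneg : ∀ τ : ℝ, τ ≤ -R → 0 ≤ w τ)
    (hw_eq : ∀ s ∈ Ioc (-R) T,
      IntegrableOn (fun τ : ℝ => (w s - w τ) / (s - τ) ^ (1 + α)) (Iio s) ∧
      ∫ τ in Iio s, (w s - w τ) / (s - τ) ^ (1 + α) = 0) :
    ∀ s ∈ Ioc (-R) T, 0 ≤ w s :=
  marchaud_maximum_principle_general (K := fun s τ => ((s - τ) ^ (1 + α))⁻¹) (by simp)
    (fun _ _ h => inv_pos.mpr (Real.rpow_pos_of_pos (sub_pos.mpr h) _))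
    hw_cont.lowerSemicontinuousOn hw_nonneg fun s hs => (hw_eq s hs).imp_right Eq.ge
end

section
/- Let 0 < α < 1. Let u : ℝ → ℝ be nonnegative, belong to 𝓛_α(ℝ), and be locally Hölder continuous of order α + ε for some ε > 0 with α + ε ≤ 1. Let f : ℝ → ℝ be nonnegative, measurable and locally bounded. Assume that for every t ∈ ℝ the integral ∫_{−∞}^t (u(t) − u(τ))/(t−τ)^{1+α} dτ converges absolutely and C_α times it equals f(t) (i.e. ∂_t^α u = f on ℝ), where C_α = 1/|Γ(−α)|. Then there exists a constant c₀ ≥ 0 such that for every t ∈ ℝ the integral ∫_{−∞}^t f(τ)(t−τ)^{α−1} dτ is finite and u(t) = c₀ + (1/Γ(α)) ∫_{−∞}^t f(τ)(t−τ)^{α−1} dτ. -/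
/-!
Move the pole of the Marchaud kernel to distance `δ > 0` from the domain of integration. The
regularised integral splits into a multiple of `u s` and a convolution, so its Abel transform over
`(T, t]` can be computed by a single use of Fubini's theorem. The part that lives on `(T, t]`
rescales to an average of `u` near `t` with the beta density `q ^ (α - 1) / (1 + q)`. As `δ → 0`
this leaves the exact identity
`Γ(α) Γ(1 - α) u(t) = α ∫_T^t (t - s) ^ (α - 1) D(s) ds + P_T(t)`, where
`D(s) = ∫_{-∞}^s (u(s) - u(τ)) / (s - τ) ^ (1 + α) dτ` and `P_T(t)` is the integral of `u` over
`(-∞, T)` against the Poisson kernel of the half-line. Both terms are nonnegative, so the fractional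
integral is bounded by `u(t)` and converges as `T → -∞`, and hence so does `P_T(t)`. The Poisson
kernels at two times `t ≤ t'` are comparable with constants `((t - T) / (t' - T)) ^ α` and
`((t - T) / (t' - T)) ^ (α - 1)`, which tend to `1`; so the limit of `P_T(t)` does not depend on
`t`.
-/

open MeasureTheory Set Filter Topology

section PowerIntegrals

theorem integral_Ioi_rpow_mul_rpow_mul_exp {a b x : ℝ} (ha : 0 < a) (hx : 0 < x) :
    ∫ q in Ioi (0 : ℝ), q ^ (a - 1) * (x ^ (a + b - 1) * Real.exp (-(x * (1 + q)))) =
      Real.Gamma a * (Real.exp (-x) * x ^ (b - 1)) := by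
  have hsplit : ∀ q : ℝ, q ^ (a - 1) * (x ^ (a + b - 1) * Real.exp (-(x * (1 + q)))) =
      x ^ (a + b - 1) * Real.exp (-x) * (q ^ (a - 1) * Real.exp (-(x * q))) := fun q => by
    rw [mul_one_add, neg_add, Real.exp_add]
    ring
  simp_rw [hsplit]
  rw [integral_const_mul, Real.integral_rpow_mul_exp_neg_mul_Ioi ha hx, one_div,
    Real.inv_rpow hx.le, ← Real.rpow_neg hx.le, show b - 1 = a + b - 1 + -a by ring,
    Real.rpow_add hx]
  ring

theorem integrable_rpow_mul_rpow_mul_exp_prod {a b : ℝ} (ha : 0 < a) (hb : 0 < b) :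
    Integrable (Function.uncurry fun x q : ℝ =>
        q ^ (a - 1) * (x ^ (a + b - 1) * Real.exp (-(x * (1 + q)))))
      ((volume.restrict (Ioi 0)).prod (volume.restrict (Ioi 0))) := by
  rw [integrable_prod_iff (Measurable.aestronglyMeasurable (by fun_prop))]
  simp only [Function.uncurry_apply_pair]
  constructor
  · filter_upwards [ae_restrict_mem measurableSet_Ioi] with x (hx : 0 < x)
    refine not_imp_comm.1 integral_undef ?_
    rw [integral_Ioi_rpow_mul_rpow_mul_exp ha hx]
    have := Real.Gamma_pos_of_pos ha
    positivity
  · refine ((Real.GammaIntegral_convergent hb).const_mul (Real.Gamma a)).congr ?_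
    filter_upwards [ae_restrict_mem measurableSet_Ioi] with x (hx : 0 < x)
    rw [← integral_Ioi_rpow_mul_rpow_mul_exp ha hx]
    refine setIntegral_congr_fun measurableSet_Ioi fun q (hq : 0 < q) => ?_
    rw [Real.norm_of_nonneg (by positivity)]

theorem integral_Ioi_rpow_mul_exp_one_add {a b q : ℝ} (ha : 0 < a) (hb : 0 < b) (hq : 0 < q) :
    ∫ x in Ioi (0 : ℝ), q ^ (a - 1) * (x ^ (a + b - 1) * Real.exp (-(x * (1 + q)))) =
      Real.Gamma (a + b) * (q ^ (a - 1) / (1 + q) ^ (a + b)) := by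
  simp_rw [integral_const_mul, mul_comm _ (1 + q)]
  rw [Real.integral_rpow_mul_exp_neg_mul_Ioi (by positivity) (by positivity), one_div,
    Real.inv_rpow (by positivity)]
  ring

theorem integrableOn_Ioi_rpow_div_one_add_rpow {a b : ℝ} (ha : 0 < a) (hb : 0 < b) :
    IntegrableOn (fun q : ℝ => q ^ (a - 1) / (1 + q) ^ (a + b)) (Ioi 0) := by
  have hΓ := (Real.Gamma_pos_of_pos (add_pos ha hb)).ne'
  refine (IntegrableOn.congr_fun (integrable_rpow_mul_rpow_mul_exp_prod ha hb).integral_prod_right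
    (fun q hq => integral_Ioi_rpow_mul_exp_one_add ha hb hq)
    measurableSet_Ioi).const_mul (Real.Gamma (a + b))⁻¹ |>.congr ?_
  exact Eventually.of_forall fun q => inv_mul_cancel_left₀ hΓ _

theorem Gamma_add_mul_integral_Ioi_rpow_div_one_add_rpow {a b : ℝ} (ha : 0 < a) (hb : 0 < b) :
    Real.Gamma (a + b) * ∫ q in Ioi (0 : ℝ), q ^ (a - 1) / (1 + q) ^ (a + b) =
      Real.Gamma a * Real.Gamma b := by
  calc Real.Gamma (a + b) * ∫ q in Ioi (0 : ℝ), q ^ (a - 1) / (1 + q) ^ (a + b)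
      = ∫ q in Ioi (0 : ℝ), ∫ x in Ioi (0 : ℝ),
          q ^ (a - 1) * (x ^ (a + b - 1) * Real.exp (-(x * (1 + q)))) := by
        rw [← integral_const_mul]
        exact setIntegral_congr_fun measurableSet_Ioi fun q hq =>
          (integral_Ioi_rpow_mul_exp_one_add ha hb hq).symm
    _ = ∫ x in Ioi (0 : ℝ), ∫ q in Ioi (0 : ℝ),
          q ^ (a - 1) * (x ^ (a + b - 1) * Real.exp (-(x * (1 + q)))) :=
        (integral_integral_swap (integrable_rpow_mul_rpow_mul_exp_prod ha hb)).symm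
    _ = ∫ x in Ioi (0 : ℝ), Real.Gamma a * (Real.exp (-x) * x ^ (b - 1)) :=
        setIntegral_congr_fun measurableSet_Ioi fun x hx =>
          integral_Ioi_rpow_mul_rpow_mul_exp ha hx
    _ = Real.Gamma a * Real.Gamma b := by
        rw [integral_const_mul, ← Real.Gamma_eq_integral hb]

theorem intervalIntegrable_const_sub_rpow {p T t : ℝ} (hp : -1 < p) :
    IntervalIntegrable (fun s : ℝ => (t - s) ^ p) volume T t := by
  have h := (intervalIntegral.intervalIntegrable_rpow' (a := 0) (b := t - T) hp).comp_sub_left t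
  simpa only [sub_zero, sub_sub_cancel] using h.symm

theorem integral_const_sub_rpow {p T t : ℝ} (hp : 0 < p) :
    ∫ s in T..t, (t - s) ^ (p - 1) = (t - T) ^ p / p := by
  rw [intervalIntegral.integral_comp_sub_left (fun x => x ^ (p - 1)) t,
    integral_rpow (Or.inl (by linarith)), sub_self, sub_add_cancel, Real.zero_rpow hp.ne', sub_zero]

theorem integrableOn_Iio_inv_const_sub_rpow {p a b : ℝ} (hp : 1 < p) (hab : a < b) :
    IntegrableOn (fun τ : ℝ => ((b - τ) ^ p)⁻¹) (Iio a) := by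
  have h := (integrableOn_Ioi_rpow_of_lt (a := -p) (by linarith) (sub_pos.2 hab)).congr_fun
    (fun x hx => Real.rpow_neg ((sub_pos.2 hab).trans hx).le p) measurableSet_Ioi
  rw [← (volume.measurePreserving_sub_left b).integrableOn_comp_preimage
    (MeasurableEquiv.subLeft b).measurableEmbedding] at h
  simpa [Function.comp_def] using h

theorem integral_Iio_inv_const_sub_rpow {α a b : ℝ} (hα : 0 < α) (hab : a < b) :
    ∫ τ in Iio a, ((b - τ) ^ (1 + α))⁻¹ = (b - a) ^ (-α) / α := by
  have hpre : Iio a = (fun τ => b - τ) ⁻¹' Ioi (b - a) := by simp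
  rw [hpre, (volume.measurePreserving_sub_left b).setIntegral_preimage_emb
    (MeasurableEquiv.subLeft b).measurableEmbedding (fun x => (x ^ (1 + α))⁻¹) (Ioi (b - a)),
    ← setIntegral_congr_fun measurableSet_Ioi fun x hx =>
      Real.rpow_neg ((sub_pos.2 hab).trans hx).le (1 + α),
    integral_Ioi_rpow_of_lt (by linarith) (sub_pos.2 hab), show -(1 + α) + 1 = -α by ring,
    neg_div_neg_eq]

end PowerIntegrals

theorem tendsto_sub_div_sub_atBot (t t' : ℝ) :
    Tendsto (fun T : ℝ => (t - T) / (t' - T)) atBot (𝓝 1) := by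
  have hinv : Tendsto (fun T : ℝ => (t' - T)⁻¹) atBot (𝓝 0) :=
    tendsto_inv_atTop_zero.comp (tendsto_atTop_add_const_left _ t' tendsto_neg_atBot_atTop)
  have hlim := (hinv.const_mul (t - t')).const_add 1
  rw [mul_zero, add_zero] at hlim
  refine hlim.congr' ?_
  filter_upwards [eventually_lt_atBot t'] with T hT
  have : t' - T ≠ 0 := (sub_pos.2 hT).ne'
  field_simp
  ring

theorem abs_Gamma_neg {α : ℝ} (hα0 : 0 < α) (hα1 : α < 1) :
    |Real.Gamma (-α)| = Real.Gamma (1 - α) / α := by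
  have hrec := Real.Gamma_add_one (neg_ne_zero.2 hα0.ne')
  have hpos := Real.Gamma_pos_of_pos (sub_pos.2 hα1)
  rw [neg_add_eq_sub] at hrec
  rw [eq_div_iff hα0.ne', hrec, abs_of_neg (by nlinarith)]
  ring

theorem tendsto_intervalIntegral_comp_sub_mul {φ u : ℝ → ℝ} (hφ : IntegrableOn φ (Ioi 0))
    (hu : Continuous u) {T t : ℝ} (hTt : T < t) :
    Tendsto (fun δ : ℝ => ∫ q in 0..(t - T) / δ, u (t - δ * q) * φ q) (𝓝[>] 0)
      (𝓝 (u t * ∫ q in Ioi 0, φ q)) := by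
  obtain ⟨A, hA⟩ := isCompact_Icc.exists_bound_of_continuousOn (hu.continuousOn (s := Icc T t))
  have hindicator : (fun δ : ℝ => ∫ q in Ioi 0,
      (Iic ((t - T) / δ)).indicator (fun q => u (t - δ * q) * φ q) q) =ᶠ[𝓝[>] 0]
        fun δ => ∫ q in 0..(t - T) / δ, u (t - δ * q) * φ q := by
    filter_upwards [self_mem_nhdsWithin] with δ (hδ : 0 < δ)
    rw [setIntegral_indicator measurableSet_Iic, Ioi_inter_Iic,
      intervalIntegral.integral_of_le (div_nonneg (sub_nonneg.2 hTt.le) hδ.le)]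
  rw [← integral_const_mul]
  refine Tendsto.congr' hindicator (tendsto_integral_filter_of_dominated_convergence
    (fun q => A * ‖φ q‖) (.of_forall fun δ => ?_) ?_ (hφ.norm.const_mul A) ?_)
  · have hcomp : Continuous fun q => u (t - δ * q) := by fun_prop
    exact (hcomp.aestronglyMeasurable.mul hφ.aestronglyMeasurable).indicator measurableSet_Iic
  · have hA0 : 0 ≤ A := (norm_nonneg _).trans (hA t ⟨hTt.le, le_rfl⟩)
    filter_upwards [self_mem_nhdsWithin] with δ (hδ : 0 < δ)
    filter_upwards [ae_restrict_mem measurableSet_Ioi] with q (_ : 0 < q)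
    by_cases hqT : q ∈ Iic ((t - T) / δ)
    · have hδq : q * δ ≤ t - T := (le_div_iff₀ hδ).1 hqT
      rw [indicator_of_mem hqT, norm_mul]
      gcongr
      exact hA _ ⟨by linarith, by nlinarith⟩
    · rw [indicator_of_notMem hqT, norm_zero]
      positivity
  · refine .of_forall fun q => ?_
    have hshift : Tendsto (fun δ : ℝ => t - δ * q) (𝓝[>] 0) (𝓝 t) := by
      have hcont : Continuous fun δ : ℝ => t - δ * q := by fun_prop
      simpa using (hcont.tendsto 0).mono_left nhdsWithin_le_nhds
    refine (((hu.tendsto t).comp hshift).mul_const (φ q)).congr' ?_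
    filter_upwards [self_mem_nhdsWithin, hshift.eventually (Ioi_mem_nhds hTt)]
      with δ (hδ : 0 < δ) (hδT : T < t - δ * q)
    rw [indicator_of_mem (mem_Iic.2 ((le_div_iff₀ hδ).2 (by linarith))), Function.comp_apply]

/-- `u` is locally Hölder continuous of order `β`. The constant is real and may depend on the
interval, so that no sign has to be carried along. -/
def LocallyHolder (β : ℝ) (u : ℝ → ℝ) : Prop :=
  ∀ a b : ℝ, ∃ K : ℝ, ∀ t ∈ Icc a b, ∀ s ∈ Icc a b, |u t - u s| ≤ K * |t - s| ^ β

theorem LocallyHolder.continuous {β : ℝ} {u : ℝ → ℝ} (hu : LocallyHolder β u) (hβ : 0 < β) :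
    Continuous u := by
  refine continuous_iff_continuousAt.2 fun t => ?_
  obtain ⟨K, hK⟩ := hu (t - 1) (t + 1)
  have hlim : Tendsto (fun s => K * |s - t| ^ β) (𝓝 t) (𝓝 0) := by
    have hcont : Continuous fun s => K * |s - t| ^ β := by fun_prop (disch := exact hβ.le)
    simpa [Real.zero_rpow hβ.ne'] using hcont.tendsto t
  refine tendsto_iff_dist_tendsto_zero.2 (squeeze_zero' (.of_forall fun _ => dist_nonneg) ?_ hlim)
  filter_upwards [Icc_mem_nhds (sub_one_lt t) (lt_add_one t)] with s hs
  exact hK s hs t ⟨by linarith, by linarith⟩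

/-- The singular integral in the Marchaud derivative of order `α` of `u` converges absolutely at
every time. -/
def MarchaudIntegrable (α : ℝ) (u : ℝ → ℝ) : Prop :=
  ∀ t : ℝ, IntegrableOn (fun τ : ℝ => (u t - u τ) / (t - τ) ^ (1 + α)) (Iio t)

/-- The singular integral of the Marchaud derivative, without the constant `C_α`, with the pole of
its kernel moved to distance `δ` from the domain of integration. The Marchaud derivative itself is
the case `δ = 0`. -/
noncomputable def marchaudIntegral (α δ : ℝ) (u : ℝ → ℝ) (s : ℝ) : ℝ :=
  ∫ τ in Iio s, (u s - u τ) / (s - (τ - δ)) ^ (1 + α)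

/-- Up to the factor `Γ(α) Γ(1 - α)`, the Poisson kernel of the Marchaud derivative of order `α` on
the half-line `(T, ∞)`: the weight at time `y < T` in the value at time `t > T` of the solution of
`∂_t^α v = 0` on `(T, ∞)`. -/
noncomputable def marchaudKernel (α T t y : ℝ) : ℝ :=
  ((t - T) / (T - y)) ^ α / (t - y)

/-- The integral of the past `(-∞, T)` of `u` against `marchaudKernel`. -/
noncomputable def pastIntegral (α : ℝ) (u : ℝ → ℝ) (T t : ℝ) : ℝ :=
  ∫ τ in Iio T, u τ * marchaudKernel α T t τ

section Kernel

variable {α T t t' y : ℝ}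

theorem marchaudKernel_pos (hy : y < T) (hTt : T < t) : 0 < marchaudKernel α T t y := by
  have : 0 < T - y := sub_pos.2 hy
  have : 0 < t - T := sub_pos.2 hTt
  have : 0 < t - y := sub_pos.2 (hy.trans hTt)
  unfold marchaudKernel
  positivity

theorem measurable_marchaudKernel : Measurable (marchaudKernel α T t) := by
  unfold marchaudKernel
  fun_prop

theorem marchaudKernel_eq_rpow_mul (hy : y < T) (hTt : T ≤ t) :
    marchaudKernel α T t y = (t - T) ^ α / (t - y) * (T - y) ^ (-α) := by
  have hTy := sub_pos.2 hy
  rw [marchaudKernel, Real.div_rpow (sub_nonneg.2 hTt) hTy.le, Real.rpow_neg hTy.le]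
  ring

theorem marchaudKernel_sub_le {δ : ℝ} (hα : 0 ≤ α) (hδ : 0 ≤ δ) (hy : y < T) (hTt : T < t) :
    marchaudKernel α T t (y - δ) ≤ marchaudKernel α T t y := by
  have : 0 < T - y := sub_pos.2 hy
  have : 0 < t - T := sub_pos.2 hTt
  have : 0 < t - y := sub_pos.2 (hy.trans hTt)
  unfold marchaudKernel
  gcongr
  · exact div_nonneg (by linarith) (by linarith)
  · linarith
  · linarith

theorem hasDerivAt_marchaudKernel {s : ℝ} (hys : y < s) (hst : s < t) :
    HasDerivAt (fun s => marchaudKernel α s t y)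
      (-(α * ((t - s) ^ (α - 1) / (s - y) ^ (1 + α)))) s := by
  have hts := sub_pos.2 hst
  have hsy := sub_pos.2 hys
  have hty := sub_pos.2 (hys.trans hst)
  have hquot : HasDerivAt (fun s : ℝ => (t - s) / (s - y))
      (((-1) * (s - y) - (t - s) * 1) / (s - y) ^ 2) s :=
    ((hasDerivAt_id s).const_sub t).div ((hasDerivAt_id s).sub_const y) hsy.ne'
  have hpow := (hquot.rpow_const (p := α) (Or.inl (by positivity))).div_const (t - y)
  convert! hpow using 1
  rw [Real.div_rpow hts.le hsy.le, show 1 + α = α - 1 + 2 by ring, Real.rpow_add hsy,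
    Real.rpow_two]
  have := (Real.rpow_pos_of_pos hsy (α - 1)).ne'
  field_simp
  ring

theorem integral_rpow_div_rpow_eq_marchaudKernel (hα : 0 < α) (hy : y < T) (hTt : T ≤ t) :
    ∫ s in T..t, (t - s) ^ (α - 1) / (s - y) ^ (1 + α) = marchaudKernel α T t y / α := by
  have hcont : ContinuousOn (fun s => -(marchaudKernel α s t y / α)) (Icc T t) := by
    refine ((((continuousOn_const.sub continuousOn_id).div (continuousOn_id.sub continuousOn_const)
      fun s hs => (sub_pos.2 (hy.trans_le hs.1)).ne').rpow_const fun s _ => Or.inr hα.le).div_const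
        (t - y)).div_const α |>.neg
  have hderiv : ∀ s ∈ Ioo T t, HasDerivAt (fun s => -(marchaudKernel α s t y / α))
      ((t - s) ^ (α - 1) / (s - y) ^ (1 + α)) s := fun s hs => by
    convert! ((hasDerivAt_marchaudKernel (hy.trans hs.1) hs.2).div_const α).neg using 1
    field_simp
  have hint : IntegrableOn (fun s => (t - s) ^ (α - 1) / (s - y) ^ (1 + α)) (Ioc T t) := by
    refine intervalIntegral.integrableOn_deriv_of_nonneg hcont hderiv fun s hs => ?_
    have hts := sub_pos.2 hs.2
    have hsy := sub_pos.2 (hy.trans hs.1)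
    positivity
  rw [intervalIntegral.integral_eq_sub_of_hasDerivAt_of_le hTt hcont hderiv
    ((intervalIntegrable_iff_integrableOn_Ioc_of_le hTt).2 hint)]
  simp [marchaudKernel, Real.zero_rpow hα.ne']

theorem mul_marchaudKernel_le (hy : y < T) (hTt : T < t) (htt' : t ≤ t') :
    ((t - T) / (t' - T)) ^ α * marchaudKernel α T t' y ≤ marchaudKernel α T t y := by
  have : 0 < T - y := sub_pos.2 hy
  have : 0 < t - T := sub_pos.2 hTt
  have ht'T := sub_pos.2 (hTt.trans_le htt')
  have hty := sub_pos.2 (hy.trans hTt)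
  rw [marchaudKernel, mul_div_assoc', ← Real.mul_rpow (by positivity) (by positivity),
    div_mul_div_cancel₀ ht'T.ne', marchaudKernel]
  gcongr

theorem marchaudKernel_le_mul (hy : y < T) (hTt : T < t) (htt' : t ≤ t') :
    marchaudKernel α T t y ≤ ((t - T) / (t' - T)) ^ (α - 1) * marchaudKernel α T t' y := by
  have : 0 < T - y := sub_pos.2 hy
  have : 0 < t - T := sub_pos.2 hTt
  have ht'T := sub_pos.2 (hTt.trans_le htt')
  have hty := sub_pos.2 (hy.trans hTt)
  have ht'y := sub_pos.2 (hy.trans (hTt.trans_le htt'))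
  have hratio : (t - y)⁻¹ ≤ ((t - T) / (t' - T))⁻¹ / (t' - y) := by
    rw [inv_div, div_div, ← one_div, div_le_div_iff₀ hty (by positivity)]
    nlinarith
  calc marchaudKernel α T t y
      = ((t - T) / (T - y)) ^ α * (t - y)⁻¹ := div_eq_mul_inv _ _
    _ ≤ ((t - T) / (T - y)) ^ α * (((t - T) / (t' - T))⁻¹ / (t' - y)) := by gcongr
    _ = ((t - T) / (t' - T)) ^ (α - 1) * marchaudKernel α T t' y := by
      rw [marchaudKernel, Real.rpow_sub_one (by positivity), ← div_mul_div_cancel₀ ht'T.ne',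
        Real.mul_rpow (by positivity) (by positivity)]
      ring

end Kernel

namespace MarchaudIntegrable

variable {α : ℝ} {u : ℝ → ℝ}

theorem integrableOn_div_rpow (h : MarchaudIntegrable α u) (hα : 0 < α) {a b : ℝ}
    (hab : a < b) :
    IntegrableOn (fun τ => u τ / (b - τ) ^ (1 + α)) (Iio a) := by
  have hconst :=
    (integrableOn_Iio_inv_const_sub_rpow (p := 1 + α) (by linarith) hab).const_mul (u b)
  refine (hconst.sub ((h b).mono_set (Iio_subset_Iio hab.le))).congr (.of_forall fun τ => ?_)
  simp only [Pi.sub_apply]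
  ring

theorem integrableOn_div_shifted_rpow (h : MarchaudIntegrable α u) (hα : 0 < α) {δ : ℝ} (hδ : 0 < δ)
    (s : ℝ) : IntegrableOn (fun τ => u τ / (s - (τ - δ)) ^ (1 + α)) (Iio s) := by
  simpa only [sub_sub_eq_add_sub] using h.integrableOn_div_rpow hα (lt_add_of_pos_right s hδ)

theorem marchaudIntegral_eq (h : MarchaudIntegrable α u) (hα : 0 < α) {δ : ℝ} (hδ : 0 < δ) (s : ℝ) :
    marchaudIntegral α δ u s =
      u s * (δ ^ (-α) / α) - ∫ τ in Iio s, u τ / (s - (τ - δ)) ^ (1 + α) := by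
  have hs : s < s + δ := lt_add_of_pos_right s hδ
  have hval := integral_Iio_inv_const_sub_rpow hα hs
  have hint := (integrableOn_Iio_inv_const_sub_rpow (p := 1 + α) (by linarith) hs).const_mul (u s)
  rw [add_sub_cancel_left] at hval
  simp only [← sub_sub_eq_add_sub] at hval hint
  simp only [marchaudIntegral, sub_div]
  simp only [div_eq_mul_inv (u s)]
  rw [integral_sub hint (h.integrableOn_div_shifted_rpow hα hδ s), integral_const_mul, hval]

theorem integrableOn_mul_marchaudKernel (h : MarchaudIntegrable α u) (hα0 : 0 < α) (hα1 : α < 1)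
    (hu : Continuous u) {T t : ℝ} (hTt : T < t) :
    IntegrableOn (fun τ => u τ * marchaudKernel α T t τ) (Iio T) := by
  rw [← Iio_union_Ico_eq_Iio (sub_one_lt T).le]
  refine IntegrableOn.union ?_ ?_
  · have hbound : ∀ᵐ τ ∂volume.restrict (Iio (T - 1)),
        ‖(t - T) ^ α * ((T - τ) / (t - τ))‖ ≤ (t - T) ^ α := by
      filter_upwards [ae_restrict_mem measurableSet_Iio] with τ (hτ : τ < T - 1)
      have : 0 ≤ t - T := by linarith
      have hTτ : 0 ≤ T - τ := by linarith
      have htτ : 0 ≤ t - τ := by linarith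
      rw [Real.norm_of_nonneg (by positivity)]
      exact mul_le_of_le_one_right (by positivity) (div_le_one_of_le₀ (by linarith) htτ)
    refine IntegrableOn.congr_fun ((h.integrableOn_div_rpow hα0 (sub_one_lt T)).bdd_mul
      (Measurable.aestronglyMeasurable (by fun_prop)) hbound) (fun τ (hτ : τ < T - 1) => ?_)
      measurableSet_Iio
    have hTτ : 0 < T - τ := by linarith
    rw [marchaudKernel_eq_rpow_mul (by linarith) hTt.le, Real.rpow_add hTτ, Real.rpow_one,
      Real.rpow_neg hTτ.le]
    field_simp
  · have hsing : IntegrableOn (fun τ => (T - τ) ^ (-α)) (Icc (T - 1) T) :=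
      (intervalIntegrable_iff_integrableOn_Icc_of_le (sub_one_lt T).le).1
        (intervalIntegrable_const_sub_rpow (by linarith))
    have hcont : ContinuousOn (fun τ => u τ * ((t - T) ^ α / (t - τ))) (Icc (T - 1) T) :=
      hu.continuousOn.mul (continuousOn_const.div (by fun_prop)
        fun τ hτ => (sub_pos.2 (hτ.2.trans_lt hTt)).ne')
    refine ((hsing.continuousOn_mul hcont isCompact_Icc).mono_set Ico_subset_Icc_self).congr_fun
      (fun τ hτ => ?_) measurableSet_Ico
    rw [marchaudKernel_eq_rpow_mul hτ.2 hTt.le]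
    ring

theorem tendsto_integral_mul_marchaudKernel_sub (h : MarchaudIntegrable α u) (hα0 : 0 < α)
    (hα1 : α < 1) (hu : Continuous u) {T t : ℝ} (hTt : T < t) :
    Tendsto (fun δ => ∫ τ in Iio T, u τ * marchaudKernel α T t (τ - δ)) (𝓝[>] 0)
      (𝓝 (pastIntegral α u T t)) := by
  refine tendsto_integral_filter_of_dominated_convergence
    (fun τ => ‖u τ * marchaudKernel α T t τ‖) (.of_forall fun δ => ?_) ?_
    (h.integrableOn_mul_marchaudKernel hα0 hα1 hu hTt).norm ?_
  · exact hu.aestronglyMeasurable.mul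
      (measurable_marchaudKernel.comp (measurable_id.sub_const δ)).aestronglyMeasurable
  · filter_upwards [self_mem_nhdsWithin] with δ (hδ : 0 < δ)
    filter_upwards [ae_restrict_mem measurableSet_Iio] with τ (hτ : τ < T)
    rw [norm_mul, norm_mul, Real.norm_of_nonneg (marchaudKernel_pos (by linarith) hTt).le,
      Real.norm_of_nonneg (marchaudKernel_pos hτ hTt).le]
    gcongr
    exact marchaudKernel_sub_le hα0.le hδ.le hτ hTt
  · filter_upwards [ae_restrict_mem measurableSet_Iio] with τ (hτ : τ < T)
    have hTτ : T - τ ≠ 0 := (sub_pos.2 hτ).ne'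
    have htτ : t - τ ≠ 0 := (sub_pos.2 (hτ.trans hTt)).ne'
    have hcont : ContinuousAt (fun δ => marchaudKernel α T t (τ - δ)) 0 := by
      unfold marchaudKernel
      exact ContinuousAt.div ((ContinuousAt.div (by fun_prop) (by fun_prop) (by simpa)).rpow_const
        (Or.inr hα0.le)) (by fun_prop) (by simpa)
    simpa using (hcont.tendsto.mono_left nhdsWithin_le_nhds).const_mul (u τ)

end MarchaudIntegrable

/-- The integrand of the double integral over `τ < s < t` to which Fubini's theorem is applied in
the Abel inversion of `marchaudIntegral α δ u`. -/
noncomputable def abelIntegrand (α δ : ℝ) (u : ℝ → ℝ) (t s τ : ℝ) : ℝ :=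
  (t - s) ^ (α - 1) * (Iio s).indicator (fun τ => u τ / (s - (τ - δ)) ^ (1 + α)) τ

section AbelInversion

variable {α δ T t : ℝ} {u : ℝ → ℝ}

theorem measurable_uncurry_indicator_Iio {g : ℝ → ℝ → ℝ} (hg : Measurable (Function.uncurry g)) :
    Measurable (Function.uncurry fun s τ => (Iio s).indicator (g s) τ) := by
  simp only [Function.uncurry_def, indicator_apply, mem_Iio]
  exact Measurable.ite (measurableSet_lt measurable_snd measurable_fst) hg measurable_const

theorem setIntegral_abelIntegrand {s : ℝ} (hst : s ≤ t) :
    ∫ τ in Iio t, abelIntegrand α δ u t s τ =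
      (t - s) ^ (α - 1) * ∫ τ in Iio s, u τ / (s - (τ - δ)) ^ (1 + α) := by
  simp only [abelIntegrand]
  rw [integral_const_mul, setIntegral_indicator measurableSet_Iio,
    inter_eq_self_of_subset_right (Iio_subset_Iio hst)]

theorem intervalIntegral_abelIntegrand (hα : 0 < α) (hδ : 0 < δ) (hTt : T ≤ t) {τ : ℝ}
    (hτ : τ ≤ t) :
    ∫ s in T..t, abelIntegrand α δ u t s τ =
      u τ * marchaudKernel α (max T τ) t (τ - δ) / α := by
  have hmax : max T τ ≤ t := max_le hTt hτ
  have hindicator : (fun s => abelIntegrand α δ u t s τ) =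
      (Ioi τ).indicator fun s => u τ * ((t - s) ^ (α - 1) / (s - (τ - δ)) ^ (1 + α)) := by
    funext s
    simp only [abelIntegrand, indicator_apply, mem_Iio, mem_Ioi]
    split_ifs <;> ring
  rw [hindicator, intervalIntegral.integral_of_le hTt, setIntegral_indicator measurableSet_Ioi,
    Ioc_inter_Ioi, integral_const_mul, ← intervalIntegral.integral_of_le hmax,
    integral_rpow_div_rpow_eq_marchaudKernel hα (by linarith [le_max_right T τ]) hmax,
    mul_div_assoc]

theorem norm_abelIntegrand_le (hα : 0 < α) (hδ : 0 < δ) {s τ : ℝ} (hs : s ∈ Ioc T t) (hτ : τ < t) :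
    ‖abelIntegrand α δ u t s τ‖ ≤ ‖(t - s) ^ (α - 1) *
      ((1 + (t - T) / δ) ^ (1 + α) * (u τ / (t - (τ - δ)) ^ (1 + α)))‖ := by
  rw [abelIntegrand, norm_mul, norm_mul]
  gcongr
  by_cases hτs : τ < s
  swap
  · rw [indicator_of_notMem (show τ ∉ Iio s from hτs), norm_zero]
    positivity
  have hTt : 0 < t - T := sub_pos.2 (hs.1.trans_le hs.2)
  have hsτ : 0 < s - (τ - δ) := by linarith
  have htτ : 0 < t - (τ - δ) := by linarith
  have hratio : t - (τ - δ) ≤ (1 + (t - T) / δ) * (s - (τ - δ)) := by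
    have : t - T ≤ (t - T) / δ * (s - (τ - δ)) := by
      rw [div_mul_eq_mul_div, le_div_iff₀ hδ]
      gcongr
      linarith
    linarith [hs.1]
  rw [indicator_of_mem (mem_Iio.2 hτs), mul_div_left_comm, norm_div, norm_mul, div_eq_mul_inv]
  gcongr
  rw [Real.norm_of_nonneg (by positivity), Real.norm_of_nonneg (by positivity), inv_eq_one_div,
    div_le_div_iff₀ (by positivity) (by positivity), one_mul,
    ← Real.mul_rpow (by positivity) hsτ.le]
  gcongr

theorem integrable_abelIntegrand (hα : 0 < α) (hδ : 0 < δ) (hTt : T ≤ t) (hu : Measurable u)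
    (htail : IntegrableOn (fun τ => u τ / (t - (τ - δ)) ^ (1 + α)) (Iio t)) :
    Integrable (Function.uncurry (abelIntegrand α δ u t))
      ((volume.restrict (Ioc T t)).prod (volume.restrict (Iio t))) := by
  have hsing : IntegrableOn (fun s => (t - s) ^ (α - 1)) (Ioc T t) :=
    (intervalIntegrable_iff_integrableOn_Ioc_of_le hTt).1
      (intervalIntegrable_const_sub_rpow (by linarith))
  refine (hsing.mul_prod (htail.const_mul ((1 + (t - T) / δ) ^ (1 + α)))).mono ?_ ?_
  · have hind := measurable_uncurry_indicator_Iio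
      (g := fun s τ => u τ / (s - (τ - δ)) ^ (1 + α)) (by fun_prop)
    have hpow : Measurable fun p : ℝ × ℝ => (t - p.1) ^ (α - 1) := by fun_prop
    exact (hpow.mul hind).aestronglyMeasurable
  · rw [Measure.prod_restrict]
    filter_upwards [ae_restrict_mem (measurableSet_Ioc.prod measurableSet_Iio)]
      with ⟨s, τ⟩ ⟨hs, hτ⟩ using norm_abelIntegrand_le hα hδ hs hτ

theorem intervalIntegrable_rpow_mul_integral_Iio (hα : 0 < α) (hδ : 0 < δ) (hTt : T ≤ t)
    (hu : Measurable u) (htail : IntegrableOn (fun τ => u τ / (t - (τ - δ)) ^ (1 + α)) (Iio t)) :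
    IntervalIntegrable
      (fun s => (t - s) ^ (α - 1) * ∫ τ in Iio s, u τ / (s - (τ - δ)) ^ (1 + α)) volume T t :=
  (intervalIntegrable_iff_integrableOn_Ioc_of_le hTt).2 <|
    IntegrableOn.congr_fun (integrable_abelIntegrand hα hδ hTt hu htail).integral_prod_left
      (fun _ hs => setIntegral_abelIntegrand hs.2) measurableSet_Ioc

theorem integrableOn_mul_marchaudKernel_max (hα : 0 < α) (hδ : 0 < δ) (hTt : T ≤ t)
    (hu : Measurable u) (htail : IntegrableOn (fun τ => u τ / (t - (τ - δ)) ^ (1 + α)) (Iio t)) :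
    IntegrableOn (fun τ => u τ * marchaudKernel α (max T τ) t (τ - δ)) (Iio t) := by
  refine IntegrableOn.congr_fun
    ((integrable_abelIntegrand hα hδ hTt hu htail).integral_prod_right.const_mul α)
    (fun τ hτ => ?_) measurableSet_Iio
  simp only [Function.uncurry_apply_pair]
  rw [← intervalIntegral.integral_of_le hTt, intervalIntegral_abelIntegrand hα hδ hTt (le_of_lt hτ),
    mul_div_cancel₀ _ hα.ne']

theorem mul_integral_rpow_mul_integral_Iio (hα : 0 < α) (hδ : 0 < δ) (hTt : T ≤ t)
    (hu : Measurable u) (htail : IntegrableOn (fun τ => u τ / (t - (τ - δ)) ^ (1 + α)) (Iio t)) :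
    α * ∫ s in T..t, (t - s) ^ (α - 1) * ∫ τ in Iio s, u τ / (s - (τ - δ)) ^ (1 + α) =
      ∫ τ in Iio t, u τ * marchaudKernel α (max T τ) t (τ - δ) := by
  have hint := integrable_abelIntegrand hα hδ hTt hu htail
  rw [← uIoc_of_le hTt] at hint
  calc α * ∫ s in T..t, (t - s) ^ (α - 1) * ∫ τ in Iio s, u τ / (s - (τ - δ)) ^ (1 + α)
      = α * ∫ s in T..t, ∫ τ in Iio t, abelIntegrand α δ u t s τ := by
        congr 1
        refine intervalIntegral.integral_congr fun s hs => ?_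
        rw [uIcc_of_le hTt] at hs
        exact (setIntegral_abelIntegrand hs.2).symm
    _ = α * ∫ τ in Iio t, ∫ s in T..t, abelIntegrand α δ u t s τ := by
        rw [intervalIntegral_integral_swap hint]
    _ = ∫ τ in Iio t, u τ * marchaudKernel α (max T τ) t (τ - δ) := by
        rw [← integral_const_mul]
        refine setIntegral_congr_fun measurableSet_Iio fun τ hτ => ?_
        rw [intervalIntegral_abelIntegrand hα hδ hTt (le_of_lt hτ), mul_div_cancel₀ _ hα.ne']

theorem integral_mul_marchaudKernel_max
    (hint : IntegrableOn (fun τ => u τ * marchaudKernel α (max T τ) t (τ - δ)) (Iio t))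
    (hTt : T ≤ t) :
    ∫ τ in Iio t, u τ * marchaudKernel α (max T τ) t (τ - δ) =
      (∫ τ in Iio T, u τ * marchaudKernel α T t (τ - δ)) +
        ∫ τ in T..t, u τ * marchaudKernel α τ t (τ - δ) := by
  rw [← Iio_union_Ico_eq_Iio hTt, setIntegral_union
    ((Iio_disjoint_Ici le_rfl).mono_right Ico_subset_Ici_self) measurableSet_Ico
    (hint.mono_set (Iio_subset_Iio hTt)) (hint.mono_set Ico_subset_Iio_self),
    intervalIntegral.integral_of_le hTt, ← integral_Ico_eq_integral_Ioc]
  congr 1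
  · exact setIntegral_congr_fun measurableSet_Iio fun τ (hτ : τ < T) => by
      simp only [max_eq_left hτ.le]
  · exact setIntegral_congr_fun measurableSet_Ico fun τ hτ => by simp only [max_eq_right hτ.1]

theorem integral_mul_rpow_sub_marchaudKernel (hδ : 0 < δ) (hTt : T ≤ t) :
    ∫ s in T..t, u s * (δ ^ (-α) * (t - s) ^ (α - 1) - marchaudKernel α s t (s - δ)) =
      ∫ q in 0..(t - T) / δ, u (t - δ * q) * (q ^ (α - 1) / (1 + q)) := by
  have hrescale := intervalIntegral.integral_comp_sub_mul (a := 0) (b := (t - T) / δ)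
    (fun s => u s * (δ ^ (-α) * (t - s) ^ (α - 1) - marchaudKernel α s t (s - δ))) hδ.ne' t
  rw [mul_div_cancel₀ _ hδ.ne', sub_sub_cancel, mul_zero, sub_zero, eq_inv_smul_iff₀ hδ.ne',
    smul_eq_mul] at hrescale
  rw [← hrescale, ← intervalIntegral.integral_const_mul]
  refine intervalIntegral.integral_congr_ae (.of_forall fun q hq => ?_)
  rw [uIoc_of_le (div_nonneg (sub_nonneg.2 hTt) hδ.le)] at hq
  have hq0 : 0 < q := hq.1
  rw [marchaudKernel, sub_sub_cancel, sub_sub_cancel, mul_div_cancel_left₀ q hδ.ne',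
    Real.mul_rpow hδ.le hq0.le, Real.rpow_sub_one hδ.ne', Real.rpow_sub_one hq0.ne',
    Real.rpow_neg hδ.le, show t - (t - δ * q - δ) = δ * (1 + q) by ring]
  have := (Real.rpow_pos_of_pos hδ α).ne'
  field_simp
  ring

theorem MarchaudIntegrable.mul_integral_rpow_mul_marchaudIntegral (h : MarchaudIntegrable α u)
    (hα : 0 < α) (hu : Continuous u) (hδ : 0 < δ) (hTt : T ≤ t) :
    α * ∫ s in T..t, (t - s) ^ (α - 1) * marchaudIntegral α δ u s =
      (∫ q in 0..(t - T) / δ, u (t - δ * q) * (q ^ (α - 1) / (1 + q))) -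
        ∫ τ in Iio T, u τ * marchaudKernel α T t (τ - δ) := by
  have htail := h.integrableOn_div_shifted_rpow hα hδ t
  have hinner := intervalIntegrable_rpow_mul_integral_Iio hα hδ hTt hu.measurable htail
  have hkernel := integrableOn_mul_marchaudKernel_max hα hδ hTt hu.measurable htail
  have hweight : IntervalIntegrable (fun s => u s * (δ ^ (-α) * (t - s) ^ (α - 1))) volume T t :=
    ((intervalIntegrable_const_sub_rpow (by linarith)).const_mul _).continuousOn_mul hu.continuousOn
  have hnear : IntervalIntegrable (fun s => u s * marchaudKernel α s t (s - δ)) volume T t := by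
    rw [intervalIntegrable_iff_integrableOn_Ico_of_le hTt]
    exact (hkernel.mono_set Ico_subset_Iio_self).congr_fun
      (fun s hs => by simp only [max_eq_right hs.1]) measurableSet_Ico
  calc α * ∫ s in T..t, (t - s) ^ (α - 1) * marchaudIntegral α δ u s
      = (∫ s in T..t, u s * (δ ^ (-α) * (t - s) ^ (α - 1))) -
          α * ∫ s in T..t, (t - s) ^ (α - 1) * ∫ τ in Iio s, u τ / (s - (τ - δ)) ^ (1 + α) := by
        rw [← intervalIntegral.integral_const_mul, ← intervalIntegral.integral_const_mul,
          ← intervalIntegral.integral_sub hweight (hinner.const_mul α)]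
        refine intervalIntegral.integral_congr fun s _ => ?_
        simp only [h.marchaudIntegral_eq hα hδ]
        field_simp
    _ = (∫ s in T..t, u s * (δ ^ (-α) * (t - s) ^ (α - 1) - marchaudKernel α s t (s - δ))) -
          ∫ τ in Iio T, u τ * marchaudKernel α T t (τ - δ) := by
        rw [mul_integral_rpow_mul_integral_Iio hα hδ hTt hu.measurable htail,
          integral_mul_marchaudKernel_max hkernel hTt, sub_add_eq_sub_sub, sub_right_comm,
          ← intervalIntegral.integral_sub hweight hnear]
        simp only [mul_sub]
    _ = _ := by rw [integral_mul_rpow_sub_marchaudKernel hδ hTt]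

end AbelInversion

section Bounds

variable {α β : ℝ} {u : ℝ → ℝ}

theorem setIntegral_Ico_norm_sub_div_rpow_le {K a s : ℝ} (hαβ : α < β) (has : a ≤ s)
    (hK : ∀ τ ∈ Ico a s, |u s - u τ| ≤ K * |s - τ| ^ β) :
    ∫ τ in Ico a s, ‖(u s - u τ) / (s - τ) ^ (1 + α)‖ ≤ K * ((s - a) ^ (β - α) / (β - α)) := by
  have hint : IntegrableOn (fun τ => K * (s - τ) ^ (β - α - 1)) (Ico a s) :=
    (intervalIntegrable_iff_integrableOn_Ico_of_le has).1
      ((intervalIntegrable_const_sub_rpow (by linarith)).const_mul K)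
  rw [← integral_const_sub_rpow (sub_pos.2 hαβ), ← intervalIntegral.integral_const_mul,
    intervalIntegral.integral_of_le has, ← integral_Ico_eq_integral_Ioc]
  refine integral_mono_of_nonneg (.of_forall fun _ => norm_nonneg _) hint ?_
  filter_upwards [ae_restrict_mem measurableSet_Ico] with τ hτ
  have hsτ : 0 < s - τ := sub_pos.2 hτ.2
  rw [norm_div, Real.norm_of_nonneg (Real.rpow_nonneg hsτ.le _), div_le_iff₀ (by positivity),
    mul_assoc, ← Real.rpow_add hsτ, show β - α - 1 + (1 + α) = β by ring, Real.norm_eq_abs]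
  simpa only [abs_of_pos hsτ] using hK τ hτ

theorem MarchaudIntegrable.setIntegral_Iio_norm_sub_div_rpow_le (h : MarchaudIntegrable α u)
    (hα : 0 < α) {A a b s : ℝ} (hab : a < b) (hbs : b ≤ s) (hA : |u s| ≤ A) :
    ∫ τ in Iio a, ‖(u s - u τ) / (s - τ) ^ (1 + α)‖ ≤
      ∫ τ in Iio a, (A * ((b - τ) ^ (1 + α))⁻¹ + ‖u τ / (b - τ) ^ (1 + α)‖) := by
  have hconst := (integrableOn_Iio_inv_const_sub_rpow (p := 1 + α) (by linarith) hab).const_mul A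
  refine integral_mono_of_nonneg (.of_forall fun _ => norm_nonneg _)
    (hconst.add (h.integrableOn_div_rpow hα hab).norm) ?_
  filter_upwards [ae_restrict_mem measurableSet_Iio] with τ (hτ : τ < a)
  have hbτ : 0 < b - τ := sub_pos.2 (hτ.trans hab)
  have hsτ : 0 < s - τ := by linarith
  calc ‖(u s - u τ) / (s - τ) ^ (1 + α)‖
      = |u s - u τ| / (s - τ) ^ (1 + α) := by
        rw [norm_div, Real.norm_of_nonneg (Real.rpow_nonneg hsτ.le _), Real.norm_eq_abs]
    _ ≤ (A + |u τ|) / (b - τ) ^ (1 + α) := by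
        have : 0 ≤ A := (abs_nonneg _).trans hA
        gcongr
        exact (abs_sub _ _).trans (by gcongr)
    _ = A * ((b - τ) ^ (1 + α))⁻¹ + ‖u τ / (b - τ) ^ (1 + α)‖ := by
        rw [norm_div, Real.norm_of_nonneg (Real.rpow_nonneg hbτ.le _), Real.norm_eq_abs, add_div,
          div_eq_mul_inv A]

theorem MarchaudIntegrable.exists_integral_norm_le (h : MarchaudIntegrable α u) (hα : 0 < α)
    (hαβ : α < β) (hu : LocallyHolder β u) (T t : ℝ) :
    ∃ M, ∀ s ∈ Icc T t, ∫ τ in Iio s, ‖(u s - u τ) / (s - τ) ^ (1 + α)‖ ≤ M := by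
  have hcont := hu.continuous (hα.trans hαβ)
  obtain ⟨A, hA⟩ := isCompact_Icc.exists_bound_of_continuousOn (hcont.continuousOn (s := Icc T t))
  obtain ⟨K, hK⟩ := hu (T - 1) t
  refine ⟨(∫ τ in Iio (T - 1), (A * ((T - τ) ^ (1 + α))⁻¹ + ‖u τ / (T - τ) ^ (1 + α)‖)) +
    |K| * ((t - (T - 1)) ^ (β - α) / (β - α)), fun s hs => ?_⟩
  have hTs : T - 1 ≤ s := by linarith [hs.1]
  have hint : IntegrableOn (fun τ => ‖(u s - u τ) / (s - τ) ^ (1 + α)‖) (Iio s) := (h s).norm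
  rw [← Iio_union_Ico_eq_Iio hTs, setIntegral_union
    ((Iio_disjoint_Ici le_rfl).mono_right Ico_subset_Ici_self) measurableSet_Ico
    (hint.mono_set (Iio_subset_Iio hTs)) (hint.mono_set Ico_subset_Iio_self)]
  refine add_le_add (h.setIntegral_Iio_norm_sub_div_rpow_le hα (sub_one_lt T) hs.1 (hA s hs))
    ((setIntegral_Ico_norm_sub_div_rpow_le (K := |K|) hαβ hTs fun τ hτ => ?_).trans ?_)
  · refine (hK s ⟨hTs, hs.2⟩ τ ⟨hτ.1, hτ.2.le.trans hs.2⟩).trans ?_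
    gcongr
    exact le_abs_self K
  · have : 0 ≤ s - (T - 1) := sub_nonneg.2 hTs
    have : 0 < β - α := sub_pos.2 hαβ
    gcongr
    exact hs.2

theorem norm_div_shifted_rpow_le {δ s τ : ℝ} (hα : 0 < α) (hδ : 0 ≤ δ) (hτ : τ < s) (x : ℝ) :
    ‖x / (s - (τ - δ)) ^ (1 + α)‖ ≤ ‖x / (s - τ) ^ (1 + α)‖ := by
  have hsτ : 0 < s - τ := sub_pos.2 hτ
  have hsτδ : 0 < s - (τ - δ) := by linarith
  rw [norm_div, norm_div, Real.norm_of_nonneg (Real.rpow_nonneg hsτ.le _),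
    Real.norm_of_nonneg (Real.rpow_nonneg hsτδ.le _)]
  gcongr
  linarith

end Bounds

section MarchaudIntegral

variable {α β δ T t s : ℝ} {u : ℝ → ℝ}

theorem measurable_marchaudIntegral (hu : Measurable u) : Measurable (marchaudIntegral α δ u) := by
  have hmeas := (measurable_uncurry_indicator_Iio
    (g := fun s τ => (u s - u τ) / (s - (τ - δ)) ^ (1 + α)) (by fun_prop)).stronglyMeasurable
  unfold marchaudIntegral
  simpa only [integral_indicator measurableSet_Iio] using
    (hmeas.integral_prod_right (ν := volume)).measurable

namespace MarchaudIntegrable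

theorem norm_marchaudIntegral_le (h : MarchaudIntegrable α u) (hα : 0 < α) (hδ : 0 ≤ δ) :
    ‖marchaudIntegral α δ u s‖ ≤ ∫ τ in Iio s, ‖(u s - u τ) / (s - τ) ^ (1 + α)‖ := by
  refine norm_integral_le_of_norm_le (h s).norm ?_
  filter_upwards [ae_restrict_mem measurableSet_Iio] with τ hτ
    using norm_div_shifted_rpow_le hα hδ hτ _

theorem tendsto_marchaudIntegral (h : MarchaudIntegrable α u) (hα : 0 < α) (hu : Measurable u) :
    Tendsto (fun δ => marchaudIntegral α δ u s) (𝓝[>] 0) (𝓝 (marchaudIntegral α 0 u s)) := by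
  refine tendsto_integral_filter_of_dominated_convergence _
    (.of_forall fun δ => Measurable.aestronglyMeasurable (by fun_prop)) ?_ (h s).norm ?_
  · filter_upwards [self_mem_nhdsWithin] with δ hδ
    filter_upwards [ae_restrict_mem measurableSet_Iio] with τ hτ
      using norm_div_shifted_rpow_le hα (le_of_lt hδ) hτ _
  · filter_upwards [ae_restrict_mem measurableSet_Iio] with τ (hτ : τ < s)
    have hsτ : 0 < s - τ := sub_pos.2 hτ
    have hcont : ContinuousAt (fun δ => (u s - u τ) / (s - (τ - δ)) ^ (1 + α)) 0 :=
      continuousAt_const.div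
        (ContinuousAt.rpow_const (by fun_prop) (Or.inl (by simpa using hsτ.ne')))
        (by simpa using (Real.rpow_pos_of_pos hsτ _).ne')
    exact hcont.tendsto.mono_left nhdsWithin_le_nhds

theorem exists_norm_rpow_mul_marchaudIntegral_le (h : MarchaudIntegrable α u) (hα : 0 < α)
    (hαβ : α < β) (hu : LocallyHolder β u) (hTt : T ≤ t) :
    ∃ M, ∀ δ, 0 ≤ δ → ∀ s ∈ uIoc T t,
      ‖(t - s) ^ (α - 1) * marchaudIntegral α δ u s‖ ≤ (t - s) ^ (α - 1) * M := by
  obtain ⟨M, hM⟩ := h.exists_integral_norm_le hα hαβ hu T t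
  refine ⟨M, fun δ hδ s hs => ?_⟩
  rw [uIoc_of_le hTt] at hs
  have : 0 ≤ t - s := sub_nonneg.2 hs.2
  rw [norm_mul, Real.norm_of_nonneg (by positivity)]
  gcongr
  exact (h.norm_marchaudIntegral_le hα hδ).trans (hM s (Ioc_subset_Icc_self hs))

theorem intervalIntegrable_rpow_mul_marchaudIntegral (h : MarchaudIntegrable α u) (hα : 0 < α)
    (hαβ : α < β) (hu : LocallyHolder β u) (hTt : T ≤ t) :
    IntervalIntegrable (fun s => (t - s) ^ (α - 1) * marchaudIntegral α 0 u s) volume T t := by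
  obtain ⟨M, hM⟩ := h.exists_norm_rpow_mul_marchaudIntegral_le hα hαβ hu hTt
  have := measurable_marchaudIntegral (α := α) (δ := 0) (hu.continuous (hα.trans hαβ)).measurable
  refine IntervalIntegrable.mono_fun'
    ((intervalIntegrable_const_sub_rpow (p := α - 1) (by linarith)).mul_const M)
    (Measurable.aestronglyMeasurable (by fun_prop)) ?_
  filter_upwards [ae_restrict_mem measurableSet_uIoc] with s hs using hM 0 le_rfl s hs

theorem tendsto_integral_rpow_mul_marchaudIntegral (h : MarchaudIntegrable α u) (hα : 0 < α)
    (hαβ : α < β) (hu : LocallyHolder β u) (hTt : T ≤ t) :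
    Tendsto (fun δ => ∫ s in T..t, (t - s) ^ (α - 1) * marchaudIntegral α δ u s) (𝓝[>] 0)
      (𝓝 (∫ s in T..t, (t - s) ^ (α - 1) * marchaudIntegral α 0 u s)) := by
  obtain ⟨M, hM⟩ := h.exists_norm_rpow_mul_marchaudIntegral_le hα hαβ hu hTt
  have hmeas := (hu.continuous (hα.trans hαβ)).measurable
  refine intervalIntegral.tendsto_integral_filter_of_dominated_convergence _
    (.of_forall fun δ => ?_) ?_
    ((intervalIntegrable_const_sub_rpow (p := α - 1) (by linarith)).mul_const M)
    (.of_forall fun s _ => (h.tendsto_marchaudIntegral hα hmeas).const_mul _)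
  · have := measurable_marchaudIntegral (α := α) (δ := δ) hmeas
    exact Measurable.aestronglyMeasurable (by fun_prop)
  · filter_upwards [self_mem_nhdsWithin] with δ hδ
    exact .of_forall (hM δ (le_of_lt hδ))

theorem mul_Gamma_eq_integral_add_pastIntegral (h : MarchaudIntegrable α u) (hα0 : 0 < α)
    (hα1 : α < 1) (hαβ : α < β) (hu : LocallyHolder β u) (hTt : T < t) :
    u t * (Real.Gamma α * Real.Gamma (1 - α)) =
      α * (∫ s in T..t, (t - s) ^ (α - 1) * marchaudIntegral α 0 u s) + pastIntegral α u T t := by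
  have hcont := hu.continuous (hα0.trans hαβ)
  have hpole := integrableOn_Ioi_rpow_div_one_add_rpow hα0 (sub_pos.2 hα1)
  have hbeta := Gamma_add_mul_integral_Ioi_rpow_div_one_add_rpow hα0 (sub_pos.2 hα1)
  simp only [add_sub_cancel, Real.rpow_one, Real.Gamma_one, one_mul] at hpole hbeta
  have hpoint := tendsto_intervalIntegral_comp_sub_mul hpole hcont hTt
  rw [hbeta] at hpoint
  have hpast := h.tendsto_integral_mul_marchaudKernel_sub hα0 hα1 hcont hTt
  have hleft := (h.tendsto_integral_rpow_mul_marchaudIntegral hα0 hαβ hu hTt.le).const_mul α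
  refine eq_add_of_sub_eq (tendsto_nhds_unique (hpoint.sub hpast) (hleft.congr' ?_))
  filter_upwards [self_mem_nhdsWithin] with δ hδ
  exact h.mul_integral_rpow_mul_marchaudIntegral hα0 hcont hδ hTt.le

end MarchaudIntegrable

end MarchaudIntegral

section PastIntegral

variable {α T t t' : ℝ} {u : ℝ → ℝ}

theorem pastIntegral_nonneg (hu : ∀ t, 0 ≤ u t) (hTt : T < t) : 0 ≤ pastIntegral α u T t :=
  setIntegral_nonneg measurableSet_Iio fun _ hτ =>
    mul_nonneg (hu _) (marchaudKernel_pos hτ hTt).le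

namespace MarchaudIntegrable

theorem mul_pastIntegral_le (h : MarchaudIntegrable α u) (hα0 : 0 < α) (hα1 : α < 1)
    (hcont : Continuous u) (hu : ∀ t, 0 ≤ u t) (hTt : T < t) (htt' : t ≤ t') :
    ((t - T) / (t' - T)) ^ α * pastIntegral α u T t' ≤ pastIntegral α u T t := by
  rw [pastIntegral, ← integral_const_mul]
  refine setIntegral_mono_on
    ((h.integrableOn_mul_marchaudKernel hα0 hα1 hcont (hTt.trans_le htt')).const_mul _)
    (h.integrableOn_mul_marchaudKernel hα0 hα1 hcont hTt) measurableSet_Iio fun τ hτ => ?_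
  rw [mul_left_comm]
  exact mul_le_mul_of_nonneg_left (mul_marchaudKernel_le hτ hTt htt') (hu τ)

theorem pastIntegral_le_mul (h : MarchaudIntegrable α u) (hα0 : 0 < α) (hα1 : α < 1)
    (hcont : Continuous u) (hu : ∀ t, 0 ≤ u t) (hTt : T < t) (htt' : t ≤ t') :
    pastIntegral α u T t ≤ ((t - T) / (t' - T)) ^ (α - 1) * pastIntegral α u T t' := by
  rw [pastIntegral, pastIntegral, ← integral_const_mul]
  refine setIntegral_mono_on (h.integrableOn_mul_marchaudKernel hα0 hα1 hcont hTt)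
    ((h.integrableOn_mul_marchaudKernel hα0 hα1 hcont (hTt.trans_le htt')).const_mul _)
    measurableSet_Iio fun τ hτ => ?_
  rw [mul_left_comm]
  exact mul_le_mul_of_nonneg_left (marchaudKernel_le_mul hτ hTt htt') (hu τ)

theorem eq_of_tendsto_pastIntegral (h : MarchaudIntegrable α u) (hα0 : 0 < α) (hα1 : α < 1)
    (hcont : Continuous u) (hu : ∀ t, 0 ≤ u t) {l l' : ℝ}
    (hl : Tendsto (fun T => pastIntegral α u T t) atBot (𝓝 l))
    (hl' : Tendsto (fun T => pastIntegral α u T t') atBot (𝓝 l')) : l = l' := by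
  wlog htt' : t ≤ t' generalizing t t' l l'
  · exact (this hl' hl (le_of_not_ge htt')).symm
  have hratio : ∀ p : ℝ, Tendsto (fun T => ((t - T) / (t' - T)) ^ p * pastIntegral α u T t')
      atBot (𝓝 l') := fun p => by
    simpa only [Real.one_rpow, one_mul] using
      ((tendsto_sub_div_sub_atBot t t').rpow_const (p := p) (Or.inl one_ne_zero)).mul hl'
  refine le_antisymm (le_of_tendsto_of_tendsto hl (hratio (α - 1)) ?_)
    (le_of_tendsto_of_tendsto (hratio α) hl ?_)
  · exact (eventually_lt_atBot t).mono fun T hT =>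
      h.pastIntegral_le_mul hα0 hα1 hcont hu hT htt'
  · exact (eventually_lt_atBot t).mono fun T hT =>
      h.mul_pastIntegral_le hα0 hα1 hcont hu hT htt'

end MarchaudIntegrable

end PastIntegral

theorem integrableOn_Iic_of_nonneg_of_intervalIntegral_le {g : ℝ → ℝ} {t C : ℝ}
    (hg : ∀ s ≤ t, 0 ≤ g s) (hint : ∀ T < t, IntervalIntegrable g volume T t)
    (hC : ∀ T < t, ∫ s in T..t, g s ≤ C) : IntegrableOn g (Iic t) := by
  refine integrableOn_Iic_of_intervalIntegral_norm_bounded C t (fun T => ?_) tendsto_id ?_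
  · rcases lt_or_ge T t with hT | hT
    · exact (hint T hT).1
    · simp [Ioc_eq_empty_of_le hT]
  · filter_upwards [eventually_lt_atBot t] with T hT
    refine le_trans (intervalIntegral.integral_congr fun s hs => ?_).le (hC T hT)
    rw [id, uIcc_of_le hT.le] at hs
    exact Real.norm_of_nonneg (hg s hs.2)

namespace MarchaudIntegrable

variable {α β t : ℝ} {u : ℝ → ℝ}

theorem integrableOn_Iic_rpow_mul_marchaudIntegral (h : MarchaudIntegrable α u) (hα0 : 0 < α)
    (hα1 : α < 1) (hαβ : α < β) (hu : LocallyHolder β u) (hu_nonneg : ∀ t, 0 ≤ u t)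
    (hm : ∀ s, 0 ≤ marchaudIntegral α 0 u s) :
    IntegrableOn (fun s => (t - s) ^ (α - 1) * marchaudIntegral α 0 u s) (Iic t) := by
  refine integrableOn_Iic_of_nonneg_of_intervalIntegral_le
    (C := u t * (Real.Gamma α * Real.Gamma (1 - α)) / α)
    (fun s hs => mul_nonneg (Real.rpow_nonneg (sub_nonneg.2 hs) _) (hm s))
    (fun T hT => h.intervalIntegrable_rpow_mul_marchaudIntegral hα0 hαβ hu hT.le) fun T hT => ?_
  rw [h.mul_Gamma_eq_integral_add_pastIntegral hα0 hα1 hαβ hu hT, le_div_iff₀' hα0]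
  exact le_add_of_nonneg_right (pastIntegral_nonneg hu_nonneg hT)

theorem tendsto_pastIntegral (h : MarchaudIntegrable α u) (hα0 : 0 < α)
    (hα1 : α < 1) (hαβ : α < β) (hu : LocallyHolder β u) (hu_nonneg : ∀ t, 0 ≤ u t)
    (hm : ∀ s, 0 ≤ marchaudIntegral α 0 u s) :
    Tendsto (fun T => pastIntegral α u T t) atBot
      (𝓝 (u t * (Real.Gamma α * Real.Gamma (1 - α)) -
        α * ∫ s in Iio t, (t - s) ^ (α - 1) * marchaudIntegral α 0 u s)) := by
  have hint := h.integrableOn_Iic_rpow_mul_marchaudIntegral (t := t) hα0 hα1 hαβ hu hu_nonneg hm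
  rw [← integral_Iic_eq_integral_Iio]
  refine (((intervalIntegral_tendsto_integral_Iic t hint tendsto_id).const_mul α).const_sub
    _).congr' ?_
  filter_upwards [eventually_lt_atBot t] with T hT
  rw [h.mul_Gamma_eq_integral_add_pastIntegral hα0 hα1 hαβ hu hT]
  exact add_sub_cancel_left _ _

end MarchaudIntegrable

theorem integral_representation_marchaud_general {α β : ℝ} (hα0 : 0 < α) (hα1 : α < 1)
    (hαβ : α < β) {u f : ℝ → ℝ} (hu_nonneg : ∀ t, 0 ≤ u t) (hu : LocallyHolder β u)
    (hf_nonneg : ∀ t, 0 ≤ f t)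
    (heq : ∀ t : ℝ,
      IntegrableOn (fun τ : ℝ => (u t - u τ) / (t - τ) ^ (1 + α)) (Iio t) ∧
      (1 / |Real.Gamma (-α)|) * ∫ τ in Iio t, (u t - u τ) / (t - τ) ^ (1 + α) = f t) :
    ∃ c₀ : ℝ, 0 ≤ c₀ ∧ ∀ t : ℝ,
      IntegrableOn (fun τ : ℝ => f τ * (t - τ) ^ (α - 1)) (Iio t) ∧
      u t = c₀ + (1 / Real.Gamma α) * ∫ τ in Iio t, f τ * (t - τ) ^ (α - 1) := by
  have h : MarchaudIntegrable α u := fun t => (heq t).1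
  have hΓ := Real.Gamma_pos_of_pos hα0
  have hΓ' := Real.Gamma_pos_of_pos (sub_pos.2 hα1)
  have hm : ∀ t, marchaudIntegral α 0 u t = Real.Gamma (1 - α) / α * f t := fun t => by
    simp only [← (heq t).2, abs_Gamma_neg hα0 hα1, marchaudIntegral, sub_zero]
    field_simp
  have hm_nonneg : ∀ t, 0 ≤ marchaudIntegral α 0 u t := fun t => by
    rw [hm]
    exact mul_nonneg (by positivity) (hf_nonneg t)
  have hweight : ∀ t τ, f τ * (t - τ) ^ (α - 1) =
      α / Real.Gamma (1 - α) * ((t - τ) ^ (α - 1) * marchaudIntegral α 0 u τ) := fun t τ => by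
    rw [hm]
    field_simp
  have hlim := fun t => h.tendsto_pastIntegral (t := t) hα0 hα1 hαβ hu hu_nonneg hm_nonneg
  have hpast : ∀ᶠ T in atBot, 0 ≤ pastIntegral α u T 0 :=
    (eventually_lt_atBot 0).mono fun T hT => pastIntegral_nonneg hu_nonneg hT
  refine ⟨_, div_nonneg (ge_of_tendsto (hlim 0) hpast) (mul_pos hΓ hΓ').le, fun t => ⟨?_, ?_⟩⟩
  · simp only [hweight]
    exact ((h.integrableOn_Iic_rpow_mul_marchaudIntegral hα0 hα1 hαβ hu hu_nonneg
      hm_nonneg).mono_set Iio_subset_Iic_self).const_mul _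
  · rw [h.eq_of_tendsto_pastIntegral hα0 hα1 (hu.continuous (hα0.trans hαβ)) hu_nonneg (hlim 0)
      (hlim t)]
    simp only [hweight, integral_const_mul]
    field_simp
    ring

/-- integral representation of solutions of `∂_t^α u = f` on `ℝ`. If `u ≥ 0`
is in `𝓛_α(ℝ)`, locally Hölder of order `α + ε`, `f ≥ 0` is measurable and locally
bounded, and `C_α ∫_{-∞}^t (u(t)-u(τ))/(t-τ)^{1+α} dτ = f(t)` for all `t` (the integral
converging absolutely), then there is `c₀ ≥ 0` with
`u(t) = c₀ + (1/Γ(α)) ∫_{-∞}^t f(τ)(t-τ)^{α-1} dτ` for all `t`. -/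
theorem integral_representation_marchaud
    (α : ℝ) (hα0 : 0 < α) (hα1 : α < 1)
    (u f : ℝ → ℝ)
    (hu_nonneg : ∀ t, 0 ≤ u t)
    (hu_loc : LocallyIntegrable u)
    (hu_space : Integrable (fun t : ℝ => |u t| / (1 + |t| ^ (1 + α))))
    (hu_holder : ∃ ε > (0 : ℝ), α + ε ≤ 1 ∧ ∀ a b : ℝ, ∃ K : ℝ,
      ∀ t ∈ Icc a b, ∀ s ∈ Icc a b, |u t - u s| ≤ K * |t - s| ^ (α + ε))
    (hf_nonneg : ∀ t, 0 ≤ f t)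
    (hf_meas : Measurable f)
    (hf_locbdd : ∀ a b : ℝ, ∃ K : ℝ, ∀ t ∈ Icc a b, |f t| ≤ K)
    (heq : ∀ t : ℝ,
      IntegrableOn (fun τ : ℝ => (u t - u τ) / (t - τ) ^ (1 + α)) (Iio t) ∧
      (1 / |Real.Gamma (-α)|) * ∫ τ in Iio t, (u t - u τ) / (t - τ) ^ (1 + α) = f t) :
    ∃ c₀ : ℝ, 0 ≤ c₀ ∧ ∀ t : ℝ,
      IntegrableOn (fun τ : ℝ => f τ * (t - τ) ^ (α - 1)) (Iio t) ∧
      u t = c₀ + (1 / Real.Gamma α) * ∫ τ in Iio t, f τ * (t - τ) ^ (α - 1) := by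
  obtain ⟨ε, hε, -, hu_holder⟩ := hu_holder
  exact integral_representation_marchaud_general hα0 hα1 (lt_add_of_pos_right α hε) hu_nonneg
    hu_holder hf_nonneg heq
end
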